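/- Let r = p^ν be a prime power, d ≥ 1, k = ⌈(r-1)d/r⌉, s = (r-1)d - r(k-1), m = (2r-1)(k+1), and let [m] = C_1 ⊎ ... ⊎ C_{k+1} with |C_i| = 2r-1 be a coloring of the vertices of the simplex on m vertices. Then for every continuous map f from the (m-1)-simplex to R^d there exist r pairwise disjoint rainbow faces Δ_1, ..., Δ_r with f(Δ_1) ∩ ... ∩ f(Δ_r) ≠ ∅, such that |Δ_i| ≤ k+1 for i ≤ s and |Δ_i| ≤ k for i > s. -/

import Mathlib

open scoped Classical

/-- The geometric face of the standard `(m-1)`-simplex spanned by the vertex set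
`Δ ⊆ [m]`. -/
def simplexFace (m : ℕ) (Δ : Finset (Fin m)) : Set (Fin m → ℝ) :=
  {x ∈ stdSimplex ℝ (Fin m) | ∀ v, v ∉ Δ → x v = 0}

namespace BCT
section P1
variable {F : Type*} [Field F] {V : Type*} {V' : Type*}

abbrev Ch (F : Type*) [Field F] (V : Type*) := List V →₀ F

/-- Prepending a vertex. -/
noncomputable def cone (v : V) : Ch F V →ₗ[F] Ch F V := Finsupp.lmapDomain F F (List.cons v)

/-- Contraction of a list with a function on vertices. -/
noncomputable def conL (φ : V → F) : List V → Ch F V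
  | [] => 0
  | v :: l => φ v • Finsupp.single l 1 - cone v (conL φ l)

/-- Contraction (an antiderivation). -/
noncomputable def con (φ : V → F) : Ch F V →ₗ[F] Ch F V := Finsupp.linearCombination F (conL φ)

/-- The boundary operator. -/
noncomputable def bd : Ch F V →ₗ[F] Ch F V := con (fun _ => 1)

/-- The induced map of a vertex map. -/
noncomputable def mp (g : V → V') : Ch F V →ₗ[F] Ch F V' := Finsupp.lmapDomain F F (List.map g)

/-- The basis element of a list. -/
noncomputable abbrev sg (l : List V) : Ch F V := Finsupp.single l 1

@[simp] lemma cone_sg (v : V) (l : List V) : cone v (sg l : Ch F V) = sg (v :: l) := by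
  simp [cone, Finsupp.lmapDomain_apply, Finsupp.mapDomain_single]

@[simp] lemma mp_sg (g : V → V') (l : List V) : mp g (sg l : Ch F V) = sg (l.map g) := by
  simp [mp, Finsupp.lmapDomain_apply, Finsupp.mapDomain_single]

lemma con_sg (φ : V → F) (l : List V) : con φ (sg l) = conL φ l := by
  simp [con]

@[simp] lemma con_nil (φ : V → F) : con φ (sg ([] : List V)) = 0 := by
  simp [con_sg, conL]

lemma hom_ext' {M : Type*} [AddCommGroup M] [Module F M] {f g : Ch F V →ₗ[F] M}
    (h : ∀ l, f (sg l) = g (sg l)) (x : Ch F V) : f x = g x := by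
  have : f = g := Finsupp.lhom_ext' (fun l => LinearMap.ext_ring (by simpa using h l))
  rw [this]

lemma con_cone (φ : V → F) (v : V) (x : Ch F V) :
    con φ (cone v x) = φ v • x - cone v (con φ x) := by
  have := hom_ext' (f := con φ ∘ₗ cone v) (g := φ v • LinearMap.id - cone v ∘ₗ con φ) ?_ x
  · simpa using this
  intro l
  simp only [LinearMap.comp_apply, cone_sg, con_sg, conL, LinearMap.sub_apply, LinearMap.smul_apply,
    LinearMap.id_apply]

lemma bd_cone (v : V) (x : Ch F V) : bd (cone v x) = x - cone v (bd x) := by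
  simp [bd, con_cone]

@[simp] lemma bd_nil : bd (sg ([] : List V) : Ch F V) = 0 := by simp [bd]

/-- Induction on lists for linear identities. -/
lemma hom_ind {M : Type*} [AddCommGroup M] [Module F M] {f g : Ch F V →ₗ[F] M}
    (h0 : f (sg []) = g (sg [])) (h : ∀ v l, f (sg l) = g (sg l) → f (cone v (sg l)) = g (cone v (sg l)))
    (x : Ch F V) : f x = g x := by
  apply hom_ext'
  intro l
  induction l with
  | nil => exact h0
  | cons v l ih => simpa using h v l ih

lemma con_anti (φ ψ : V → F) (x : Ch F V) : con φ (con ψ x) = - con ψ (con φ x) := by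
  have := hom_ind (f := con φ ∘ₗ con ψ) (g := - (con ψ ∘ₗ con φ)) (by simp) ?_ x
  · simpa using this
  intro v l ih
  simp only [LinearMap.comp_apply, LinearMap.neg_apply, con_cone, map_sub, map_smul] at ih ⊢
  rw [ih, map_neg]
  abel

lemma con_con (φ : V → F) (x : Ch F V) : con φ (con φ x) = 0 := by
  have := hom_ind (f := con φ ∘ₗ con φ) (g := 0) (by simp) ?_ x
  · simpa using this
  intro v l ih
  simp only [LinearMap.comp_apply, LinearMap.zero_apply, con_cone, map_sub, map_smul] at ih ⊢
  rw [ih, map_zero]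
  abel

lemma bd_bd (x : Ch F V) : bd (bd x) = 0 := con_con _ x

lemma mp_cone (g : V → V') (v : V) (x : Ch F V) : mp g (cone v x) = cone (g v) (mp g x) := by
  have := hom_ext' (f := mp g ∘ₗ cone v) (g := cone (g v) ∘ₗ mp g) (by intro l; simp) x
  simpa using this

lemma mp_con (g : V → V') (φ : V → F) (ψ : V' → F) (h : ∀ v, ψ (g v) = φ v) (x : Ch F V) :
    mp g (con φ x) = con ψ (mp g x) := by
  have := hom_ind (f := mp g ∘ₗ con φ) (g := con ψ ∘ₗ mp g) (by simp) ?_ x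
  · simpa using this
  intro v l ih
  simp only [LinearMap.comp_apply, con_cone, map_sub, map_smul, mp_cone] at ih ⊢
  rw [ih, h]

lemma mp_bd (g : V → V') (x : Ch F V) : mp g (bd x) = bd (mp g x) := by
  unfold bd
  exact mp_con g (fun _ => (1 : F)) (fun _ => (1 : F)) (fun _ => rfl) x

lemma mp_mp {V'' : Type*} (g : V → V') (h : V' → V'') (x : Ch F V) : mp h (mp g x) = mp (h ∘ g) x := by
  have := hom_ext' (f := mp h ∘ₗ mp g) (g := (mp (h ∘ g) : Ch F V →ₗ[F] _)) (by intro l; simp) x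
  simpa using this

lemma mp_id (x : Ch F V) : mp id x = x := by
  have := hom_ext' (f := mp id) (g := (LinearMap.id : Ch F V →ₗ[F] _)) (by intro l; simp) x
  simpa using this

/-- Chains supported on lists satisfying a predicate. -/
abbrev spt (F : Type*) [Field F] {V : Type*} (P : List V → Prop) : Submodule F (Ch F V) :=
  Finsupp.supported F F {l | P l}

lemma sg_mem {P : List V → Prop} {l : List V} (h : P l) : (sg l : Ch F V) ∈ spt F P :=
  Finsupp.single_mem_supported F 1 h

lemma spt_map {P : List V → Prop} {M : Type*} [AddCommGroup M] [Module F M] (f : Ch F V →ₗ[F] M)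
    (N : Submodule F M) (h : ∀ l, P l → f (sg l) ∈ N) {x : Ch F V} (hx : x ∈ spt F P) : f x ∈ N := by
  have : spt F P ≤ N.comap f := by
    rw [spt, Finsupp.supported_eq_span_single, Submodule.span_le]
    rintro _ ⟨l, hl, rfl⟩
    exact h l hl
  exact this hx

lemma spt_eq {P : List V → Prop} {M : Type*} [AddCommGroup M] [Module F M] (f g : Ch F V →ₗ[F] M)
    (h : ∀ l, P l → f (sg l) = g (sg l)) {x : Ch F V} (hx : x ∈ spt F P) : f x = g x := by
  have := spt_map (P := P) (f - g) ⊥ (by intro l hl; simp [h l hl]) hx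
  rw [Submodule.mem_bot] at this
  simpa [sub_eq_zero] using this

lemma spt_mono {P Q : List V → Prop} (h : ∀ l, P l → Q l) : spt F P ≤ spt F Q :=
  Finsupp.supported_mono (fun l hl => h l hl)

lemma spt_and {P Q : List V → Prop} {x : Ch F V} (h1 : x ∈ spt F P) (h2 : x ∈ spt F Q) :
    x ∈ spt F (fun l => P l ∧ Q l) := by
  rw [Finsupp.mem_supported] at *
  exact fun l hl => ⟨h1 hl, h2 hl⟩

/-- The contraction of a list is supported on lists with one entry removed. -/
lemma conL_mem (φ : V → F) (l : List V) :
    conL φ l ∈ spt F (fun l' => ∃ v, l.Perm (v :: l') ∧ l'.Sublist l ∧ φ v ≠ 0) := by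
  induction l with
  | nil => exact Submodule.zero_mem _
  | cons v l ih =>
    rw [conL]
    refine Submodule.sub_mem _ ?_ ?_
    · by_cases h : φ v = 0
      · simp [h]
      · exact Submodule.smul_mem _ _ (sg_mem ⟨v, List.Perm.refl _, List.sublist_cons_self v l, h⟩)
    · refine spt_map (cone v) _ ?_ ih
      rintro l' ⟨w, hw, hs, hφ⟩
      rw [cone_sg]
      exact sg_mem ⟨w, ((hw.cons v).trans (List.Perm.swap _ _ _)), hs.cons_cons v, hφ⟩

/-- Chains of a complex in a given length. -/
abbrev sup (F : Type*) [Field F] {V : Type*} (K : Set (Set V)) (m : ℕ) : Submodule F (Ch F V) :=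
  spt F (fun l => l.length = m ∧ {v | v ∈ l} ∈ K)

lemma bd_mem {K : Set (Set V)} (hK : IsLowerSet K) {m : ℕ} {x : Ch F V} (hx : x ∈ sup F K (m + 1)) :
    bd x ∈ sup F K m := by
  refine spt_map bd _ ?_ hx
  rintro l ⟨hl, hlK⟩
  rw [bd, con_sg]
  refine spt_mono ?_ (conL_mem _ l)
  rintro l' ⟨v, hp, hs, -⟩
  refine ⟨?_, hK ?_ hlK⟩
  · have := hp.length_eq
    simp at this; omega
  · intro w hw; exact hs.subset hw

lemma bd_zero {K : Set (Set V)} {x : Ch F V} (hx : x ∈ sup F K 0) : bd x = 0 := by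
  refine spt_eq bd 0 ?_ hx
  rintro l ⟨hl, -⟩
  rw [List.length_eq_zero_iff] at hl
  simp [hl]

/-- Exactness in lengths below `n`. -/
def Exa (F : Type*) [Field F] {V : Type*} (K : Set (Set V)) (n : ℕ) : Prop :=
  ∀ m < n, ∀ z ∈ sup F K m, bd z = 0 → ∃ y ∈ sup F K (m + 1), bd y = z

/-- Link. -/
def lk (K : Set (Set V)) (v : V) : Set (Set V) := {σ | v ∉ σ ∧ insert v σ ∈ K}
/-- Deletion of a set of vertices. -/
def dl (K : Set (Set V)) (W : Set V) : Set (Set V) := {σ | σ ∈ K ∧ ∀ v ∈ W, v ∉ σ}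

lemma dl_lower {K : Set (Set V)} (hK : IsLowerSet K) (W : Set V) : IsLowerSet (dl K W) := by
  intro a b hba ha
  exact ⟨hK hba ha.1, fun v hv h => ha.2 v hv (hba h)⟩

lemma sup_mono {K K' : Set (Set V)} (h : K ⊆ K') (m : ℕ) : sup F K m ≤ sup F K' m :=
  spt_mono (fun _ hl => ⟨hl.1, h hl.2⟩)

lemma cone_mem {K : Set (Set V)} {v : V} (h : ∀ σ ∈ K, insert v σ ∈ K) {m : ℕ} {x : Ch F V}
    (hx : x ∈ sup F K m) : cone v x ∈ sup F K (m + 1) := by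
  refine spt_map (cone v) _ ?_ hx
  rintro l ⟨hl, hlK⟩
  rw [cone_sg]
  refine sg_mem ⟨by simp [hl], ?_⟩
  have : {w | w ∈ v :: l} = insert v {w | w ∈ l} := by ext; simp
  rw [this]; exact h _ hlK

lemma exa_cone {K : Set (Set V)} {v : V} (h : ∀ σ ∈ K, insert v σ ∈ K) (n : ℕ) : Exa F K n := by
  intro m _ z hz hbz
  exact ⟨cone v z, cone_mem h hz, by rw [bd_cone, hbz]; simp⟩

lemma exa_dl {K : Set (Set V)} (hK : IsLowerSet K) (v : V) (n : ℕ) (h1 : Exa F (dl K {v}) n)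
    (h2 : Exa F (lk K v) (n - 1)) : Exa F K n := by
  intro m hm z hz hbz
  rcases m with _ | m
  · have hz' : z ∈ sup F (dl K {v}) 0 := by
      refine spt_mono ?_ hz
      rintro l ⟨hl, hlK⟩
      refine ⟨hl, hlK, ?_⟩
      rw [List.length_eq_zero_iff] at hl
      simp [hl]
    obtain ⟨y, hy, hyz⟩ := h1 0 hm z hz' hbz
    exact ⟨y, sup_mono (fun σ h => h.1) _ hy, hyz⟩
  set St : Set (Set V) := {σ | insert v σ ∈ K} with hSt
  have hStK : St ⊆ K := fun σ h => hK (Set.subset_insert v σ) h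
  have hStl : IsLowerSet St := fun a b hba ha => hK (Set.insert_subset_insert hba) ha
  have hStc : ∀ σ ∈ St, insert v σ ∈ St := by
    intro σ h
    simpa [hSt] using h
  set z1 := z.filter (fun l => v ∉ l)
  set z2 := z.filter (fun l => ¬ (v ∉ l))
  have hzz : z1 + z2 = z := Finsupp.filter_add_filter_not _ _
  rw [Finsupp.mem_supported] at hz
  have hz1 : z1 ∈ sup F (dl K {v}) (m + 1) := by
    rw [Finsupp.mem_supported]
    intro l hl
    rw [Finsupp.support_filter, Finset.coe_filter] at hl
    have := hz hl.1
    exact ⟨this.1, this.2, by simpa using hl.2⟩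
  have hz2 : z2 ∈ sup F St (m + 1) := by
    rw [Finsupp.mem_supported]
    intro l hl
    rw [Finsupp.support_filter, Finset.coe_filter] at hl
    have h0 := hz hl.1
    refine ⟨h0.1, ?_⟩
    have h3 : v ∈ l := by simpa using hl.2
    have : insert v {w | w ∈ l} = {w | w ∈ l} := Set.insert_eq_of_mem h3
    rw [hSt]
    change insert v {w | w ∈ l} ∈ K
    rw [this]
    exact h0.2
  have hb : bd z1 = - bd z2 := by
    rw [← hzz, map_add] at hbz
    exact eq_neg_of_add_eq_zero_left hbz
  have hb1 := bd_mem (dl_lower hK {v}) hz1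
  have hb2 : bd z1 ∈ sup F St m := by rw [hb]; exact Submodule.neg_mem _ (bd_mem hStl hz2)
  have hb3 : bd z1 ∈ sup F (lk K v) m := by
    refine spt_mono ?_ (spt_and hb1 hb2)
    rintro l ⟨⟨h, h'⟩, ⟨_, h''⟩⟩
    exact ⟨h, h'.2 v rfl, h''⟩
  obtain ⟨w, hw, hwz⟩ := h2 m (by omega) _ hb3 (bd_bd _)
  have hw1 : w ∈ sup F (dl K {v}) (m + 1) := by
    refine sup_mono ?_ _ hw
    rintro σ ⟨h, h'⟩
    exact ⟨hStK h', by simpa using h⟩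
  have hw2 : w ∈ sup F St (m + 1) := sup_mono (fun σ h => h.2) _ hw
  obtain ⟨y1, hy1, hyz1⟩ := h1 (m + 1) hm (z1 - w) (Submodule.sub_mem _ hz1 hw1) (by
    rw [map_sub, hwz, sub_self])
  obtain ⟨y2, hy2, hyz2⟩ := exa_cone (F := F) hStc (m + 2) (m + 1) (by omega) (z2 + w)
    (Submodule.add_mem _ hz2 hw2) (by rw [map_add, hwz, hb]; abel)
  refine ⟨y1 + y2, Submodule.add_mem _ (sup_mono (fun σ h => h.1) _ hy1) (sup_mono hStK _ hy2), ?_⟩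
  rw [map_add, hyz1, hyz2, ← hzz]; abel

lemma exa_dl_many {K : Set (Set V)} (hK : IsLowerSet K) (n : ℕ) (W : Finset V)
    (h1 : Exa F (dl K W) n)
    (h2 : ∀ W' ⊆ W, ∀ v ∈ W, v ∉ W' → Exa F (lk (dl K W') v) (n - 1)) : Exa F K n := by
  induction W using Finset.induction_on with
  | empty =>
    have : dl K ((∅ : Finset V) : Set V) = K := by ext; simp [dl]
    rwa [this] at h1
  | insert v W hv ih =>
    apply ih
    · apply exa_dl (dl_lower hK _) v
      · have : dl (dl K (W : Set V)) {v} = dl K ((insert v W : Finset V) : Set V) := by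
          ext σ; simp [dl]; tauto
        rwa [this]
      · exact h2 W (Finset.subset_insert _ _) v (Finset.mem_insert_self _ _) hv
    · intro W' hW' w hw hw'
      exact h2 W' (hW'.trans (Finset.subset_insert _ _)) w (Finset.mem_insert_of_mem hw) hw'

end P1
end BCT

namespace BCT
section P2
variable {W E₀ X Γ I : Type*} (cell : W → E₀) (val : W → X) (cl : E₀ → Γ) (col : E₀ → I)

/-- A chessboard-like complex with a balancing condition. -/
def KC (E : Finset E₀) (D : Finset I) (s : ℕ) (U : Finset W) : Set (Set W) :=
  {σ | (∀ x ∈ σ, x ∈ U ∧ cell x ∈ E) ∧ (∀ x ∈ σ, ∀ y ∈ σ, cell x = cell y → x = y) ∧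
    (∀ x ∈ σ, ∀ y ∈ σ, cl (cell x) = cl (cell y) → val x = val y → x = y) ∧
    (D.filter (fun i => ∀ e ∈ E, col e = i → ∃ x ∈ σ, cell x = e)).card ≤ s}

lemma KC_lower (E : Finset E₀) (D : Finset I) (s : ℕ) (U : Finset W) :
    IsLowerSet (KC cell val cl col E D s U) := by
  rintro a b hba ⟨h1, h2, h3, h4⟩
  refine ⟨fun x hx => h1 x (hba hx), fun x hx y hy => h2 x (hba hx) y (hba hy),
    fun x hx y hy => h3 x (hba hx) y (hba hy), le_trans (Finset.card_le_card ?_) h4⟩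
  intro i hi
  rw [Finset.mem_filter] at hi ⊢
  refine ⟨hi.1, fun e he hc => ?_⟩
  obtain ⟨x, hx, hxe⟩ := hi.2 e he hc
  exact ⟨x, hba hx, hxe⟩

lemma KC_dl (E : Finset E₀) (D : Finset I) (s : ℕ) (U : Finset W) (W' : Finset W) :
    dl (KC cell val cl col E D s U) W' = KC cell val cl col E D s (U \ W') := by
  ext σ
  simp only [dl, KC, Set.mem_ofPred_eq, Finset.mem_sdiff, Finset.mem_coe]
  constructor
  · rintro ⟨⟨h1, h2⟩, h3⟩
    exact ⟨fun x hx => ⟨⟨(h1 x hx).1, fun h => h3 x h hx⟩, (h1 x hx).2⟩, h2⟩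
  · rintro ⟨h1, h2⟩
    exact ⟨⟨fun x hx => ⟨(h1 x hx).1.1, (h1 x hx).2⟩, h2⟩, fun v hv hvσ => (h1 v hvσ).1.2 hv⟩

lemma KC_lk (E : Finset E₀) (D : Finset I) (s : ℕ) (U : Finset W) (w : W) (hw : w ∈ U)
    (hwE : cell w ∈ E) :
    lk (KC cell val cl col E D s U) w = KC cell val cl col (E.erase (cell w)) D s
      (U.filter (fun y => ¬ (cl (cell y) = cl (cell w) ∧ val y = val w))) := by
  ext σ
  have hcount : (D.filter (fun i => ∀ e ∈ E, col e = i → ∃ x ∈ insert w σ, cell x = e)) =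
      (D.filter (fun i => ∀ e ∈ E.erase (cell w), col e = i → ∃ x ∈ σ, cell x = e)) := by
    apply Finset.filter_congr
    intro i _
    constructor
    · intro h e he hc
      rw [Finset.mem_erase] at he
      obtain ⟨x, hx, hxe⟩ := h e he.2 hc
      rcases hx with rfl | hx
      · exact absurd hxe.symm he.1
      · exact ⟨x, hx, hxe⟩
    · intro h e he hc
      by_cases hew : e = cell w
      · exact ⟨w, Set.mem_insert _ _, hew.symm⟩
      · obtain ⟨x, hx, hxe⟩ := h e (Finset.mem_erase.2 ⟨hew, he⟩) hc
        exact ⟨x, Set.mem_insert_of_mem _ hx, hxe⟩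
  constructor
  · rintro ⟨hwσ, h1, h2, h3, h4⟩
    refine ⟨?_, ?_, ?_, ?_⟩
    · intro x hx
      have hx' : x ∈ insert w σ := Set.mem_insert_of_mem _ hx
      have hxw : x ≠ w := fun h => hwσ (h ▸ hx)
      refine ⟨Finset.mem_filter.2 ⟨(h1 x hx').1, fun h => ?_⟩, Finset.mem_erase.2 ⟨fun h => ?_, (h1 x hx').2⟩⟩
      · exact hxw (h3 x hx' w (Set.mem_insert _ _) h.1 h.2)
      · exact hxw (h2 x hx' w (Set.mem_insert _ _) h)
    · exact fun x hx y hy => h2 x (Set.mem_insert_of_mem _ hx) y (Set.mem_insert_of_mem _ hy)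
    · exact fun x hx y hy => h3 x (Set.mem_insert_of_mem _ hx) y (Set.mem_insert_of_mem _ hy)
    · rwa [← hcount]
  · rintro ⟨h1, h2, h3, h4⟩
    have hwσ : w ∉ σ := fun h => by simpa using (h1 w h).2
    refine ⟨hwσ, ?_, ?_, ?_, ?_⟩
    · rintro x (rfl | hx)
      · exact ⟨hw, hwE⟩
      · exact ⟨(Finset.mem_filter.1 (h1 x hx).1).1, (Finset.mem_erase.1 (h1 x hx).2).2⟩
    · rintro x (rfl | hx) y (rfl | hy) h
      · rfl
      · exact absurd h.symm (Finset.mem_erase.1 (h1 y hy).2).1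
      · exact absurd h (Finset.mem_erase.1 (h1 x hx).2).1
      · exact h2 x hx y hy h
    · rintro x (rfl | hx) y (rfl | hy) h h'
      · rfl
      · exact absurd ⟨h.symm, h'.symm⟩ (Finset.mem_filter.1 (h1 y hy).1).2
      · exact absurd ⟨h, h'⟩ (Finset.mem_filter.1 (h1 x hx).1).2
      · exact h3 x hx y hy h h'
    · rwa [hcount]

/-- The numerical hypothesis. -/
def HH (E : Finset E₀) (U : Finset W) (e : E₀) : Prop :=
  2 * (E.filter (fun e' => cl e' = cl e)).card ≤ (U.filter (fun w => cell w = e)).card + 1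

lemma HH_step (hinj : ∀ x y, cell x = cell y → val x = val y → x = y)
    (E : Finset E₀) (U U' : Finset W) (c e : E₀) (hc : c ∈ E) (a b : X)
    (h : HH cell cl E U e)
    (hU : ∀ u ∈ U, cell u = e → ¬ (cl (cell u) = cl c ∧ (val u = a ∨ val u = b)) → u ∈ U') :
    HH cell cl (E.erase c) U' e := by
  unfold HH at *
  by_cases hce : cl c = cl e
  · have h1 : (E.filter (fun e' => cl e' = cl e)).card
        = ((E.erase c).filter (fun e' => cl e' = cl e)).card + 1 := by
      rw [← Finset.card_erase_add_one (s := E.filter (fun e' => cl e' = cl e)) (a := c)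
        (Finset.mem_filter.2 ⟨hc, hce⟩), Finset.filter_erase]
    have h2 : (U.filter (fun w => cell w = e)).card ≤ (U'.filter (fun w => cell w = e)).card + 2 := by
      have hsub : U.filter (fun w => cell w = e) ⊆ U'.filter (fun w => cell w = e) ∪
          (U.filter (fun w => cell w = e ∧ val w = a) ∪ U.filter (fun w => cell w = e ∧ val w = b)) := by
        intro u hu
        rw [Finset.mem_filter] at hu
        have := hU u hu.1 hu.2
        simp only [Finset.mem_union, Finset.mem_filter]
        tauto
      have hc1 : ∀ a : X, (U.filter (fun w => cell w = e ∧ val w = a)).card ≤ 1 := by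
        intro a
        rw [Finset.card_le_one]
        intro x hx y hy
        rw [Finset.mem_filter] at hx hy
        exact hinj x y (hx.2.1.trans hy.2.1.symm) (hx.2.2.trans hy.2.2.symm)
      have := Finset.card_le_card hsub
      have h5 := Finset.card_union_le (U'.filter (fun w => cell w = e))
          (U.filter (fun w => cell w = e ∧ val w = a) ∪ U.filter (fun w => cell w = e ∧ val w = b))
      have h6 := Finset.card_union_le (U.filter (fun w => cell w = e ∧ val w = a))
        (U.filter (fun w => cell w = e ∧ val w = b))
      have := hc1 a
      have := hc1 b
      omega
    omega
  · have h1 : ((E.erase c).filter (fun e' => cl e' = cl e)).card ≤ (E.filter (fun e' => cl e' = cl e)).card :=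
      Finset.card_le_card (Finset.filter_subset_filter _ (Finset.erase_subset _ _))
    have h2 : (U.filter (fun w => cell w = e)).card ≤ (U'.filter (fun w => cell w = e)).card := by
      apply Finset.card_le_card
      intro u hu
      rw [Finset.mem_filter] at hu ⊢
      refine ⟨hU u hu.1 hu.2 ?_, hu.2⟩
      rw [hu.2]; exact fun h => hce h.1.symm
    omega

theorem KC_exa {F : Type*} [Field F] (hinj : ∀ x y, cell x = cell y → val x = val y → x = y) :
    ∀ (n : ℕ) (E : Finset E₀) (D : Finset I) (s : ℕ) (U : Finset W), E.card = n → s ≤ D.card →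
    (∀ e ∈ E, HH cell cl E U e) → Exa F (KC cell val cl col E D s U) (n + s - D.card) := by
  intro n
  induction n with
  | zero =>
    intro E D s U hE hs _ m hm
    omega
  | succ n ih =>
    intro E D s U hE hs hH
    obtain ⟨e, he⟩ : E.Nonempty := by rw [← Finset.card_pos]; omega
    have hEe : (E.erase e).card = n := by rw [Finset.card_erase_of_mem he]; omega
    -- the link step
    have hlink : ∀ (D : Finset I) (s : ℕ), s ≤ D.card → ∀ (U' : Finset W) (v : W), v ∈ U' → cell v ∈ E →
        ∀ b : X, (∀ u ∈ U, cell u ∈ E → cell u ≠ cell v →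
          ¬ (cl (cell u) = cl (cell v) ∧ (val u = val v ∨ val u = b)) → u ∈ U') →
        Exa F (lk (KC cell val cl col E D s U') v) (n + 1 + s - D.card - 1) := by
      intro D s hs U' v hv hvE b hU
      rw [KC_lk _ _ _ _ _ _ _ _ _ hv hvE]
      have : n + 1 + s - D.card - 1 = n + s - D.card := by omega
      rw [this]
      apply ih
      · rw [Finset.card_erase_of_mem hvE]; omega
      · exact hs
      · intro e' he'
        rw [Finset.mem_erase] at he'
        apply HH_step cell val cl hinj E U _ (cell v) e' hvE (val v) b (hH e' he'.2)
        intro u hu hue hn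
        rw [Finset.mem_filter]
        refine ⟨hU u hu (hue ▸ he'.2) (hue ▸ he'.1) hn, fun h => hn ⟨h.1, Or.inl h.2⟩⟩
    have hcoloop : ∀ (D : Finset I) (s : ℕ), s ≤ D.card → col e ∉ D →
        Exa F (KC cell val cl col E D s U) (n + 1 + s - D.card) := by
      intro D s hs heD
      obtain ⟨w0, hw0⟩ : (U.filter (fun w => cell w = e)).Nonempty := by
        have h1 := hH e he
        have h2 : 0 < (E.filter (fun e' => cl e' = cl e)).card :=
          Finset.card_pos.2 ⟨e, Finset.mem_filter.2 ⟨he, rfl⟩⟩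
        unfold HH at h1
        rw [← Finset.card_pos]; omega
      rw [Finset.mem_filter] at hw0
      set W1 := U.filter (fun y => cell y ∈ E ∧ cell y ≠ e ∧ cl (cell y) = cl e ∧ val y = val w0) with hW1
      set W2 := U.filter (fun y => cell y = e ∧ y ≠ w0) with hW2
      apply exa_dl_many (KC_lower _ _ _ _ _ _ _ _) _ W1
      · rw [KC_dl]
        apply exa_dl_many (KC_lower _ _ _ _ _ _ _ _) _ W2
        · rw [KC_dl]
          apply exa_cone (v := w0)
          have hcell : ∀ y ∈ (U \ W1) \ W2, cell y = e → y = w0 := by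
            intro y hy hye
            by_contra hne
            rw [Finset.mem_sdiff, Finset.mem_sdiff] at hy
            exact hy.2 (Finset.mem_filter.2 ⟨hy.1.1, hye, hne⟩)
          have hval : ∀ y ∈ (U \ W1) \ W2, cell y ∈ E → cl (cell y) = cl e → val y = val w0 → y = w0 := by
            intro y hy hyE hyc hyv
            by_cases hye : cell y = e
            · exact hcell y hy hye
            · exfalso
              rw [Finset.mem_sdiff, Finset.mem_sdiff] at hy
              exact hy.1.2 (Finset.mem_filter.2 ⟨hy.1.1, hyE, hye, hyc, hyv⟩)
          rintro σ ⟨h1, h2, h3, h4⟩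
          refine ⟨?_, ?_, ?_, ?_⟩
          · rintro x (rfl | hx)
            · refine ⟨?_, hw0.2 ▸ he⟩
              rw [Finset.mem_sdiff, Finset.mem_sdiff]
              refine ⟨⟨hw0.1, fun h => ?_⟩, fun h => ?_⟩
              · exact (Finset.mem_filter.1 h).2.2.1 hw0.2
              · exact (Finset.mem_filter.1 h).2.2 rfl
            · exact h1 x hx
          · rintro x (rfl | hx) y (rfl | hy) h
            · rfl
            · exact (hcell y (h1 y hy).1 (h.symm.trans hw0.2)).symm
            · exact hcell x (h1 x hx).1 (h.trans hw0.2)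
            · exact h2 x hx y hy h
          · rintro x (rfl | hx) y (rfl | hy) h h'
            · rfl
            · exact (hval y (h1 y hy).1 (h1 y hy).2 (by rw [← h, hw0.2]) h'.symm).symm
            · exact (hval x (h1 x hx).1 (h1 x hx).2 (by rw [h, hw0.2]) h')
            · exact h3 x hx y hy h h'
          · refine le_trans (Finset.card_le_card ?_) h4
            intro i hi
            rw [Finset.mem_filter] at hi ⊢
            refine ⟨hi.1, fun e' he' hc => ?_⟩
            obtain ⟨x, hx, hxe⟩ := hi.2 e' he' hc
            rcases hx with rfl | hx
            · exfalso; apply heD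
              rw [← hw0.2, hxe, hc]; exact hi.1
            · exact ⟨x, hx, hxe⟩
        · intro W' hW' v hv hv'
          rw [KC_dl]
          have hv2 := Finset.mem_filter.1 hv
          apply hlink D s hs _ v _ (hv2.2.1 ▸ he) (val w0)
          · intro u hu huE huc hn
            rw [Finset.mem_sdiff, Finset.mem_sdiff]
            refine ⟨⟨hu, fun h => hn ?_⟩, fun h => ?_⟩
            · have := (Finset.mem_filter.1 h).2
              exact ⟨by rw [this.2.2.1, hv2.2.1], Or.inr this.2.2.2⟩
            · exact huc ((Finset.mem_filter.1 (hW' h)).2.1.trans hv2.2.1.symm)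
          · rw [Finset.mem_sdiff, Finset.mem_sdiff]
            refine ⟨⟨hv2.1, fun h => ?_⟩, hv'⟩
            exact (Finset.mem_filter.1 h).2.2.1 hv2.2.1
      · intro W' hW' v hv hv'
        rw [KC_dl]
        have hv2 := Finset.mem_filter.1 hv
        apply hlink D s hs _ v (Finset.mem_sdiff.2 ⟨hv2.1, hv'⟩) hv2.2.1 (val w0)
        intro u hu huE huc hn
        rw [Finset.mem_sdiff]
        refine ⟨hu, fun h => hn ?_⟩
        have := (Finset.mem_filter.1 (hW' h)).2
        exact ⟨by rw [this.2.2.1, hv2.2.2.2.1], Or.inr this.2.2.2⟩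
    by_cases heD : col e ∈ D
    · rcases hs.lt_or_eq with hlt | heq
      · set W1 := U.filter (fun y => cell y = e) with hW1
        apply exa_dl_many (KC_lower _ _ _ _ _ _ _ _) _ W1
        · rw [KC_dl]
          have hK : KC cell val cl col E D s (U \ W1) =
              KC cell val cl col (E.erase e) (D.erase (col e)) s (U \ W1) := by
            have hne : ∀ y ∈ U \ W1, cell y ≠ e := by
              intro y hy hye
              rw [Finset.mem_sdiff] at hy
              exact hy.2 (Finset.mem_filter.2 ⟨hy.1, hye⟩)
            have hcnt : ∀ σ : Set W, (∀ x ∈ σ, x ∈ U \ W1) →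
                D.filter (fun i => ∀ e ∈ E, col e = i → ∃ x ∈ σ, cell x = e) =
                (D.erase (col e)).filter
                  (fun i => ∀ e' ∈ E.erase e, col e' = i → ∃ x ∈ σ, cell x = e') := by
              intro σ hσ
              ext i
              simp only [Finset.mem_filter, Finset.mem_erase]
              constructor
              · rintro ⟨hi, h⟩
                refine ⟨⟨?_, hi⟩, fun e' he' => h e' he'.2⟩
                rintro rfl
                obtain ⟨x, hx, hxe⟩ := h e he rfl
                exact hne x (hσ x hx) hxe
              · rintro ⟨⟨hi, hiD⟩, h⟩
                refine ⟨hiD, fun e' he' hc => h e' ⟨?_, he'⟩ hc⟩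
                rintro rfl
                exact hi hc.symm
            ext σ
            constructor
            · rintro ⟨h1, h2, h3, h4⟩
              refine ⟨fun x hx => ⟨(h1 x hx).1, Finset.mem_erase.2 ⟨hne x (h1 x hx).1, (h1 x hx).2⟩⟩, h2, h3, ?_⟩
              rwa [← hcnt σ (fun x hx => (h1 x hx).1)]
            · rintro ⟨h1, h2, h3, h4⟩
              refine ⟨fun x hx => ⟨(h1 x hx).1, (Finset.mem_erase.1 (h1 x hx).2).2⟩, h2, h3, ?_⟩
              rwa [hcnt σ (fun x hx => (h1 x hx).1)]
          rw [hK]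
          have hDe : (D.erase (col e)).card = D.card - 1 := Finset.card_erase_of_mem heD
          have : n + 1 + s - D.card = n + s - (D.erase (col e)).card := by omega
          rw [this]
          apply ih _ _ _ _ hEe (by omega)
          intro e' he'
          rw [Finset.mem_erase] at he'
          have h1 := hH e' he'.2
          unfold HH at h1 ⊢
          have h2 : ((E.erase e).filter (fun e'' => cl e'' = cl e')).card ≤
              (E.filter (fun e'' => cl e'' = cl e')).card :=
            Finset.card_le_card (Finset.filter_subset_filter _ (Finset.erase_subset _ _))
          have h3 : (U.filter (fun w => cell w = e')) = ((U \ W1).filter (fun w => cell w = e')) := by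
            ext u
            simp only [Finset.mem_filter, Finset.mem_sdiff, hW1, not_and]
            constructor
            · rintro ⟨hu, rfl⟩
              exact ⟨⟨hu, fun _ => he'.1⟩, rfl⟩
            · rintro ⟨⟨hu, _⟩, rfl⟩
              exact ⟨hu, rfl⟩
          rw [← h3]; omega
        · intro W' hW' v hv hv'
          rw [KC_dl]
          have hv2 := Finset.mem_filter.1 hv
          apply hlink D s hs _ v (Finset.mem_sdiff.2 ⟨hv2.1, hv'⟩) (hv2.2 ▸ he) (val v)
          intro u hu huE huc hn
          rw [Finset.mem_sdiff]
          refine ⟨hu, fun h => huc ?_⟩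
          exact (Finset.mem_filter.1 (hW' h)).2.trans hv2.2.symm
      · have hK : KC cell val cl col E D s U = KC cell val cl col E ∅ 0 U := by
          ext σ
          constructor
          · rintro ⟨h1, h2, h3, h4⟩
            exact ⟨h1, h2, h3, by simp⟩
          · rintro ⟨h1, h2, h3, h4⟩
            exact ⟨h1, h2, h3, by rw [heq]; exact Finset.card_filter_le _ _⟩
        rw [hK]
        have := hcoloop ∅ 0 (by simp) (by simp)
        have h2 : n + 1 + s - D.card = n + 1 + 0 - (∅ : Finset I).card := by simp; omega
        rw [h2]; exact this
    · exact hcoloop D s hs heD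

end P2
end BCT

namespace BCT
section P3
variable {F : Type*} [Field F] {M : Type*} [AddCommGroup M] [Module F M]
  {M' : Type*} [AddCommGroup M'] [Module F M'] {κ : Type*} (p : ℕ)

/-- The differentials of the periodic resolution. -/
noncomputable def eps (T : Module.End F M) (i : ℕ) : Module.End F M :=
  if Odd i then T - 1 else ∑ t ∈ Finset.range p, T ^ t

/-- The total differential on systems. -/
noncomputable def bb (T : κ → Module.End F M) : List κ → (List ℕ → M) → List ℕ → M
  | [], _, _ => 0
  | _ :: _, _, [] => 0
  | g :: gs, x, i :: J => (if i = 0 then 0 else eps p (T g) i (x ((i - 1) :: J)))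
      + (-1 : F) ^ i • bb T gs (fun J' => x (i :: J')) J

def Prd (I' I : List ℕ) : Prop := List.Forall₂ (· ≤ ·) I' I ∧ I'.sum + 1 = I.sum

lemma Prd.length {I' I : List ℕ} (h : Prd I' I) : I'.length = I.length := h.1.length_eq

lemma Prd_head {i : ℕ} (hi : i ≠ 0) (J : List ℕ) : Prd ((i - 1) :: J) (i :: J) := by
  refine ⟨List.Forall₂.cons (by omega) (List.forall₂_same.2 (fun _ _ => le_rfl)), ?_⟩
  simp; omega

lemma Prd_cons {J' J : List ℕ} (i : ℕ) (h : Prd J' J) : Prd (i :: J') (i :: J) := by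
  refine ⟨List.Forall₂.cons le_rfl h.1, ?_⟩
  have := h.2
  simp; omega

lemma bb_congr (T : κ → Module.End F M) (gs : List κ) : ∀ (x x' : List ℕ → M) (I : List ℕ),
    (∀ I', Prd I' I → x I' = x' I') → bb p T gs x I = bb p T gs x' I := by
  induction gs with
  | nil => intros; rfl
  | cons g gs ih =>
    intro x x' I h
    cases I with
    | nil => rfl
    | cons i J =>
      simp only [bb]
      rw [ih _ (fun J' => x' (i :: J')) J (fun J' hJ' => h _ (Prd_cons i hJ'))]
      congr 1
      split_ifs with hi
      · rfl
      · rw [h _ (Prd_head hi J)]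

lemma bb_add (T : κ → Module.End F M) (gs : List κ) : ∀ (x x' : List ℕ → M) (I : List ℕ),
    bb p T gs (fun I => x I + x' I) I = bb p T gs x I + bb p T gs x' I := by
  induction gs with
  | nil => intros; simp [bb]
  | cons g gs ih =>
    intro x x' I
    cases I with
    | nil => simp [bb]
    | cons i J =>
      simp only [bb]
      rw [ih (fun J' => x (i :: J')) (fun J' => x' (i :: J')) J]
      split_ifs with hi
      · simp
      · rw [map_add, smul_add]; abel

lemma bb_mem (T : κ → Module.End F M) (N : Submodule F M) (gs : List κ) :
    ∀ (x : List ℕ → M) (I : List ℕ),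
    (∀ I', Prd I' I → ∀ g ∈ gs, ∀ i, eps p (T g) i (x I') ∈ N) → bb p T gs x I ∈ N := by
  induction gs with
  | nil => intros; simp [bb]
  | cons g gs ih =>
    intro x I h
    cases I with
    | nil => simp [bb]
    | cons i J =>
      simp only [bb]
      refine Submodule.add_mem _ ?_ (Submodule.smul_mem _ _ (ih _ _ ?_))
      · split_ifs with hi
        · exact Submodule.zero_mem _
        · exact h _ (Prd_head hi J) g (by simp) i
      · intro J' hJ' g' hg'
        exact h _ (Prd_cons i hJ') g' (by simp [hg'])

lemma bb_map (T : κ → Module.End F M) (T' : κ → Module.End F M') (Ψ : M →ₗ[F] M') (gs : List κ) :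
    ∀ (x : List ℕ → M) (I : List ℕ),
    (∀ I', Prd I' I → ∀ g ∈ gs, ∀ i, Ψ (eps p (T g) i (x I')) = eps p (T' g) i (Ψ (x I'))) →
    Ψ (bb p T gs x I) = bb p T' gs (fun I => Ψ (x I)) I := by
  induction gs with
  | nil => intros; simp [bb]
  | cons g gs ih =>
    intro x I h
    cases I with
    | nil => simp [bb]
    | cons i J =>
      simp only [bb, map_add, map_smul]
      rw [ih]
      · congr 1
        split_ifs with hi
        · simp
        · exact h _ (Prd_head hi J) g (by simp) i
      · intro J' hJ' g' hg'
        exact h _ (Prd_cons i hJ') g' (by simp [hg'])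

lemma pow_map (T : Module.End F M) (T' : Module.End F M') (Ψ : M →ₗ[F] M')
    (h : ∀ x, Ψ (T x) = T' (Ψ x)) (n : ℕ) (x : M) : Ψ ((T ^ n) x) = (T' ^ n) (Ψ x) := by
  induction n generalizing x with
  | zero => simp
  | succ n ih => rw [pow_succ, pow_succ, Module.End.mul_apply, Module.End.mul_apply, ih, h]

lemma eps_map (T : Module.End F M) (T' : Module.End F M') (Ψ : M →ₗ[F] M')
    (h : ∀ x, Ψ (T x) = T' (Ψ x)) (i : ℕ) (x : M) : Ψ (eps p T i x) = eps p T' i (Ψ x) := by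
  unfold eps
  split_ifs
  · simp [h]
  · simp only [LinearMap.sum_apply, map_sum, pow_map T T' Ψ h]

lemma eps_map_on (T : Module.End F M) (T' : Module.End F M') (Ψ : M →ₗ[F] M') (N : Submodule F M)
    (hN : ∀ x ∈ N, T x ∈ N)
    (h : ∀ x ∈ N, Ψ (T x) = T' (Ψ x)) (i : ℕ) (x : M) (hx : x ∈ N) :
    Ψ (eps p T i x) = eps p T' i (Ψ x) := by
  have hp : ∀ n : ℕ, ∀ x ∈ N, Ψ ((T ^ n) x) = (T' ^ n) (Ψ x) := by
    intro n
    induction n with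
    | zero => simp
    | succ n ih =>
      intro x hx
      rw [pow_succ, pow_succ, Module.End.mul_apply, Module.End.mul_apply, ih _ (hN x hx), h x hx]
  unfold eps
  split_ifs
  · simp [h x hx]
  · simp only [LinearMap.sum_apply, map_sum, hp _ x hx]

lemma eps_mem (T : Module.End F M) (N : Submodule F M) (hN : ∀ x ∈ N, T x ∈ N) (i : ℕ) {x : M}
    (hx : x ∈ N) : eps p T i x ∈ N := by
  have hp : ∀ n : ℕ, ∀ x ∈ N, (T ^ n) x ∈ N := by
    intro n
    induction n with
    | zero => simp
    | succ n ih =>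
      intro x hx
      rw [pow_succ, Module.End.mul_apply]
      exact ih _ (hN x hx)
  unfold eps
  split_ifs
  · exact Submodule.sub_mem _ (hN x hx) hx
  · rw [LinearMap.sum_apply]
    exact Submodule.sum_mem _ (fun t _ => hp t x hx)

lemma eps_eps (T : Module.End F M) (hT : T ^ p = 1) (i : ℕ) (x : M) :
    eps p T (i + 1) (eps p T i x) = 0 := by
  rw [← Module.End.mul_apply]
  have h1 : (T - 1) * ∑ t ∈ Finset.range p, T ^ t = 0 := by rw [mul_geom_sum, hT, sub_self]
  have h2 : (∑ t ∈ Finset.range p, T ^ t) * (T - 1) = 0 := by rw [geom_sum_mul, hT, sub_self]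
  rcases Nat.even_or_odd i with h | h
  · have h' : Odd (i + 1) := h.add_one
    have h'' : ¬ Odd i := Nat.not_odd_iff_even.2 h
    simp only [eps, h', h'', if_true, if_false, h1, LinearMap.zero_apply]
  · have h' : ¬ Odd (i + 1) := Nat.not_odd_iff_even.2 h.add_one
    simp only [eps, h', h, if_true, if_false, h2, LinearMap.zero_apply]

lemma bb_zero (T : κ → Module.End F M) (gs : List κ) (x : List ℕ → M) (I : List ℕ) (h : I.sum = 0) :
    bb p T gs x I = 0 := by
  have := bb_mem p T ⊥ gs x I (fun I' h' => by have := h'.2; omega)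
  simpa using this

lemma bb_smul (T : κ → Module.End F M) (gs : List κ) (c : F) (x : List ℕ → M) (I : List ℕ) :
    bb p T gs (fun I => c • x I) I = c • bb p T gs x I := by
  have := bb_map p T T (c • LinearMap.id) gs x I (by intros; simp)
  simpa using this.symm

lemma bb_fix [CharP F p] (T : κ → Module.End F M) (gs : List κ) (α : M) (hα : ∀ g ∈ gs, T g α = α)
    (I : List ℕ) : bb p T gs (fun J => if J.sum = 0 then α else 0) I = 0 := by
  have := bb_mem p T ⊥ gs (fun J => if J.sum = 0 then α else 0) I ?_
  · simpa using this
  intro I' _ g hg i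
  have hz : eps p (T g) i α = 0 := by
    have hp : ∀ n : ℕ, (T g ^ n) α = α := by
      intro n
      induction n with
      | zero => simp
      | succ n ih => rw [pow_succ, Module.End.mul_apply, hα g hg, ih]
    unfold eps
    split_ifs
    · simp [hα g hg]
    · simp only [LinearMap.sum_apply, hp, Finset.sum_const, Finset.card_range]
      rw [← Nat.cast_smul_eq_nsmul F]
      simp
  simp only [Submodule.mem_bot]
  split_ifs
  · exact hz
  · simp

lemma bb_bb (T : κ → Module.End F M) (hT : ∀ g, T g ^ p = 1) (hc : ∀ g g' x, T g (T g' x) = T g' (T g x))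
    (gs : List κ) : ∀ (x : List ℕ → M) (I : List ℕ), bb p T gs (fun I => bb p T gs x I) I = 0 := by
  induction gs with
  | nil => intros; simp [bb]
  | cons g gs ih =>
    intro x I
    cases I with
    | nil => simp [bb]
    | cons i J =>
      simp only [bb]
      rw [bb_add, bb_smul, ih (fun J' => x (i :: J')) J]
      by_cases hi : i = 0
      · subst hi
        have := bb_mem p T ⊥ gs (fun J' => (0 : M)) J (by intros; simp)
        rw [Submodule.mem_bot] at this
        simp [this]
      · obtain ⟨j, rfl⟩ : ∃ j, i = j + 1 := ⟨i - 1, by omega⟩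
        simp only [hi, if_false, Nat.add_sub_cancel]
        rw [map_add]
        have h1 : eps p (T g) (j + 1) (if j = 0 then 0 else eps p (T g) j (x ((j - 1) :: J))) = 0 := by
          split_ifs
          · simp
          · exact eps_eps p _ (hT g) _ _
        have h2 := bb_map p T T (eps p (T g) (j + 1)) gs (fun J' => x (j :: J')) J (by
          intro I' _ g' _ i
          exact eps_map p _ _ _ (fun y => (eps_map p (T g) (T g) (T g') (fun z => hc _ _ _) (j + 1) y).symm) i _)
        rw [h1, ← h2, map_smul]
        simp [pow_succ]

theorem extend (d : Module.End F M) (T : κ → Module.End F M) (hT : ∀ g, T g ^ p = 1)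
    (hc : ∀ g g' x, T g (T g' x) = T g' (T g x)) (hd : ∀ g x, d (T g x) = T g (d x))
    (W : ℕ → Submodule F M) (n e : ℕ) (gs : List κ) (hW : ∀ g ∈ gs, ∀ m, ∀ x ∈ W m, T g x ∈ W m)
    (hex : ∀ m < n, ∀ z ∈ W m, d z = 0 → ∃ y ∈ W (m + 1), d y = z)
    (u : List ℕ → M) (Z : List ℕ → Prop) (x0 : List ℕ → M) (hZ : ∀ I' I, Prd I' I → Z I → Z I')
    (B : ℕ) (hB : B + e ≤ n)
    (hu : ∀ I, I.length = gs.length → I.sum < B → u I ∈ W (I.sum + e) ∧ d (u I) + bb p T gs u I = 0)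
    (hx0 : ∀ I, Z I → I.length = gs.length → I.sum < B →
      x0 I ∈ W (I.sum + e + 1) ∧ d (x0 I) = u I + bb p T gs x0 I) :
    ∃ x : List ℕ → M, (∀ I, Z I → x I = x0 I) ∧ (∀ I, I.length = gs.length → I.sum < B →
      x I ∈ W (I.sum + e + 1) ∧ d (x I) = u I + bb p T gs x I) := by
  induction B with
  | zero => exact ⟨x0, fun _ _ => rfl, fun I _ h => absurd h (by omega)⟩
  | succ B ih =>
    obtain ⟨x, hxZ, hx⟩ := ih (by omega) (fun I h h' => hu I h (by omega)) (fun I h h' h'' => hx0 I h h' (by omega))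
    have hch : ∀ I : List ℕ, ∃ y : M, I.length = gs.length → I.sum = B → y ∈ W (I.sum + e + 1) ∧
        d y = u I + bb p T gs x I := by
      intro I
      by_cases hl : I.length = gs.length
      · by_cases hs : I.sum = B
        · have h1 : u I + bb p T gs x I ∈ W (I.sum + e) := by
            refine Submodule.add_mem _ (hu I hl (by omega)).1 (bb_mem p T _ gs x I ?_)
            intro I' hI' g hg i
            apply eps_mem p _ _ (hW g hg _)
            have h2 := hI'.2
            have h3 := (hx I' (hI'.length.trans hl) (by omega)).1
            have h4 : I'.sum + e + 1 = I.sum + e := by omega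
            rwa [h4] at h3
          have h2 : d (u I + bb p T gs x I) = 0 := by
            rw [map_add, bb_map p T T d gs x I
              (fun I' _ g _ i => eps_map p _ _ _ (hd g) i _)]
            rw [bb_congr p T gs (fun I => d (x I)) (fun I => u I + bb p T gs x I) I, bb_add, bb_bb p T hT hc,
              add_zero]
            · exact (hu I hl (by omega)).2
            · intro I' hI'
              have h2 := hI'.2
              exact (hx I' (hI'.length.trans hl) (by omega)).2
          obtain ⟨y, hy, hy'⟩ := hex _ (by omega) _ h1 h2
          exact ⟨y, fun _ _ => ⟨hy, hy'⟩⟩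
        · exact ⟨0, fun _ h => absurd h hs⟩
      · exact ⟨0, fun h => absurd h hl⟩
    choose y hy using hch
    refine ⟨fun I => if Z I then x0 I else if I.sum = B then y I else x I, fun I hI => by simp [hI], ?_⟩
    intro I hl hs
    have hbb : ∀ I', Prd I' I → (if Z I' then x0 I' else if I'.sum = B then y I' else x I') = x I' := by
      intro I' hI'
      by_cases hz : Z I'
      · simp [hz, hxZ I' hz]
      · have := hI'.2
        rw [if_neg hz, if_neg (by omega)]
    rw [bb_congr p T gs _ x I hbb]
    beta_reduce
    by_cases hz : Z I
    · rw [if_pos hz]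
      have := hx0 I hz hl hs
      rw [bb_congr p T gs x0 x I (fun I' hI' => (hxZ I' (hZ I' I hI' hz)).symm)] at this
      exact this
    · rw [if_neg hz]
      by_cases hs' : I.sum = B
      · rw [if_pos hs']; exact hy I hl hs'
      · rw [if_neg hs']; exact hx I hl (by omega)

end P3
end BCT

namespace BCT
section P4a
variable {F : Type*} [Field F] {V : Type*}

/-- Contraction with a point. -/
noncomputable def pc (f : V) : Ch F V →ₗ[F] Ch F V := con (fun v => if v = f then 1 else 0)

/-- Iterated contraction. -/
noncomputable def om : List V → Ch F V → Ch F V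
  | [], x => x
  | f :: Fl, x => om Fl (pc f x)

/-- Iterated contraction as a linear map. -/
noncomputable def omL : List V → Ch F V →ₗ[F] Ch F V
  | [] => LinearMap.id
  | f :: Fl => omL Fl ∘ₗ pc f

lemma om_eq (Fl : List V) : ∀ x : Ch F V, om Fl x = omL Fl x := by
  induction Fl with
  | nil => intro x; rfl
  | cons f Fl ih => intro x; exact ih _

lemma om_append (A B : List V) : ∀ x : Ch F V, om (A ++ B) x = om B (om A x) := by
  induction A with
  | nil => intro x; rfl
  | cons f A ih => intro x; exact ih _

lemma pc_cone (f v : V) (x : Ch F V) :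
    pc f (cone v x) = (if v = f then x else 0) - cone v (pc f x) := by
  rw [pc, con_cone]
  split_ifs <;> simp

lemma pc_pc (f : V) (x : Ch F V) : pc f (pc f x) = 0 := con_con _ x

lemma pc_anti (f g : V) (x : Ch F V) : pc f (pc g x) = - pc g (pc f x) := con_anti _ _ x

lemma pc_free (f : V) {x : Ch F V} (hx : x ∈ spt F (fun l => f ∉ l)) : pc f x = 0 := by
  refine spt_eq (pc f) 0 ?_ hx
  intro l hl
  induction l with
  | nil => simp [pc]
  | cons v l ih =>
    simp only [List.mem_cons, not_or] at hl
    rw [← cone_sg, pc_cone, ih hl.2, if_neg (Ne.symm hl.1)]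
    simp

/-- Killing the lists which meet a set. -/
noncomputable def kap (B : Set V) : Ch F V →ₗ[F] Ch F V :=
  Finsupp.linearCombination F (fun l => if ∃ v ∈ l, v ∈ B then 0 else sg l)

lemma kap_sg (B : Set V) (l : List V) :
    kap B (sg l : Ch F V) = if ∃ v ∈ l, v ∈ B then 0 else sg l := by
  simp [kap]

lemma kap_cone (B : Set V) (v : V) (x : Ch F V) :
    kap B (cone v x) = if v ∈ B then 0 else cone v (kap B x) := by
  by_cases hv : v ∈ B
  · rw [if_pos hv]
    have := hom_ext' (f := kap B ∘ₗ cone v) (g := (0 : Ch F V →ₗ[F] Ch F V)) ?_ x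
    · simpa using this
    intro l
    rw [LinearMap.comp_apply, cone_sg, kap_sg, if_pos ⟨v, by simp, hv⟩]; rfl
  · rw [if_neg hv]
    have := hom_ext' (f := kap B ∘ₗ cone v) (g := (cone v ∘ₗ kap B : Ch F V →ₗ[F] Ch F V)) ?_ x
    · simpa using this
    intro l
    rw [LinearMap.comp_apply, LinearMap.comp_apply, cone_sg, kap_sg, kap_sg]
    by_cases h : ∃ w ∈ l, w ∈ B
    · rw [if_pos h, if_pos (by obtain ⟨w, hw, h⟩ := h; exact ⟨w, by simp [hw], h⟩), map_zero]
    · rw [if_neg h, if_neg, cone_sg]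
      rintro ⟨w, hw, hwB⟩
      rcases List.mem_cons.1 hw with rfl | hw
      · exact hv hwB
      · exact h ⟨w, hw, hwB⟩

lemma kap_pc (B : Set V) (f : V) (hf : f ∉ B) (x : Ch F V) : kap B (pc f x) = pc f (kap B x) := by
  have := hom_ind (f := kap B ∘ₗ pc f) (g := (pc f ∘ₗ kap B : Ch F V →ₗ[F] Ch F V)) ?_ ?_ x
  · simpa using this
  · have : ¬ ∃ v ∈ ([] : List V), v ∈ B := by simp
    simp only [LinearMap.comp_apply, kap_sg, if_neg this]
    simp [pc]
  · intro v l ih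
    simp only [LinearMap.comp_apply] at ih ⊢
    rw [pc_cone, map_sub, kap_cone, kap_cone, ih]
    by_cases hv : v ∈ B
    · have : v ≠ f := fun h => hf (h ▸ hv)
      simp [hv, this]
    · rw [if_neg hv, if_neg hv, pc_cone]
      split_ifs <;> simp

lemma kap_om (B : Set V) (Fl : List V) (hf : ∀ f ∈ Fl, f ∉ B) : ∀ x : Ch F V,
    kap B (om Fl x) = om Fl (kap B x) := by
  induction Fl with
  | nil => intro x; rfl
  | cons f Fl ih =>
    intro x
    simp only [om]
    rw [ih (fun g hg => hf g (by simp [hg])), kap_pc _ _ (hf f (by simp))]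

lemma kap_kap (B B' : Set V) (h : B' ⊆ B) (x : Ch F V) : kap B (kap B' x) = kap B x := by
  have := hom_ext' (f := kap B ∘ₗ kap B') (g := (kap B : Ch F V →ₗ[F] Ch F V)) ?_ x
  · simpa using this
  intro l
  simp only [LinearMap.comp_apply]
  rw [kap_sg B' l]
  split_ifs with h1
  · rw [map_zero, kap_sg, if_pos]
    obtain ⟨w, hw, h1⟩ := h1
    exact ⟨w, hw, h h1⟩
  · rfl

lemma kap_free (B : Set V) {x : Ch F V} (hx : x ∈ spt F (fun l => ∀ v ∈ l, v ∉ B)) : kap B x = x := by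
  refine spt_eq (kap B) LinearMap.id ?_ hx
  intro l hl
  rw [kap_sg, if_neg]
  · rfl
  · push Not; exact hl

lemma kap_apply_nil (B : Set V) (x : Ch F V) : (kap B x) [] = x [] := by
  have := hom_ext' (f := (Finsupp.lapply [] : Ch F V →ₗ[F] F) ∘ₗ kap B)
    (g := (Finsupp.lapply [] : Ch F V →ₗ[F] F)) ?_ x
  · simpa using this
  intro l
  simp only [LinearMap.comp_apply]
  rw [kap_sg]
  split_ifs with h
  · cases l with
    | nil => simp at h
    | cons v l => simp
  · rfl

lemma om_mem (Fl : List V) : ∀ {P : List V → Prop} {x : Ch F V}, x ∈ spt F P →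
    om Fl x ∈ spt F (fun l' => ∃ l, P l ∧ l.Perm (Fl ++ l')) := by
  induction Fl with
  | nil => intro P x hx; exact spt_mono (fun l hl => ⟨l, hl, List.Perm.refl _⟩) hx
  | cons f Fl ih =>
    intro P x hx
    have h1 : pc f x ∈ spt F (fun l' => ∃ l, P l ∧ l.Perm (f :: l')) := by
      refine spt_map (pc f) _ ?_ hx
      intro l hl
      rw [pc, con_sg]
      refine spt_mono ?_ (conL_mem _ l)
      rintro l' ⟨v, hp, -, hv⟩
      have : v = f := by by_contra h; simp [h] at hv
      exact ⟨l, hl, this ▸ hp⟩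
    refine spt_mono ?_ (ih h1)
    rintro l' ⟨l, ⟨l2, hP, hp⟩, hp'⟩
    exact ⟨l2, hP, hp.trans (hp'.cons f)⟩

end P4a

section gadget
variable {p : ℕ} [Fact p.Prime] {Φ : Type*} (φ : Φ)

local notation "VV" => Φ × ZMod p
local notation "CC" => Ch (ZMod p) (Φ × ZMod p)

/-- cone over a label of the family -/
noncomputable def ec (a : ℕ) : CC →ₗ[ZMod p] CC := cone (φ, (a : ZMod p))

/-- partial sums of the quadratic element -/
noncomputable def PP (q n : ℕ) : CC →ₗ[ZMod p] CC := ∑ i ∈ Finset.Ico q n, ec φ i ∘ₗ ec φ (i + 1)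

/-- The quadratic element. -/
noncomputable def WW : CC →ₗ[ZMod p] CC := ∑ i ∈ Finset.range p, ec φ i ∘ₗ ec φ (i + 1)

lemma ec_p (a : ℕ) : (ec φ (a + p) : CC →ₗ[ZMod p] CC) = ec φ a := by simp [ec]

lemma WW_apply (y : CC) : WW φ y = ∑ i ∈ Finset.range p, ec φ i (ec φ (i + 1) y) := by
  simp [WW]

lemma PP_apply (q n : ℕ) (y : CC) : PP φ q n y = ∑ i ∈ Finset.Ico q n, ec φ i (ec φ (i + 1) y) := by
  simp [PP]

lemma WW_bd (y : CC) : bd (WW φ y) = WW φ (bd y) := by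
  rw [WW_apply, WW_apply, map_sum]
  have : ∀ i, bd (ec φ i (ec φ (i + 1) y)) = (ec φ (i + 1) y - ec φ i y) + ec φ i (ec φ (i + 1) (bd y)) := by
    intro i
    simp only [ec, bd_cone, map_sub]
    abel
  rw [Finset.sum_congr rfl (fun i _ => this i), Finset.sum_add_distrib, Finset.sum_range_sub (fun i => ec φ i y)]
  have h := ec_p (p := p) φ 0
  rw [zero_add] at h
  rw [h, sub_self, zero_add]

lemma WW_fix (τ : VV → VV) (hτ : ∀ c, τ (φ, c) = (φ, c)) (y : CC) : mp τ (WW φ y) = WW φ (mp τ y) := by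
  rw [WW_apply, WW_apply, map_sum]
  simp only [ec, mp_cone, hτ]

lemma WW_shift (τ : VV → VV) (hτ : ∀ c, τ (φ, c) = (φ, c + 1)) (y : CC) :
    mp τ (WW φ y) = WW φ (mp τ y) := by
  rw [WW_apply, WW_apply, map_sum]
  have : ∀ i, mp τ (ec φ i (ec φ (i + 1) y)) = ec φ (i + 1) (ec φ (i + 1 + 1) (mp τ y)) := by
    intro i
    simp only [ec, mp_cone, hτ]
    push_cast
    rfl
  rw [Finset.sum_congr rfl (fun i _ => this i)]
  have h1 := Finset.sum_range_succ (fun i => ec φ i (ec φ (i + 1) (mp τ y))) p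
  have h2 := Finset.sum_range_succ' (fun i => ec φ i (ec φ (i + 1) (mp τ y))) p
  have h3 : ec φ p (ec φ (p + 1) (mp τ y)) = ec φ 0 (ec φ (0 + 1) (mp τ y)) := by
    simp [ec]
  rw [h1, h3] at h2
  exact (add_right_cancel h2).symm

lemma WW_mem {P : List VV → Prop} {y : CC} (hy : y ∈ spt (ZMod p) P) (n : ℕ) :
    ((WW φ) ^ n) y ∈ spt (ZMod p) (fun l => ∃ l1 l2, l = l1 ++ l2 ∧ l1.length = 2 * n ∧
      (∀ v ∈ l1, v.1 = φ) ∧ P l2) := by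
  induction n with
  | zero => exact spt_mono (fun l hl => ⟨[], l, rfl, rfl, by simp, hl⟩) hy
  | succ n ih =>
    rw [pow_succ', Module.End.mul_apply]
    refine spt_map (WW φ) _ ?_ ih
    rintro _ ⟨l1, l2, rfl, hl1, hv, hP⟩
    rw [WW_apply]
    refine Submodule.sum_mem _ (fun i _ => ?_)
    simp only [ec, cone_sg]
    refine sg_mem ⟨_ :: _ :: l1, l2, rfl, by simp [hl1]; ring, ?_, hP⟩
    intro v hv'
    simp only [List.mem_cons] at hv'
    rcases hv' with rfl | rfl | h
    · rfl
    · rfl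
    · exact hv v h

/-- The labels `0, …, n-1` of the family, starting from `q`. -/
def AA (q n : ℕ) : List VV := (List.range' q n).map (fun a : ℕ => (φ, (a : ZMod p)))

/-- labels below `q` -/
def BB (q : ℕ) : Set VV := {v | v.1 = φ ∧ v.2.val < q}

lemma pc_PP (f : VV) (q n : ℕ) (y : CC) : pc f (PP φ q n y) =
    (∑ i ∈ Finset.Ico q n, ((if (φ, (i : ZMod p)) = f then ec φ (i + 1) y else 0) -
      (if (φ, ((i + 1 : ℕ) : ZMod p)) = f then ec φ i y else 0))) + PP φ q n (pc f y) := by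
  rw [PP_apply, PP_apply, map_sum, ← Finset.sum_add_distrib]
  refine Finset.sum_congr rfl (fun i _ => ?_)
  simp only [ec, pc_cone, map_sub]
  split_ifs <;> (try rw [map_zero]) <;> abel

lemma cast_inj {a b : ℕ} (ha : a < p) (hb : b < p) (h : (a : ZMod p) = b) : a = b := by
  have := congrArg ZMod.val h
  rwa [ZMod.val_natCast_of_lt ha, ZMod.val_natCast_of_lt hb] at this

lemma kap_ec (q a : ℕ) (ha : a < p) (y : CC) :
    kap (BB φ q) (ec φ a y) = if a < q then 0 else ec φ a (kap (BB φ q) y) := by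
  rw [ec, kap_cone]
  have : ((φ, (a : ZMod p)) ∈ BB φ q) ↔ a < q := by
    simp [BB, ZMod.val_natCast_of_lt ha]
  simp only [this]

lemma kap_PP (q q' n : ℕ) (hq : q ≤ q') (hn : n < p) (y : CC) :
    kap (BB φ q') (PP φ q n y) = PP φ q' n (kap (BB φ q') y) := by
  rw [PP_apply, PP_apply, map_sum]
  symm
  apply Finset.sum_subset_zero_on_sdiff
  · exact Finset.Ico_subset_Ico hq le_rfl
  · intro i hi
    rw [Finset.mem_sdiff, Finset.mem_Ico, Finset.mem_Ico] at hi
    rw [kap_ec _ _ _ (by omega), if_pos (by omega)]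
  · intro i hi
    rw [Finset.mem_Ico] at hi
    rw [kap_ec _ _ _ (by omega), if_neg (by omega), kap_ec _ _ _ (by omega), if_neg (by omega)]

lemma calc_c (y : CC) (hy : y ∈ spt (ZMod p) (fun l => ∀ v ∈ l, v.1 ≠ φ)) (j : ℕ) :
    ∀ q n, n + 1 = q + 2 * j → n < p →
    kap {v | v.1 = φ} (om (AA φ q (2 * j)) (((PP φ q n) ^ j) y)) = (j.factorial : ZMod p) • y := by
  have hpcy : ∀ c : ZMod p, pc (φ, c) y = 0 := fun c =>
    pc_free _ (spt_mono (fun l hl h => hl _ h rfl) hy)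
  have hky : ∀ q, kap (BB φ q) y = y := fun q => kap_free _ (spt_mono (fun l hl v hv h => hl v hv h.1) hy)
  induction j with
  | zero =>
    intro q n _ _
    simp only [AA, Nat.mul_zero, List.range'_zero, List.map_nil, om, pow_zero, Module.End.one_apply,
      Nat.factorial_zero, Nat.cast_one, one_smul]
    exact kap_free _ hy
  | succ j ih =>
    intro q n hn hnp
    have hpow : ∀ a : ℕ, kap (BB φ (q + 2)) (((PP φ q n) ^ a) y) = ((PP φ (q + 2) n) ^ a) y := by
      intro a
      induction a with
      | zero => exact hky _
      | succ a iha => rw [pow_succ', pow_succ', Module.End.mul_apply, Module.End.mul_apply,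
          kap_PP φ q (q + 2) n (by omega) hnp, iha]
    have hq : ∀ y : CC, pc (φ, (q : ZMod p)) (PP φ q n y) =
        ec φ (q + 1) y + PP φ q n (pc (φ, (q : ZMod p)) y) := by
      intro y
      rw [pc_PP, Finset.sum_eq_single_of_mem q (by rw [Finset.mem_Ico]; omega)]
      · rw [if_pos rfl, if_neg, sub_zero]
        intro h
        have := cast_inj (by omega) (by omega) (Prod.mk.inj h).2
        omega
      · intro b hb hbq
        rw [Finset.mem_Ico] at hb
        rw [if_neg, if_neg, sub_zero]
        · intro h
          have := cast_inj (by omega) (by omega) (Prod.mk.inj h).2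
          omega
        · intro h
          exact hbq (cast_inj (by omega) (by omega) (Prod.mk.inj h).2)
    have hq1 : ∀ y : CC, ∃ z : CC, pc (φ, ((q + 1 : ℕ) : ZMod p)) (PP φ q n y) =
        ec φ (q + 2) z - ec φ q y + PP φ q n (pc (φ, ((q + 1 : ℕ) : ZMod p)) y) ∧ (z = y ∨ z = 0) := by
      intro y
      rw [pc_PP]
      refine ⟨if q + 1 < n then y else 0, ?_, by split_ifs <;> simp⟩
      congr 1
      rw [Finset.sum_sub_distrib]
      congr 1
      · by_cases h1 : q + 1 < n
        · rw [Finset.sum_eq_single_of_mem (q + 1) (by rw [Finset.mem_Ico]; omega), if_pos rfl, if_pos h1]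
          intro b hb hbq
          rw [Finset.mem_Ico] at hb
          rw [if_neg]
          intro h
          exact hbq (cast_inj (by omega) (by omega) (Prod.mk.inj h).2)
        · rw [if_neg h1, map_zero]
          apply Finset.sum_eq_zero
          intro b hb
          rw [Finset.mem_Ico] at hb
          rw [if_neg]
          intro h
          have := cast_inj (by omega) (by omega) (Prod.mk.inj h).2
          omega
      · rw [Finset.sum_eq_single_of_mem q (by rw [Finset.mem_Ico]; omega), if_pos rfl]
        intro b hb hbq
        rw [Finset.mem_Ico] at hb
        rw [if_neg]
        intro h
        have := cast_inj (by omega) (by omega) (Prod.mk.inj h).2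
        omega
    have hk0 : ∀ a : ℕ, kap (BB φ (q + 2)) (pc (φ, (q : ZMod p)) (((PP φ q n) ^ a) y)) = 0 := by
      intro a
      induction a with
      | zero => simp [hpcy]
      | succ a iha =>
        rw [pow_succ', Module.End.mul_apply, hq, map_add, kap_ec _ _ _ (by omega), if_pos (by omega),
          kap_PP φ q (q + 2) n (by omega) hnp, iha, map_zero, add_zero]
    have hkQ : ∀ a : ℕ, kap (BB φ (q + 2)) (pc (φ, ((q + 1 : ℕ) : ZMod p)) (pc (φ, (q : ZMod p))
        (((PP φ q n) ^ a) y))) = (a : ZMod p) • ((PP φ (q + 2) n) ^ (a - 1)) y := by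
      intro a
      induction a with
      | zero => simp [hpcy]
      | succ a iha =>
        rw [pow_succ', Module.End.mul_apply, hq, map_add, map_add]
        obtain ⟨z, hz, hz'⟩ := hq1 (pc (φ, (q : ZMod p)) (((PP φ q n) ^ a) y))
        rw [hz, ec, pc_cone, if_pos rfl, ← ec, map_sub, kap_ec _ _ _ (by omega), if_pos (by omega), sub_zero,
          map_add, map_sub, kap_ec φ (q + 2) q (by omega), if_pos (by omega), sub_zero, hpow,
          kap_PP φ q (q + 2) n (by omega) hnp, iha]
        have hz0 : kap (BB φ (q + 2)) (ec φ (q + 2) z) = 0 := by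
          by_cases h2 : q + 2 < p
          · rw [kap_ec _ _ _ h2, if_neg (by omega)]
            rcases hz' with rfl | rfl
            · rw [hk0, map_zero]
            · simp
          · have h3 : n < q + 2 := by omega
            have : j = 0 := by omega
            rcases hz' with rfl | rfl
            · have h5 : a = a := rfl
              have h4 : q + 2 = 0 + p := by omega
              have h5 : (ec φ (q + 2) : CC →ₗ[ZMod p] CC) = ec φ 0 := by rw [h4, ec_p]
              rw [h5, kap_ec _ _ _ (by omega), if_pos (by omega)]
            · simp
        rw [hz0, zero_add, map_smul]
        cases a with
        | zero => simp
        | succ a =>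
          rw [← Module.End.mul_apply, Nat.add_sub_cancel, Nat.add_sub_cancel, ← pow_succ']
          rw [show ((a + 1 + 1 : ℕ) : ZMod p) = 1 + ((a + 1 : ℕ) : ZMod p) by push_cast; ring, add_smul, one_smul]
    have hA : (AA φ q (2 * (j + 1)) : List VV) = (φ, (q : ZMod p)) :: (φ, ((q + 1 : ℕ) : ZMod p)) ::
        AA φ (q + 2) (2 * j) := by
      simp only [AA, Nat.mul_add, Nat.mul_one, List.range'_succ, List.map_cons]
    rw [hA]
    simp only [om]
    have hBB : BB φ (q + 2) ⊆ {v : Φ × ZMod p | v.1 = φ} := fun v hv => hv.1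
    rw [← kap_kap {v | v.1 = φ} (BB φ (q + 2)) hBB, kap_om (BB φ (q + 2)), hkQ, om_eq, map_smul, map_smul,
      Nat.add_sub_cancel, ← om_eq, ih (q + 2) n (by omega) hnp, smul_smul, Nat.factorial_succ, Nat.cast_mul]
    intro f hf
    simp only [AA, List.mem_map, List.mem_range'_1] at hf
    obtain ⟨a, ha, rfl⟩ := hf
    simp only [BB, Set.mem_ofPred_eq, true_and]
    rw [ZMod.val_natCast_of_lt (by omega)]
    omega

end gadget
end BCT

namespace BCT
section gadget2
variable {p : ℕ} [Fact p.Prime] {Φ : Type*} (φ : Φ)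

local notation "VV" => Φ × ZMod p
local notation "CC" => Ch (ZMod p) (Φ × ZMod p)

lemma pow_comm_map {τ : VV → VV} (h : ∀ y : CC, mp τ (WW φ y) = WW φ (mp τ y)) (n : ℕ) (y : CC) :
    mp τ ((WW φ ^ n) y) = (WW φ ^ n) (mp τ y) := pow_map _ _ (mp τ) h n y

lemma WW_pow_bd (n : ℕ) (y : CC) : bd ((WW φ ^ n) y) = (WW φ ^ n) (bd y) :=
  pow_map _ _ bd (WW_bd φ) n y

lemma mp_pow_shift (τ : VV → VV) (hτ : ∀ c, τ (φ, c) = (φ, c + 1)) (t : ℕ) (l : List (ZMod p)) :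
    ((mp τ : Module.End (ZMod p) CC) ^ t) (sg (l.map (fun c : ZMod p => (φ, c)))) =
      sg (l.map (fun c : ZMod p => (φ, c + (t : ZMod p)))) := by
  induction t with
  | zero => simp
  | succ t ih =>
    rw [pow_succ', Module.End.mul_apply, ih, mp_sg]
    simp [hτ, Function.comp_def, add_assoc]

lemma kap_WW (hp : 2 < p) (y : CC) :
    kap {v : VV | v.1 = φ ∧ v.2.val = p - 1} (WW φ y) =
      PP φ 0 (p - 2) (kap {v : VV | v.1 = φ ∧ v.2.val = p - 1} y) := by
  have hk : ∀ a < p, ∀ z : CC, kap {v : VV | v.1 = φ ∧ v.2.val = p - 1} (ec φ a z) =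
      if a = p - 1 then 0 else ec φ a (kap {v : VV | v.1 = φ ∧ v.2.val = p - 1} z) := by
    intro a ha z
    rw [ec, kap_cone]
    have : ((φ, (a : ZMod p)) ∈ {v : VV | v.1 = φ ∧ v.2.val = p - 1}) ↔ a = p - 1 := by
      simp [ZMod.val_natCast_of_lt ha]
    simp only [this]
  rw [WW_apply, PP_apply, map_sum]
  symm
  apply Finset.sum_subset_zero_on_sdiff
  · intro i hi
    rw [Finset.mem_Ico] at hi
    rw [Finset.mem_range]; omega
  · intro i hi
    rw [Finset.mem_sdiff, Finset.mem_Ico, Finset.mem_range] at hi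
    rw [hk _ (by omega)]
    split_ifs with h
    · rfl
    · rw [hk _ (by omega), if_pos (by omega), map_zero]
  · intro i hi
    rw [Finset.mem_Ico] at hi
    rw [hk _ (by omega), if_neg (by omega), hk _ (by omega), if_neg (by omega)]

set_option maxHeartbeats 1000000 in
theorem gadget : ∃ (α : ℕ → CC) (Z : Module.End (ZMod p) CC) (c : ZMod p), c ≠ 0 ∧
    (∀ i, α i ∈ spt (ZMod p) (fun l => l.length = i + 1 ∧ ∀ v ∈ l, v.1 = φ)) ∧
    bd (α 0) = sg [] ∧
    (∀ τ : VV → VV, (∀ c, τ (φ, c) = (φ, c + 1)) →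
      (∀ i, i + 1 < p - 1 → bd (α (i + 1)) = eps p (mp τ) (i + 1) (α i)) ∧
      eps p (mp τ) (p - 1) (α (p - 2)) = Z (sg [])) ∧
    (∀ y, bd (Z y) = Z (bd y)) ∧
    (∀ τ : VV → VV, ((∀ c, τ (φ, c) = (φ, c + 1)) ∨ ∀ c, τ (φ, c) = (φ, c)) → ∀ y,
      mp τ (Z y) = Z (mp τ y)) ∧
    (∀ (P : List VV → Prop) (y : CC), y ∈ spt (ZMod p) P → Z y ∈ spt (ZMod p)
      (fun l => ∃ l1 l2, l = l1 ++ l2 ∧ l1.length = p - 1 ∧ (∀ v ∈ l1, v.1 = φ) ∧ P l2)) ∧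
    (∀ y : CC, y ∈ spt (ZMod p) (fun l => ∀ v ∈ l, v.1 ≠ φ) →
      kap {v | v.1 = φ} (om (AA φ 0 (p - 1)) (Z y)) = c • y) := by
  have hpp : p.Prime := Fact.out
  rcases hpp.eq_two_or_odd' with h2 | hodd
  · subst h2
    -- the case of two elements
    have hsh : ∀ y : Ch (ZMod 2) (Φ × ZMod 2), (cone (φ, 1) - cone (φ, 0) : Ch (ZMod 2) (Φ × ZMod 2) →ₗ[ZMod 2] Ch (ZMod 2) (Φ × ZMod 2)) y = cone (φ, 1) y - cone (φ, 0) y := fun y => rfl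
    have h3 : ∀ x : Ch (ZMod 2) (Φ × ZMod 2), - x = x := fun x => by
      have h4 : (2 : ZMod 2) • x = 0 := by
        rw [show (2 : ZMod 2) = 0 from rfl, zero_smul]
      rw [two_smul] at h4
      exact neg_eq_of_add_eq_zero_left h4
    refine ⟨fun i => sg (List.replicate (i + 1) (φ, 0)), cone (φ, 1) - cone (φ, 0), 1, one_ne_zero, ?_, ?_, ?_, ?_, ?_, ?_, ?_⟩
    · intro i
      refine sg_mem ⟨by simp, fun v hv => ?_⟩
      rw [List.eq_of_mem_replicate hv]
    · simp only [zero_add, List.replicate_one]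
      rw [← cone_sg, bd_cone]; simp
    · intro τ hτ
      refine ⟨fun i hi => absurd hi (by omega), ?_⟩
      have e1 : 2 - 1 = 1 := rfl
      have e2 : Odd 1 := odd_one
      simp only [e1, Nat.sub_self, zero_add, List.replicate_one]
      rw [eps, if_pos e2, hsh, LinearMap.sub_apply, mp_sg, cone_sg, cone_sg, Module.End.one_apply]
      simp only [List.map_cons, List.map_nil, hτ, zero_add]
    · intro y
      simp only [hsh, map_sub, bd_cone]
      rw [← h3 (cone (φ, 1) (bd y) - cone (φ, 0) (bd y))]
      abel
    · rintro τ (hτ | hτ) y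
      · simp only [hsh, map_sub, mp_cone, hτ]
        have : (1 : ZMod 2) + 1 = 0 := rfl
        rw [this, zero_add]
        rw [← neg_sub, h3]
      · simp only [hsh, map_sub, mp_cone, hτ]
    · intro P y hy
      refine spt_map (cone (φ, 1) - cone (φ, 0) : Ch (ZMod 2) (Φ × ZMod 2) →ₗ[ZMod 2] Ch (ZMod 2) (Φ × ZMod 2)) _ ?_ hy
      intro l hl
      rw [LinearMap.sub_apply, cone_sg, cone_sg]
      refine Submodule.sub_mem _ (sg_mem ⟨[_], l, rfl, rfl, ?_, hl⟩) (sg_mem ⟨[_], l, rfl, rfl, ?_, hl⟩) <;> simp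
    · intro y hy
      have hA : (AA φ 0 (2 - 1) : List (Φ × ZMod 2)) = [(φ, 0)] := by simp [AA]
      have h0 : pc (φ, 0) y = 0 := pc_free _ (spt_mono (fun l hl h => hl _ h rfl) hy)
      rw [hA]
      simp only [om, hsh, map_sub, pc_cone, h0]
      simp only [map_zero]
      rw [if_neg (by simp), if_pos trivial]
      simp only [map_zero, sub_zero, zero_sub, h3, one_smul]
      exact kap_free _ hy
  · obtain ⟨h, hh⟩ := hodd
    have hp2 := hpp.two_le
    have hsg : ∀ (τ : VV → VV), (∀ c, τ (φ, c) = (φ, c + 1)) → ∀ k : ℕ,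
        (∑ t ∈ Finset.range p, (mp τ : Module.End (ZMod p) CC) ^ t) ((WW φ ^ k) (sg [(φ, 0), (φ, 1)])) =
        (WW φ ^ (k + 1)) (sg []) := by
      intro τ hτ k
      rw [pow_succ, Module.End.mul_apply, WW_apply, map_sum, LinearMap.sum_apply]
      refine Finset.sum_congr rfl (fun t _ => ?_)
      have h1 := pow_map (WW φ ^ k) (WW φ ^ k) ((mp τ : Module.End (ZMod p) CC) ^ t) (fun x =>
        (pow_map (mp τ : Module.End (ZMod p) CC) (mp τ : Module.End (ZMod p) CC) (WW φ ^ k) (fun y => (pow_comm_map φ (WW_shift φ τ hτ) k y).symm) t x).symm) 1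
          (sg [(φ, 0), (φ, 1)])
      rw [pow_one] at h1
      rw [h1]
      have := mp_pow_shift φ τ hτ t [0, 1]
      simp only [List.map_cons, List.map_nil] at this
      rw [this]
      simp [ec, add_comm]
    refine ⟨fun i => if Odd i then (WW φ ^ (i / 2)) (sg [(φ, 0), (φ, 1)]) else (WW φ ^ (i / 2)) (sg [(φ, 0)]),
      WW φ ^ h, (h.factorial : ZMod p), ?_, ?_, ?_, ?_, ?_, ?_, ?_, ?_⟩
    · intro h0
      rw [ZMod.natCast_eq_zero_iff] at h0
      have := (hpp.dvd_factorial).1 h0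
      omega
    · intro i
      dsimp only
      split_ifs with hi
      · obtain ⟨k, rfl⟩ := hi
        refine spt_mono ?_ (WW_mem φ (sg_mem (P := fun l => l = [(φ, 0), (φ, 1)]) rfl) _)
        rintro l ⟨l1, l2, rfl, hl, hv, rfl⟩
        refine ⟨by simp [hl]; omega, ?_⟩
        intro v hv'
        simp only [List.mem_append, List.mem_cons, List.not_mem_nil, or_false] at hv'
        rcases hv' with h | rfl | rfl
        · exact hv v h
        · rfl
        · rfl
      · obtain ⟨k, rfl⟩ := Nat.not_odd_iff_even.1 hi
        refine spt_mono ?_ (WW_mem φ (sg_mem (P := fun l => l = [(φ, 0)]) rfl) _)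
        rintro l ⟨l1, l2, rfl, hl, hv, rfl⟩
        refine ⟨by simp [hl]; omega, ?_⟩
        intro v hv'
        simp only [List.mem_append, List.mem_cons, List.not_mem_nil, or_false] at hv'
        rcases hv' with h | rfl
        · exact hv v h
        · rfl
    · beta_reduce
      rw [if_neg (by decide)]
      simp only [Nat.zero_div, pow_zero, Module.End.one_apply]
      rw [← cone_sg, bd_cone]; simp
    · intro τ hτ
      refine ⟨?_, ?_⟩
      · intro i hi
        by_cases hi : Odd i
        · obtain ⟨k, rfl⟩ := hi
          have e1 : ¬ Odd (2 * k + 1 + 1) := by rw [Nat.not_odd_iff_even]; exact ⟨k + 1, by ring⟩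
          have e2 : (2 * k + 1 + 1) / 2 = k + 1 := by omega
          have e3 : (2 * k + 1) / 2 = k := by omega
          have e4 : Odd (2 * k + 1) := ⟨k, rfl⟩
          beta_reduce
          rw [if_neg e1, if_pos e4, eps, if_neg e1, e2, e3, WW_pow_bd, hsg τ hτ]
          congr 1
          rw [← cone_sg, bd_cone]; simp
        · obtain ⟨k, rfl⟩ := Nat.not_odd_iff_even.1 hi
          have e1 : Odd (k + k + 1) := ⟨k, by ring⟩
          have e2 : (k + k + 1) / 2 = k := by omega
          have e3 : (k + k) / 2 = k := by omega
          beta_reduce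
          rw [if_neg hi, if_pos e1, eps, if_pos e1, e2, e3, WW_pow_bd, LinearMap.sub_apply,
            pow_comm_map φ (WW_shift φ τ hτ), Module.End.one_apply, ← map_sub]
          congr 1
          rw [← cone_sg, bd_cone, ← cone_sg, bd_cone]
          simp [hτ]
      · have e1 : Odd (p - 2) := ⟨h - 1, by omega⟩
        have e2 : ¬ Odd (p - 1) := by rw [Nat.not_odd_iff_even]; exact ⟨h, by omega⟩
        have e3 : (p - 2) / 2 = h - 1 := by omega
        have e4 : h - 1 + 1 = h := by omega
        beta_reduce
        rw [if_pos e1, eps, if_neg e2, e3, hsg τ hτ, e4]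
    · exact WW_pow_bd φ h
    · rintro τ (hτ | hτ) y
      · exact pow_comm_map φ (WW_shift φ τ hτ) h y
      · exact pow_comm_map φ (WW_fix φ τ hτ) h y
    · intro P y hy
      have := WW_mem φ hy h
      rwa [show 2 * h = p - 1 by omega] at this
    · intro y hy
      have hpow : ∀ a : ℕ, kap {v : VV | v.1 = φ ∧ v.2.val = p - 1} (((WW φ) ^ a) y) =
          ((PP φ 0 (p - 2)) ^ a) y := by
        intro a
        induction a with
        | zero => exact kap_free _ (spt_mono (fun l hl v hv h => hl v hv h.1) hy)
        | succ a iha => rw [pow_succ', pow_succ', Module.End.mul_apply, Module.End.mul_apply,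
            kap_WW φ (by omega), iha]
      have hBB : {v : VV | v.1 = φ ∧ v.2.val = p - 1} ⊆ {v : VV | v.1 = φ} := fun v hv => hv.1
      rw [← kap_kap {v : VV | v.1 = φ} _ hBB, kap_om, hpow, show p - 1 = 2 * h by omega]
      · exact calc_c φ y hy h 0 (p - 2) (by omega) (by omega)
      · intro f hf
        simp only [AA, List.mem_map, List.mem_range'_1] at hf
        obtain ⟨a, ha, rfl⟩ := hf
        simp only [Set.mem_ofPred_eq, true_and]
        rw [ZMod.val_natCast_of_lt (by omega)]
        omega

end gadget2
end BCT

namespace BCT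
section omega
variable {F : Type*} [Field F] {V : Type*}

/-- The scalar obtained by full contraction. -/
noncomputable def Om (Fl : List V) : Ch F V →ₗ[F] F := (Finsupp.lapply []) ∘ₗ omL Fl

lemma Om_eq (Fl : List V) (x : Ch F V) : Om Fl x = (om Fl x) [] := by
  rw [om_eq]; rfl

lemma bd_sum [Fintype V] (x : Ch F V) : bd x = ∑ v : V, pc v x := by
  have := hom_ind (f := bd) (g := (∑ v : V, pc v : Ch F V →ₗ[F] Ch F V)) ?_ ?_ x
  · rw [this, LinearMap.sum_apply]
  · simp [pc]
  · intro v l ih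
    rw [LinearMap.sum_apply] at ih ⊢
    rw [bd_cone, ih, map_sum]
    simp only [pc_cone, Finset.sum_sub_distrib]
    simp

lemma Om_cons (v : V) (G : List V) (x : Ch F V) : Om (v :: G) x = Om G (pc v x) := rfl

lemma Om_bd [Fintype V] (G : List V) (x : Ch F V) : Om G (bd x) = ∑ v : V, Om (v :: G) x := by
  rw [bd_sum, map_sum]; rfl

lemma om_perm {A B : List V} (h : A.Perm B) :
    ∃ s : F, (s = 1 ∨ s = -1) ∧ ∀ x : Ch F V, om B x = s • om A x := by
  induction h with
  | nil => exact ⟨1, Or.inl rfl, fun x => by simp⟩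
  | cons v h ih =>
    obtain ⟨s, hs, h⟩ := ih
    exact ⟨s, hs, fun x => h _⟩
  | swap v w l =>
    refine ⟨-1, Or.inr rfl, fun x => ?_⟩
    simp only [om]
    rw [pc_anti, om_eq, om_eq, map_neg]; simp
  | trans _ _ ih1 ih2 =>
    obtain ⟨s, hs, h⟩ := ih1
    obtain ⟨s', hs', h'⟩ := ih2
    refine ⟨s' * s, ?_, fun x => ?_⟩
    · rcases hs with rfl | rfl <;> rcases hs' with rfl | rfl <;> simp
    · rw [h', h, smul_smul]

lemma Om_perm {A B : List V} (h : A.Perm B) :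
    ∃ s : F, (s = 1 ∨ s = -1) ∧ ∀ x : Ch F V, Om B x = s * Om A x := by
  obtain ⟨s, hs, h⟩ := om_perm (F := F) h
  refine ⟨s, hs, fun x => ?_⟩
  rw [Om_eq, Om_eq, h]; rfl

lemma Om_ne {K : Set (Set V)} {m : ℕ} {x : Ch F V} (hx : x ∈ sup F K m) {G : List V}
    (h : Om G x ≠ 0) : G.Nodup ∧ G.length = m ∧ {v | v ∈ G} ∈ K := by
  constructor
  · by_contra hn
    obtain ⟨v, hv⟩ := List.exists_duplicate_iff_not_nodup.2 hn
    have h2 : [v, v].Sublist G := List.duplicate_iff_sublist.1 hv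
    obtain ⟨L, hL⟩ := h2.exists_perm_append
    obtain ⟨s, hs, h3⟩ := Om_perm (F := F) hL.symm
    apply h
    rw [h3]
    simp only [List.cons_append, List.nil_append, Om_cons, pc_pc, map_zero, mul_zero]
  · have := om_mem G hx
    rw [Om_eq] at h
    have h2 := (Finsupp.mem_supported F _).1 this (Finsupp.mem_support_iff.2 h)
    obtain ⟨l, ⟨hl, hK⟩, hp⟩ := h2
    rw [List.append_nil] at hp
    refine ⟨by rw [← hp.length_eq, hl], ?_⟩
    convert hK using 1
    ext v
    exact hp.symm.mem_iff

lemma Om_map {V' : Type*} (τ : V → V') (hτ : Function.Injective τ) (G : List V) :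
    ∀ x : Ch F V, Om (G.map τ) (mp τ x) = Om G x := by
  induction G with
  | nil =>
    intro x
    have := hom_ext' (f := (Finsupp.lapply [] : Ch F V' →ₗ[F] F) ∘ₗ mp τ)
      (g := (Finsupp.lapply [] : Ch F V →ₗ[F] F)) ?_ x
    · exact this
    intro l
    rw [LinearMap.comp_apply, mp_sg]
    cases l <;> simp
  | cons f G ih =>
    intro x
    rw [List.map_cons, Om_cons, Om_cons, ← ih (pc f x), pc, pc,
      mp_con τ _ (fun v => if v = τ f then 1 else 0)]
    intro v
    simp [hτ.eq_iff]

end omega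

section facets
set_option linter.unusedSectionVars false
variable {p : ℕ} [Fact p.Prime] {Φ : Type*}

local notation "VV" => Φ × ZMod p
local notation "CC" => Ch (ZMod p) (Φ × ZMod p)

/-- Joins of boundaries of simplices. -/
def Lc (S : Finset Φ) : Set (Set VV) := {s | (∀ x ∈ s, x.1 ∈ S) ∧ ∀ φ ∈ S, ¬ ∀ c, (φ, c) ∈ s}

lemma Lc_eq (S : Finset Φ) : (Lc S : Set (Set VV)) =
    KC (fun x : VV => x) (fun _ => ()) (fun x : VV => x) Prod.fst (S ×ˢ Finset.univ) S 0
      (S ×ˢ Finset.univ) := by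
  ext s
  simp only [Lc, KC, Set.mem_ofPred_eq, Finset.mem_product, Finset.mem_univ, and_true, and_self]
  constructor
  · rintro ⟨h1, h2⟩
    refine ⟨h1, fun x _ y _ h => h, fun x _ y _ h _ => h, ?_⟩
    rw [Nat.le_zero, Finset.card_eq_zero, Finset.filter_eq_empty_iff]
    intro φ hφ h
    refine h2 φ hφ (fun c => ?_)
    obtain ⟨x, hx, hxe⟩ := h (φ, c) hφ rfl
    exact hxe ▸ hx
  · rintro ⟨h1, -, -, h4⟩
    refine ⟨h1, fun φ hφ h => ?_⟩
    rw [Nat.le_zero, Finset.card_eq_zero, Finset.filter_eq_empty_iff] at h4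
    refine h4 hφ ?_
    rintro ⟨ψ, c⟩ _ rfl
    exact ⟨_, h c, rfl⟩

lemma Lc_lower (S : Finset Φ) : IsLowerSet (Lc S : Set (Set VV)) := by
  rw [Lc_eq]; exact KC_lower _ _ _ _ _ _ _ _

lemma Lc_exa (S : Finset Φ) : Exa (ZMod p) (Lc S : Set (Set VV)) ((p - 1) * S.card) := by
  rw [Lc_eq]
  have := KC_exa (F := ZMod p) (fun x : VV => x) (fun _ => ()) (fun x : VV => x) Prod.fst
    (fun x y h _ => h) _ (S ×ˢ Finset.univ) S 0 (S ×ˢ Finset.univ) rfl (Nat.zero_le _) ?_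
  · convert this using 1
    rw [Finset.card_product, Finset.card_univ, ZMod.card, add_zero, Nat.sub_mul, one_mul, mul_comm]
  · intro e he
    refine le_trans (Nat.mul_le_mul_left 2 (Finset.card_le_one.2 ?_))
      (Nat.add_le_add_right (Finset.card_pos.2 ⟨e, ?_⟩) 1)
    · intro a ha b hb
      exact ((@Finset.mem_filter _ _ (_) _ _).1 ha).2.trans ((@Finset.mem_filter _ _ (_) _ _).1 hb).2.symm
    · exact (@Finset.mem_filter _ _ (_) _ _).2 ⟨he, rfl⟩

variable [Fintype Φ]

/-- Lists of the vertices of a facet. -/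
def Fac (c : Φ → ZMod p) (Fl : List VV) : Prop := Fl.Nodup ∧ ∀ v, v ∈ Fl ↔ v.2 ≠ c v.1

lemma Fac_ex (c : Φ → ZMod p) : ∃ Fl, Fac c Fl := by
  refine ⟨(Finset.univ.filter (fun v : VV => v.2 ≠ c v.1)).toList, Finset.nodup_toList _, ?_⟩
  intro v; simp

lemma Fac_perm {c : Φ → ZMod p} {A B : List VV} (hA : Fac c A) (hB : Fac c B) : A.Perm B :=
  (List.perm_ext_iff_of_nodup hA.1 hB.1).2 (fun v => (hA.2 v).trans (hB.2 v).symm)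

lemma Fac_bd {c : Φ → ZMod p} {Fl : List VV} (h : Fac c Fl) {m : ℕ} {x : CC}
    (hx : x ∈ sup (ZMod p) (Lc Finset.univ) m) : Om Fl (bd x) = 0 := by
  rw [Om_bd]
  refine Finset.sum_eq_zero (fun v _ => ?_)
  by_contra hne
  obtain ⟨h1, -, h3⟩ := Om_ne hx hne
  rw [List.nodup_cons] at h1
  have hv : v.2 = c v.1 := by
    by_contra h4; exact h1.1 ((h.2 v).2 h4)
  refine h3.2 v.1 (Finset.mem_univ _) (fun a => ?_)
  rw [Set.mem_ofPred_eq, List.mem_cons]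
  by_cases ha : a = c v.1
  · left; ext <;> simp [ha, hv]
  · right; exact (h.2 _).2 ha

/-- Comparison of two facets on cycles. -/
def Cmp (c c' : Φ → ZMod p) : Prop := ∀ Fl Fl' : List VV, Fac c Fl → Fac c' Fl' →
  ∃ s : ZMod p, (s = 1 ∨ s = -1) ∧ ∀ (m : ℕ) (x : CC), x ∈ sup (ZMod p) (Lc Finset.univ) m →
    bd x = 0 → Om Fl' x = s * Om Fl x

lemma Cmp_refl (c : Φ → ZMod p) : Cmp c c := by
  intro A B hA hB
  obtain ⟨s, hs, h⟩ := Om_perm (F := ZMod p) (Fac_perm hA hB)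
  exact ⟨s, hs, fun m x _ _ => h x⟩

lemma Cmp_trans {c c' c'' : Φ → ZMod p} (h1 : Cmp c c') (h2 : Cmp c' c'') : Cmp c c'' := by
  intro A B hA hB
  obtain ⟨D, hD⟩ := Fac_ex c'
  obtain ⟨s, hs, h⟩ := h1 A D hA hD
  obtain ⟨s', hs', h'⟩ := h2 D B hD hB
  refine ⟨s' * s, ?_, fun m x hx hb => ?_⟩
  · rcases hs with rfl | rfl <;> rcases hs' with rfl | rfl <;> simp
  · rw [h' m x hx hb, h m x hx hb, mul_assoc]

lemma Cmp_step (c : Φ → ZMod p) (φ : Φ) (a : ZMod p) (ha : a ≠ c φ) :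
    Cmp c (Function.update c φ a) := by
  intro A B hA hB
  have h1 : (φ, a) ∈ A := (hA.2 _).2 ha
  have h2 : (φ, c φ) ∈ B := (hB.2 _).2 (by simpa using ha.symm)
  have hG := List.perm_cons_erase h1
  set G := A.erase (φ, a) with hGd
  have hGn : G.Nodup := hA.1.erase _
  have hGm : ∀ v, v ∈ G ↔ v ≠ (φ, a) ∧ v.2 ≠ c v.1 := by
    intro v; rw [hGd, hA.1.mem_erase_iff, hA.2]
  have hB' : ((φ, c φ) :: G).Perm B := by
    rw [List.perm_ext_iff_of_nodup _ hB.1]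
    · rintro ⟨ψ, b⟩
      rw [List.mem_cons, hGm, hB.2]
      by_cases hψ : ψ = φ
      · subst hψ
        simp only [Prod.mk.injEq, true_and, ne_eq, Function.update_self]
        constructor
        · rintro (rfl | ⟨h, -⟩)
          · exact ha.symm
          · exact h
        · intro h
          by_cases hb : b = c ψ
          · left; exact hb
          · right; exact ⟨h, hb⟩
      · simp [hψ]
    · rw [List.nodup_cons]
      refine ⟨?_, hGn⟩
      rw [hGm]; simp
  obtain ⟨s1, hs1, e1⟩ := Om_perm (F := ZMod p) hG
  obtain ⟨s2, hs2, e2⟩ := Om_perm (F := ZMod p) hB'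
  refine ⟨s2 * (-s1), ?_, fun m x hx hb => ?_⟩
  · rcases hs1 with rfl | rfl <;> rcases hs2 with rfl | rfl <;> simp
  · have h0 := Om_bd G x
    rw [hb, map_zero] at h0
    have h3 : ∑ v : VV, Om (v :: G) x = ∑ v ∈ ({(φ, a), (φ, c φ)} : Finset VV), Om (v :: G) x := by
      symm
      apply Finset.sum_subset (Finset.subset_univ _)
      intro v _ hv
      simp only [Finset.mem_insert, Finset.mem_singleton, not_or] at hv
      by_contra hne
      obtain ⟨n1, -, n3⟩ := Om_ne hx hne
      rw [List.nodup_cons, hGm] at n1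
      have hv2 : v.2 = c v.1 := by
        by_contra h4; exact n1.1 ⟨hv.1, h4⟩
      have hv1 : v.1 ≠ φ := by
        intro h; apply hv.2; ext
        · exact h
        · rw [hv2, h]
      refine n3.2 v.1 (Finset.mem_univ _) (fun b => ?_)
      rw [Set.mem_ofPred_eq, List.mem_cons, hGm]
      by_cases hb : b = c v.1
      · left; ext <;> simp [hb, hv2]
      · right; exact ⟨fun h => hv1 (congrArg Prod.fst h), hb⟩
    rw [h3, Finset.sum_pair (by simp [ha])] at h0
    rw [e2]
    linear_combination (-s2) * h0 - s2 * (e1 x)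

lemma Cmp_all (c c' : Φ → ZMod p) : Cmp c c' := by
  have : ∀ (S : Finset Φ) (c : Φ → ZMod p), (∀ φ ∉ S, c φ = c' φ) → Cmp c c' := by
    intro S
    induction S using Finset.induction_on with
    | empty =>
      intro c h
      have : c = c' := funext (fun φ => h φ (by simp))
      rw [this]; exact Cmp_refl _
    | insert a S ha ih =>
      intro c h
      by_cases hc : c' a = c a
      · refine ih c (fun φ hφ => ?_)
        by_cases e : φ = a
        · rw [e, hc]
        · exact h φ (by simp [e, hφ])
      · refine Cmp_trans (Cmp_step c a (c' a) hc) (ih _ (fun φ hφ => ?_))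
        by_cases e : φ = a
        · subst e; simp
        · rw [Function.update_of_ne e]; exact h φ (by simp [e, hφ])
  exact this Finset.univ c (by simp)

end facets
end BCT

namespace BCT
section action
set_option linter.unusedSectionVars false
variable {p : ℕ} [Fact p.Prime] {Φ : Type*} {κ : Type*} [LinearOrder κ] (lev : Φ → κ) (σ : κ → Φ → Φ)

local notation "VV" => Φ × ZMod p
local notation "CC" => Ch (ZMod p) (Φ × ZMod p)

/-- The combinatorial properties of the action on labels. -/
structure Act (p : ℕ) {Φ : Type*} {κ : Type*} [LinearOrder κ] (lev : Φ → κ) (σ : κ → Φ → Φ) : Prop where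
  fix : ∀ k φ, lev φ ≤ k → σ k φ = φ
  lev_eq : ∀ k φ, lev (σ k φ) = lev φ
  comm : ∀ k l φ, σ k (σ l φ) = σ l (σ k φ)
  per : ∀ k φ, (σ k)^[p] φ = φ

/-- The action on labels. -/
noncomputable def tau (k : κ) (v : VV) : VV := (σ k v.1, v.2 + if lev v.1 = k then 1 else 0)

/-- The action on chains. -/
noncomputable def Tm (k : κ) : Module.End (ZMod p) CC := mp (tau lev σ k)

variable {lev σ}

lemma tau_iter (h : Act p lev σ) (k : κ) (n : ℕ) (v : VV) :
    (tau lev σ k)^[n] v = ((σ k)^[n] v.1, v.2 + if lev v.1 = k then (n : ZMod p) else 0) := by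
  induction n with
  | zero => simp
  | succ n ih =>
    rw [Function.iterate_succ_apply', ih, tau, Function.iterate_succ_apply']
    have : ∀ n φ, lev ((σ k)^[n] φ) = lev φ := by
      intro n φ
      induction n with
      | zero => rfl
      | succ n ih => rw [Function.iterate_succ_apply', h.lev_eq, ih]
    simp only [this]
    split_ifs <;> simp [add_assoc]

lemma tau_p (h : Act p lev σ) (k : κ) (v : VV) : (tau lev σ k)^[p] v = v := by
  rw [tau_iter h, h.per]; simp

lemma tau_inj (h : Act p lev σ) (k : κ) : Function.Injective (tau lev σ k : VV → VV) := by
  intro a b hab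
  obtain ⟨q, hp⟩ : ∃ q, p = q + 1 := ⟨p - 1, by
    have := (Fact.out : p.Prime).two_le; omega⟩
  have : ∀ n, (tau lev σ k)^[n + 1] a = (tau lev σ k)^[n + 1] b := fun n => by
    rw [Function.iterate_succ_apply, Function.iterate_succ_apply, hab]
  rw [← tau_p h k a, ← tau_p h k b]
  have h2 := this q
  rwa [← hp] at h2

lemma sig_inj (h : Act p lev σ) (k : κ) : Function.Injective (σ k) := by
  intro a b hab
  have hp : p = (p - 1) + 1 := by
    have := (Fact.out : p.Prime).two_le; omega
  rw [← h.per k a, ← h.per k b, hp, Function.iterate_succ_apply, Function.iterate_succ_apply, hab]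

lemma Tm_pow (k : κ) (n : ℕ) (x : CC) : ((Tm lev σ k) ^ n) x = mp ((tau lev σ k)^[n]) x := by
  induction n generalizing x with
  | zero => simp [mp_id]
  | succ n ih => rw [pow_succ, Module.End.mul_apply, ih, Tm, mp_mp, Function.iterate_succ]

lemma Tm_p (h : Act p lev σ) (k : κ) : (Tm lev σ k : Module.End (ZMod p) CC) ^ p = 1 := by
  ext1 x
  ext1
  rw [LinearMap.comp_apply, LinearMap.comp_apply, Tm_pow]
  have : (tau lev σ k : VV → VV)^[p] = id := funext (tau_p h k)
  rw [this, mp_id]; rfl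

lemma Tm_comm (h : Act p lev σ) (k l : κ) (x : CC) :
    Tm lev σ k (Tm lev σ l x) = Tm lev σ l (Tm lev σ k x) := by
  rw [Tm, Tm, mp_mp, mp_mp]
  congr 1
  congr 1
  funext v
  simp only [Function.comp, tau, h.lev_eq, h.comm k l]
  congr 1
  ring

lemma Tm_bd (k : κ) (x : CC) : bd (Tm lev σ k x) = Tm lev σ k (bd x) := (mp_bd _ x).symm

lemma Tm_Lc (h : Act p lev σ) (k : κ) (S : Finset Φ) (hS : ∀ φ ∈ S, σ k φ ∈ S) (m : ℕ) (x : CC)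
    (hx : x ∈ sup (ZMod p) (Lc S) m) : Tm lev σ k x ∈ sup (ZMod p) (Lc S) m := by
  refine spt_map (Tm lev σ k) _ ?_ hx
  rintro l ⟨hl, h1, h2⟩
  rw [Tm, mp_sg]
  have hS' : ∀ n φ, φ ∈ S → (σ k)^[n] φ ∈ S := by
    intro n φ hφ
    induction n with
    | zero => exact hφ
    | succ n ih => rw [Function.iterate_succ_apply']; exact hS _ ih
  refine sg_mem ⟨by simpa using hl, ?_, ?_⟩
  · intro v hv
    rw [Set.mem_ofPred_eq, List.mem_map] at hv
    obtain ⟨w, hw, rfl⟩ := hv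
    exact hS _ (h1 w hw)
  · intro φ hφ hall
    have hp : p = (p - 1) + 1 := by
      have := (Fact.out : p.Prime).two_le; omega
    have hφ' := hS' (p - 1) φ hφ
    have e : σ k ((σ k)^[p-1] φ) = φ := by
      rw [← Function.iterate_succ_apply' (σ k), Nat.succ_eq_add_one, ← hp, h.per]
    refine h2 _ hφ' (fun c => ?_)
    have := hall (c + if lev ((σ k)^[p-1] φ) = k then 1 else 0)
    rw [Set.mem_ofPred_eq, List.mem_map] at this
    obtain ⟨w, hw, hw2⟩ := this
    have : w = ((σ k)^[p-1] φ, c) := by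
      apply tau_inj h k
      rw [hw2, tau, e]
    exact this ▸ hw

variable [Fintype Φ]

lemma Om_inv (h : Act p lev σ) (k : κ) {c : Φ → ZMod p} {Fl : List VV} (hF : Fac c Fl) (m : ℕ) (x : CC)
    (hx : x ∈ sup (ZMod p) (Lc Finset.univ) m) (hb : bd x = 0) : Om Fl (Tm lev σ k x) = Om Fl x := by
  have hstab : ∀ x : CC, (x ∈ sup (ZMod p) (Lc Finset.univ) m ∧ bd x = 0) →
      (Tm lev σ k x ∈ sup (ZMod p) (Lc Finset.univ) m ∧ bd (Tm lev σ k x) = 0) := by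
    rintro x ⟨hx, hb⟩
    exact ⟨Tm_Lc h k _ (by simp) m x hx, by rw [Tm_bd, hb, map_zero]⟩
  have hbij : Function.Bijective (σ k) := Finite.injective_iff_bijective.1 (sig_inj h k)
  set e := Equiv.ofBijective _ hbij with he
  have hF' : Fac (fun ψ => c (e.symm ψ) + if lev ψ = k then 1 else 0) (Fl.map (tau lev σ k)) := by
    refine ⟨hF.1.map (tau_inj h k), fun v => ?_⟩
    rw [List.mem_map]
    constructor
    · rintro ⟨w, hw, rfl⟩
      have h1 := (hF.2 w).1 hw
      have h2 : e.symm (σ k w.1) = w.1 := e.symm_apply_apply w.1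
      simp only [tau, h2, h.lev_eq]
      intro h3
      exact h1 (add_right_cancel h3)
    · intro hv
      have h2 : σ k (e.symm v.1) = v.1 := e.apply_symm_apply v.1
      have h3 : lev (e.symm v.1) = lev v.1 := by rw [← h.lev_eq k, h2]
      refine ⟨(e.symm v.1, v.2 - if lev v.1 = k then 1 else 0), (hF.2 _).2 ?_, ?_⟩
      · intro h4
        apply hv
        change _ = c (e.symm v.1) at h4
        beta_reduce
        rw [← h4]; simp
      · rw [tau, h2, h3]; simp
  obtain ⟨s, hs, hcmp⟩ := Cmp_all _ _ _ _ hF' hF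
  have key : ∀ x : CC, (x ∈ sup (ZMod p) (Lc Finset.univ) m ∧ bd x = 0) →
      Om Fl (Tm lev σ k x) = s * Om Fl x := by
    intro x hx
    rw [hcmp m _ (hstab x hx).1 (hstab x hx).2, Tm, Om_map _ (tau_inj h k)]
  rcases hs with rfl | rfl
  · rw [key x ⟨hx, hb⟩, one_mul]
  · rcases (Fact.out : p.Prime).eq_two_or_odd' with h2 | hodd
    · subst h2
      rw [key x ⟨hx, hb⟩, show (-1 : ZMod 2) = 1 from rfl, one_mul]
    · have hit : ∀ n : ℕ, (((Tm lev σ k) ^ n) x ∈ sup (ZMod p) (Lc Finset.univ) m ∧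
          bd (((Tm lev σ k) ^ n) x) = 0) ∧ Om Fl (((Tm lev σ k) ^ n) x) = (-1) ^ n * Om Fl x := by
        intro n
        induction n with
        | zero => simpa using ⟨hx, hb⟩
        | succ n ih =>
          rw [pow_succ', Module.End.mul_apply]
          refine ⟨hstab _ ih.1, ?_⟩
          rw [key _ ih.1, ih.2, pow_succ']; ring
      have h1 := (hit p).2
      rw [Tm_p h, Module.End.one_apply, hodd.neg_one_pow] at h1
      have h2 : (2 : ZMod p) * Om Fl x = 0 := by linear_combination h1
      have h3 : (2 : ZMod p) ≠ 0 := by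
        intro h4
        have : ((2 : ℕ) : ZMod p) = 0 := by exact_mod_cast h4
        rw [ZMod.natCast_eq_zero_iff] at this
        have := (Nat.prime_dvd_prime_iff_eq Fact.out Nat.prime_two).1 this
        subst this
        exact absurd hodd (by decide)
      have h4 := (mul_eq_zero.1 h2).resolve_left h3
      rw [key x ⟨hx, hb⟩, h4, mul_zero]

lemma Om_eps (h : Act p lev σ) (k : κ) {c : Φ → ZMod p} {Fl : List VV} (hF : Fac c Fl) (m : ℕ) (x : CC)
    (hx : x ∈ sup (ZMod p) (Lc Finset.univ) m) (hb : bd x = 0) (i : ℕ) :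
    Om Fl (eps p (Tm lev σ k) i x) = 0 := by
  rw [eps]
  split_ifs
  · rw [LinearMap.sub_apply, map_sub, Om_inv h k hF m x hx hb]; simp
  · have hit : ∀ n : ℕ, (((Tm lev σ k) ^ n) x ∈ sup (ZMod p) (Lc Finset.univ) m ∧
          bd (((Tm lev σ k) ^ n) x) = 0) ∧ Om Fl (((Tm lev σ k) ^ n) x) = Om Fl x := by
      intro n
      induction n with
      | zero => simpa using ⟨hx, hb⟩
      | succ n ih =>
        rw [pow_succ', Module.End.mul_apply]
        refine ⟨⟨Tm_Lc h k _ (by simp) m _ ih.1.1, by rw [Tm_bd, ih.1.2, map_zero]⟩, ?_⟩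
        rw [Om_inv h k hF m _ ih.1.1 ih.1.2, ih.2]
    rw [LinearMap.sum_apply, map_sum, Finset.sum_congr rfl (fun n _ => (hit n).2)]
    simp

/-- The inhomogeneous term of a system. -/
noncomputable def uu (I : List ℕ) : CC := if I.sum = 0 then sg [] else 0

/-- Systems in the complex `Lc S` up to total degree `B`. -/
def IsSys (lev : Φ → κ) (σ : κ → Φ → Φ) (gs : List κ) (S : Finset Φ) (B : ℕ) (x : List ℕ → CC) : Prop :=
  ∀ I : List ℕ, I.length = gs.length → I.sum < B →
    x I ∈ sup (ZMod p) (Lc S) (I.sum + 1) ∧ bd (x I) = uu I + bb p (Tm lev σ) gs x I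

lemma Om_uniq (h : Act p lev σ) (gs : List κ) {c : Φ → ZMod p} {Fl : List VV} (hF : Fac c Fl)
    (x x' : List ℕ → CC)
    (hx : IsSys lev σ gs Finset.univ ((p - 1) * Fintype.card Φ) x)
    (hx' : IsSys lev σ gs Finset.univ ((p - 1) * Fintype.card Φ) x')
    (I : List ℕ) (hI : I.length = gs.length) (hIs : I.sum = (p - 1) * Fintype.card Φ) :
    Om Fl (bb p (Tm lev σ) gs x I) = Om Fl (bb p (Tm lev σ) gs x' I) := by
  set N := (p - 1) * Fintype.card Φ with hN
  by_cases hN0 : N = 0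
  · rw [bb_zero _ _ _ _ _ (hIs.trans hN0), bb_zero _ _ _ _ _ (hIs.trans hN0)]
  set δ : List ℕ → CC := fun I => x I + (-1 : ZMod p) • x' I with hδ
  have hδb : ∀ I, bb p (Tm lev σ) gs δ I =
      bb p (Tm lev σ) gs x I + (-1 : ZMod p) • bb p (Tm lev σ) gs x' I := by
    intro I
    rw [hδ, bb_add, bb_smul]
  have hδd : ∀ I : List ℕ, I.length = gs.length → I.sum < N →
      δ I ∈ sup (ZMod p) (Lc Finset.univ) (I.sum + 1) ∧ bd (δ I) = bb p (Tm lev σ) gs δ I := by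
    intro I h1 h2
    refine ⟨Submodule.add_mem _ (hx I h1 h2).1 (Submodule.smul_mem _ _ (hx' I h1 h2).1), ?_⟩
    rw [hδb, hδ]
    simp only [map_add, map_smul]
    rw [(hx I h1 h2).2, (hx' I h1 h2).2]
    module
  set u : List ℕ → CC := fun I => ((-1 : ZMod p) ^ I.sum) • δ I with hu
  have hub : ∀ I : List ℕ, I.sum ≠ 0 → bb p (Tm lev σ) gs u I =
      ((-1 : ZMod p) ^ (I.sum - 1)) • bb p (Tm lev σ) gs δ I := by
    intro I h0
    rw [← bb_smul]
    refine bb_congr _ _ _ _ _ _ (fun I' hI' => ?_)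
    rw [hu, ← hI'.2, Nat.add_sub_cancel]
  have hud : ∀ I : List ℕ, I.length = gs.length → I.sum < N →
      u I ∈ sup (ZMod p) (Lc Finset.univ) (I.sum + 1) ∧ bd (u I) + bb p (Tm lev σ) gs u I = 0 := by
    intro I h1 h2
    refine ⟨Submodule.smul_mem _ _ (hδd I h1 h2).1, ?_⟩
    by_cases h0 : I.sum = 0
    · rw [bb_zero _ _ _ _ _ h0, hu]
      simp only [map_smul]
      rw [(hδd I h1 h2).2, bb_zero _ _ _ _ _ h0]; simp
    · rw [hub I h0, hu]
      simp only [map_smul]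
      rw [(hδd I h1 h2).2]
      obtain ⟨t, ht⟩ := Nat.exists_eq_succ_of_ne_zero h0
      rw [ht, Nat.succ_sub_one, Nat.succ_eq_add_one, pow_succ]
      module
  have hTL : ∀ g ∈ gs, ∀ m, ∀ x ∈ sup (ZMod p) (Lc (Finset.univ : Finset Φ)) m,
      Tm lev σ g x ∈ sup (ZMod p) (Lc Finset.univ) m :=
    fun g _ m x hx => Tm_Lc h g _ (by simp) m x hx
  obtain ⟨y, -, hy⟩ := extend p bd (Tm lev σ) (Tm_p h) (Tm_comm h) (fun g x => Tm_bd g x)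
    (fun m => sup (ZMod p) (Lc (Finset.univ : Finset Φ)) m) N 1 gs hTL
    (by have := Lc_exa (p := p) (Finset.univ : Finset Φ); rwa [Finset.card_univ] at this)
    u (fun _ => False) (fun _ => 0) (fun _ _ _ h => h) (N - 1) (by omega)
    (fun I h1 h2 => hud I h1 (by omega)) (fun I h => h.elim)
  have hr : ∀ I' : List ℕ, I'.length = gs.length → I'.sum + 1 = N →
      (u I' + bb p (Tm lev σ) gs y I' ∈ sup (ZMod p) (Lc Finset.univ) N) ∧
      bd (u I' + bb p (Tm lev σ) gs y I') = 0 := by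
    intro I' h1 h2
    constructor
    · refine Submodule.add_mem _ ?_ ?_
      · have := (hud I' h1 (by omega)).1
        rwa [h2] at this
      · refine bb_mem _ _ _ _ _ _ (fun I'' hI'' g hg i => ?_)
        have h3 := hI''.2
        refine eps_mem p _ _ (hTL g hg N) i ?_
        have := (hy I'' (hI''.length.trans h1) (by omega)).1
        rwa [show I''.sum + 1 + 1 = N by omega] at this
    · rw [map_add, bb_map p (Tm lev σ) (Tm lev σ) bd gs y I'
        (fun I'' _ g _ i => eps_map p (Tm lev σ g) (Tm lev σ g) bd (fun x => Tm_bd g x) i (y I''))]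
      have : bb p (Tm lev σ) gs (fun I => bd (y I)) I' =
          bb p (Tm lev σ) gs (fun I => u I + bb p (Tm lev σ) gs y I) I' := by
        refine bb_congr _ _ _ _ _ _ (fun I'' hI'' => ?_)
        have h3 := hI''.2
        exact (hy I'' (hI''.length.trans h1) (by omega)).2
      rw [this, bb_add, bb_bb p _ (Tm_p h) (Tm_comm h), add_zero]
      exact (hud I' h1 (by omega)).2
  have hO : Om Fl (bb p (Tm lev σ) gs (fun I => u I + bb p (Tm lev σ) gs y I) I) = 0 := by
    have := bb_mem p (Tm lev σ) (LinearMap.ker (Om Fl : CC →ₗ[ZMod p] ZMod p)) gs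
      (fun I => u I + bb p (Tm lev σ) gs y I) I ?_
    · exact LinearMap.mem_ker.1 this
    intro I' hI' g _ i
    have h3 := hI'.2
    rw [LinearMap.mem_ker]
    obtain ⟨r1, r2⟩ := hr I' (hI'.length.trans hI) (by omega)
    exact Om_eps h g hF N _ r1 r2 i
  rw [bb_add, bb_bb p _ (Tm_p h) (Tm_comm h), add_zero, hub I (by omega), map_smul, hδb, map_add,
    map_smul] at hO
  have h5 : ((-1 : ZMod p) ^ (I.sum - 1)) ≠ 0 := pow_ne_zero _ (by simp)
  have h6 := (smul_eq_zero.1 hO).resolve_left h5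
  rw [smul_eq_mul] at h6
  linear_combination h6

end action
end BCT

namespace BCT
section existence
set_option linter.unusedSectionVars false
variable {p : ℕ} [Fact p.Prime] {Φ : Type*} {κ : Type*} [LinearOrder κ] {lev : Φ → κ} {σ : κ → Φ → Φ}

local notation "VV" => Φ × ZMod p
local notation "CC" => Ch (ZMod p) (Φ × ZMod p)

lemma not_full (φ : Φ) (l : List VV) (hl : l.length < p) : ¬ ∀ c, (φ, c) ∈ l := by
  intro h
  have h1 : (Finset.univ.image (fun c : ZMod p => (φ, c))) ⊆ l.toFinset := by
    intro v hv
    rw [Finset.mem_image] at hv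
    obtain ⟨c, -, rfl⟩ := hv
    rw [List.mem_toFinset]; exact h c
  have h2 := Finset.card_le_card h1
  rw [Finset.card_image_of_injective _ (fun a b hab => congrArg Prod.snd hab), Finset.card_univ,
    ZMod.card] at h2
  have := List.toFinset_card_le l
  omega

lemma AA_mem (φ : Φ) (v : VV) : v ∈ AA φ 0 (p - 1) ↔ v.1 = φ ∧ v.2 ≠ -1 := by
  have hp := (Fact.out : p.Prime).two_le
  have h1 : ((p - 1 : ℕ) : ZMod p) = -1 := by
    rw [Nat.cast_sub (by omega)]; simp
  simp only [AA, List.mem_map, List.mem_range'_1, zero_add, Nat.zero_le, true_and]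
  constructor
  · rintro ⟨a, ha, rfl⟩
    refine ⟨rfl, fun h => ?_⟩
    rw [← h1] at h
    have := cast_inj (by omega) (by omega) h
    omega
  · rintro ⟨rfl, h⟩
    have hlt := ZMod.val_lt v.2
    refine ⟨v.2.val, ?_, ?_⟩
    · by_contra h2
      apply h
      have : v.2.val = p - 1 := by omega
      rw [← h1, ← this, ZMod.natCast_zmod_val]
    · ext
      · rfl
      · simp

lemma AA_nodup (φ : Φ) : (AA φ 0 (p - 1) : List VV).Nodup := by
  have hp := (Fact.out : p.Prime).two_le
  refine List.Nodup.map_on ?_ List.nodup_range'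
  intro a ha b hb h
  rw [List.mem_range'_1] at ha hb
  exact cast_inj (by omega) (by omega) (congrArg Prod.snd h)

lemma nil_mem (S : Finset Φ) : (sg [] : CC) ∈ sup (ZMod p) (Lc S) 0 := by
  refine sg_mem ⟨rfl, ?_, ?_⟩
  · intro v hv; simp at hv
  · intro φ _ h
    have := h 0
    simp at this

lemma Tm_nil (k : κ) : Tm lev σ k (sg [] : CC) = sg [] := by simp [Tm]

lemma uu_prop (gs : List κ) (S : Finset Φ) (I : List ℕ) :
    (uu I : CC) ∈ sup (ZMod p) (Lc S) I.sum ∧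
      bd (uu I : CC) + bb p (Tm lev σ) gs uu I = 0 := by
  have : CharP (ZMod p) p := ZMod.charP p
  constructor
  · rw [uu]; split_ifs with h
    · rw [h]; exact nil_mem S
    · exact Submodule.zero_mem _
  · have h1 : bb p (Tm lev σ) gs (uu : List ℕ → CC) I = 0 :=
      bb_fix p (Tm lev σ) gs (sg [] : CC) (fun g _ => Tm_nil g) I
    rw [h1, uu]; split_ifs <;> simp

lemma neg_one_pow_p : (-1 : ZMod p) ^ (p - 1) = 1 := by
  rcases (Fact.out : p.Prime).eq_two_or_odd' with h2 | ⟨h, hh⟩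
  · subst h2; rfl
  · have : Even (p - 1) := ⟨h, by omega⟩
    exact this.neg_one_pow

lemma eps_shift (T : Module.End (ZMod p) CC) (j : ℕ) (x : CC) : eps p T (j + (p - 1)) x = eps p T j x := by
  rcases (Fact.out : p.Prime).eq_two_or_odd' with h2 | ⟨h, hh⟩
  · subst h2
    have e : (∑ t ∈ Finset.range 2, T ^ t) x = (T - 1) x := by
      rw [Finset.sum_range_succ, Finset.sum_range_one, pow_zero, pow_one, LinearMap.add_apply,
        LinearMap.sub_apply]
      have h4 : (2 : ZMod 2) • x = 0 := by
        rw [show (2 : ZMod 2) = 0 from rfl, zero_smul]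
      rw [two_smul] at h4
      rw [Module.End.one_apply, sub_eq_add_neg, neg_eq_of_add_eq_zero_left h4, add_comm]
    rw [eps, eps]
    split_ifs <;> first | rfl | exact e | exact e.symm
  · have : Odd (j + (p - 1)) ↔ Odd j := by
      rw [Nat.odd_iff, Nat.odd_iff]; omega
    rw [eps, eps]
    simp only [this]

/-- The conclusion of the existence theorem. -/
def ExP (lev : Φ → κ) (σ : κ → Φ → Φ) (gs : List κ) (S : Finset Φ) : Prop :=
  ∃ (ψ : List ℕ → CC) (I : List ℕ) (Fl : List VV), IsSys lev σ gs S ((p - 1) * S.card) ψ ∧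
    I.length = gs.length ∧ I.sum = (p - 1) * S.card ∧ Fl.Nodup ∧ (∀ v : VV, v ∈ Fl ↔ v.1 ∈ S ∧ v.2 ≠ -1) ∧
    Om Fl (uu I + bb p (Tm lev σ) gs ψ I) ≠ 0

lemma ex_skip (h : Act p lev σ) (k : κ) (gs : List κ) (S : Finset Φ)
    (hst : ∀ l ∈ k :: gs, ∀ φ ∈ S, σ l φ ∈ S) (hE : ExP (p := p) lev σ gs S) :
    ExP (p := p) lev σ (k :: gs) S := by
  obtain ⟨β, I, Fl, h1, h2, h3, h4, h5, h6⟩ := hE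
  have hZ : ∀ I' I : List ℕ, Prd I' I → (∃ J, I = 0 :: J) → ∃ J, I' = 0 :: J := by
    rintro I' I hI ⟨J, rfl⟩
    cases I' with
    | nil => exact absurd hI.length (by simp)
    | cons a J' =>
      have := hI.1
      rw [List.forall₂_cons] at this
      exact ⟨J', by rw [Nat.le_zero.1 this.1]⟩
  have hx0 : ∀ I : List ℕ, (∃ J, I = 0 :: J) → I.length = (k :: gs).length → I.sum < (p - 1) * S.card →
      β I.tail ∈ sup (ZMod p) (Lc S) (I.sum + 0 + 1) ∧
      bd (β I.tail) = uu I + bb p (Tm lev σ) (k :: gs) (fun I => β I.tail) I := by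
    rintro I ⟨J, rfl⟩ hl hs
    have := h1 J (by simpa using hl) (by simpa using hs)
    simp only [List.tail_cons, bb, if_true, pow_zero, one_smul, zero_add, List.sum_cons, add_zero]
    have e2 : (uu (0 :: J) : CC) = uu J := by simp [uu]
    rw [e2]; exact this
  obtain ⟨x, hx1, hx2⟩ := extend p bd (Tm lev σ) (Tm_p h) (Tm_comm h) (fun g x => Tm_bd g x)
    (fun m => sup (ZMod p) (Lc S) m) ((p - 1) * S.card) 0 (k :: gs)
    (fun g hg m x hx => Tm_Lc h g S (hst g hg) m x hx) (Lc_exa S) uu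
    (fun I => ∃ J, I = 0 :: J) (fun I => β I.tail) hZ ((p - 1) * S.card) le_rfl
    (fun I _ _ => uu_prop _ S I) hx0
  refine ⟨x, 0 :: I, Fl, fun I => hx2 I, by simp [h2], by simp [h3], h4, h5, ?_⟩
  have e1 : bb p (Tm lev σ) (k :: gs) x (0 :: I) = bb p (Tm lev σ) gs β I := by
    simp only [bb, if_true, pow_zero, one_smul, zero_add]
    refine bb_congr _ _ _ _ _ _ (fun I' _ => ?_)
    rw [hx1 _ ⟨I', rfl⟩]; rfl
  have e2 : (uu (0 :: I) : CC) = uu I := by simp [uu]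
  rw [e1, e2]; exact h6

lemma ex_peel (h : Act p lev σ) (k : κ) (gs : List κ) (hgs : ∀ l ∈ gs, k < l) (S : Finset Φ)
    (hst : ∀ l ∈ k :: gs, ∀ φ ∈ S, σ l φ ∈ S) (φ : Φ) (hφ : φ ∈ S) (hk : lev φ = k)
    (hE : ExP (p := p) lev σ (k :: gs) (S.erase φ)) :
    ExP (p := p) lev σ (k :: gs) S := by
  have : CharP (ZMod p) p := ZMod.charP p
  have hp := (Fact.out : p.Prime).two_le
  have hcard : S.card = (S.erase φ).card + 1 := (Finset.card_erase_add_one hφ).symm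
  have hNS : (p - 1) * S.card = (p - 1) * (S.erase φ).card + (p - 1) := by rw [hcard]; ring
  have hst' : ∀ l ∈ k :: gs, ∀ ψ ∈ S.erase φ, σ l ψ ∈ S.erase φ := by
    intro l hl ψ hψ
    rw [Finset.mem_erase] at hψ ⊢
    refine ⟨fun e => hψ.1 ?_, hst l hl ψ hψ.2⟩
    have hle : lev φ ≤ l := by
      rw [hk]
      rcases List.mem_cons.1 hl with rfl | hl
      · exact le_rfl
      · exact (hgs l hl).le
    have := h.fix l φ hle
    exact sig_inj h l (e.trans this.symm)
  obtain ⟨β, I, Fl, h1, h2, h3, h4, h5, h6⟩ := hE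
  obtain ⟨α, Z, c, hc, ga, gb, gt, gZ, gτ, gm, gk⟩ := gadget (p := p) φ
  set N' := (p - 1) * (S.erase φ).card with hN'
  have tk : ∀ c : ZMod p, tau lev σ k (φ, c) = (φ, c + 1) := by
    intro c; simp [tau, hk, h.fix k φ hk.le]
  have tl : ∀ l ∈ gs, ∀ c : ZMod p, tau lev σ l (φ, c) = (φ, c) := by
    intro l hl c
    have : k ≠ l := (hgs l hl).ne
    simp [tau, hk, this, h.fix l φ (hk.le.trans (hgs l hl).le)]
  have Tα : ∀ l ∈ gs, ∀ i, Tm lev σ l (α i) = α i := by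
    intro l hl i
    refine spt_eq (Tm lev σ l) LinearMap.id ?_ (ga i)
    rintro L ⟨-, hL⟩
    rw [Tm, mp_sg, LinearMap.id_apply]
    congr 1
    conv_rhs => rw [← List.map_id L]
    refine List.map_congr_left (fun v hv => ?_)
    obtain ⟨a, b⟩ := v
    have : a = φ := hL _ hv
    subst this
    exact tl l hl b
  have TZ : ∀ l ∈ k :: gs, ∀ y, Tm lev σ l (Z y) = Z (Tm lev σ l y) := by
    intro l hl y
    rcases List.mem_cons.1 hl with rfl | hl
    · exact gτ _ (Or.inl tk) y
    · exact gτ _ (Or.inr (tl l hl)) y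
  set ψ : List ℕ → CC := fun I => match I with
    | [] => 0
    | i :: J => if i < p - 1 then (if J.sum = 0 then α i else 0) else Z (β ((i - (p - 1)) :: J)) with hψ
  have ψ1 : ∀ i J, i < p - 1 → ψ (i :: J) = if J.sum = 0 then α i else 0 := by
    intro i J hi; simp only [hψ, if_pos hi]
  have ψ2 : ∀ j J, ψ ((j + (p - 1)) :: J) = Z (β (j :: J)) := by
    intro j J
    simp only [hψ]
    rw [if_neg (by omega), Nat.add_sub_cancel]
  -- low part
  have low : ∀ i J, i < p - 1 → bd (ψ (i :: J)) = uu (i :: J) + bb p (Tm lev σ) (k :: gs) ψ (i :: J) := by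
    intro i J hi
    have e1 : bb p (Tm lev σ) gs (fun J' => ψ (i :: J')) J = 0 := by
      rw [bb_congr p (Tm lev σ) gs _ (fun J' => if J'.sum = 0 then α i else 0) J (fun J' _ => ψ1 i J' hi)]
      exact bb_fix p (Tm lev σ) gs (α i) (fun g hg => Tα g hg i) J
    rw [bb, e1, smul_zero, add_zero, ψ1 i J hi]
    cases i with
    | zero =>
      rw [if_pos rfl, add_zero, uu]
      simp only [List.sum_cons, zero_add]
      split_ifs
      · exact gb
      · simp
    | succ i =>
      rw [if_neg (Nat.succ_ne_zero i), Nat.add_sub_cancel, ψ1 i J (by omega)]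
      have : (uu ((i + 1) :: J) : CC) = 0 := by simp [uu]
      rw [this, zero_add]
      split_ifs
      · exact (gt _ tk).1 i hi
      · simp
  -- high part
  have high : ∀ j J, uu ((j + (p - 1)) :: J) + bb p (Tm lev σ) (k :: gs) ψ ((j + (p - 1)) :: J) =
      Z (uu (j :: J) + bb p (Tm lev σ) (k :: gs) β (j :: J)) := by
    intro j J
    have e0 : (uu ((j + (p - 1)) :: J) : CC) = 0 := by
      rw [uu, if_neg]; simp only [List.sum_cons]; omega
    have e1 : bb p (Tm lev σ) gs (fun J' => ψ ((j + (p - 1)) :: J')) J =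
        Z (bb p (Tm lev σ) gs (fun J' => β (j :: J')) J) := by
      rw [bb_map p (Tm lev σ) (Tm lev σ) Z gs _ J (fun I'' _ g hg i =>
        eps_map p (Tm lev σ g) (Tm lev σ g) Z (fun x => (TZ g (by simp [hg]) x).symm) i _)]
      simp only [ψ2]
    rw [e0, zero_add, bb, e1, if_neg (by omega), pow_add, neg_one_pow_p, mul_one, bb]
    simp only [map_add, map_smul]
    rw [← add_assoc]
    congr 1
    cases j with
    | zero =>
      rw [if_pos rfl, map_zero, add_zero, zero_add, show p - 1 - 1 = p - 2 by omega,
        ψ1 _ _ (by omega), uu]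
      simp only [List.sum_cons, zero_add]
      split_ifs
      · exact (gt _ tk).2
      · simp
    | succ j =>
      rw [show j + 1 + (p - 1) - 1 = j + (p - 1) by omega, ψ2, eps_shift,
        if_neg (Nat.succ_ne_zero j), Nat.add_sub_cancel, eps_map p (Tm lev σ k) (Tm lev σ k) Z (fun x => (TZ k (by simp) x).symm)]
      have : (uu ((j + 1) :: J) : CC) = 0 := by simp [uu]
      rw [this, map_zero, zero_add]
  cases I with
  | nil => simp at h2
  | cons j J =>
  refine ⟨ψ, (j + (p - 1)) :: J, AA φ 0 (p - 1) ++ Fl, ?_, by simpa using h2, ?_, ?_, ?_, ?_⟩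
  · intro I hI hs
    cases I with
    | nil => simp at hI
    | cons i J =>
    by_cases hi : i < p - 1
    · refine ⟨?_, low i J hi⟩
      rw [ψ1 i J hi]
      split_ifs with hJ
      · refine spt_mono ?_ (ga i)
        rintro l ⟨hl, hl2⟩
        refine ⟨by simp [hJ, hl], fun v hv => ?_, fun φ' _ hf => ?_⟩
        · rw [hl2 v hv]; exact hφ
        · exact not_full φ' l (by omega) hf
      · exact Submodule.zero_mem _
    · obtain ⟨j, rfl⟩ : ∃ j, i = j + (p - 1) := ⟨i - (p - 1), by omega⟩
      have hβ := h1 (j :: J) (by simpa using hI) (by simp only [List.sum_cons] at hs ⊢; omega)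
      rw [high, ψ2, gZ]
      refine ⟨?_, by rw [hβ.2]⟩
      refine spt_mono ?_ (gm _ _ hβ.1)
      rintro l ⟨l1, l2, rfl, hl1, hv1, hl2, hv2, hv3⟩
      refine ⟨by simp only [List.length_append, List.sum_cons] at *; omega, fun v hv => ?_, fun φ' hφ' hf => ?_⟩
      · rcases List.mem_append.1 hv with hv | hv
        · rw [hv1 v hv]; exact hφ
        · exact Finset.mem_of_mem_erase (hv2 v hv)
      · by_cases e : φ' = φ
        · subst e
          refine not_full φ' l1 (by omega) (fun c => ?_)
          rcases List.mem_append.1 (hf c) with hv | hv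
          · exact hv
          · exact absurd (hv2 _ hv) (Finset.notMem_erase _ _)
        · refine hv3 φ' (Finset.mem_erase.2 ⟨e, hφ'⟩) (fun c => ?_)
          rcases List.mem_append.1 (hf c) with hv | hv
          · exact absurd (hv1 _ hv) e
          · exact hv
  · simp only [List.sum_cons] at h3 ⊢; omega
  · refine List.Nodup.append (AA_nodup φ) h4 ?_
    intro v hv hv'
    have h7 := ((AA_mem φ v).1 hv).1
    have h8 := ((h5 v).1 hv').1
    rw [h7] at h8
    exact Finset.notMem_erase _ _ h8
  · intro v
    rw [List.mem_append, AA_mem, h5, Finset.mem_erase]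
    constructor
    · rintro (⟨rfl, h7⟩ | ⟨h7, h8⟩)
      · exact ⟨hφ, h7⟩
      · exact ⟨h7.2, h8⟩
    · rintro ⟨h7, h8⟩
      by_cases e : v.1 = φ
      · left; exact ⟨e, h8⟩
      · right; exact ⟨⟨e, h7⟩, h8⟩
  · rw [high]
    set y := uu (j :: J) + bb p (Tm lev σ) (k :: gs) β (j :: J) with hy
    have hysp : y ∈ spt (ZMod p) (fun l : List VV => ∀ v ∈ l, v.1 ≠ φ) := by
      have hm : ∀ m, sup (ZMod p) (Lc (S.erase φ)) m ≤
          spt (ZMod p) (fun l : List VV => ∀ v ∈ l, v.1 ≠ φ) := by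
        intro m
        refine spt_mono ?_
        rintro l ⟨-, hl, -⟩ v hv
        exact Finset.ne_of_mem_erase (hl v hv)
      refine Submodule.add_mem _ (hm _ (uu_prop (lev := lev) (σ := σ) gs (S.erase φ) _).1) (hm N' ?_)
      refine bb_mem _ _ _ _ _ _ (fun I'' hI'' g hg i => ?_)
      have h7 := hI''.2
      refine eps_mem p _ _ (Tm_Lc h g _ (hst' g hg) N') i ?_
      have := (h1 I'' (hI''.length.trans h2) (by omega)).1
      rwa [h7, h3] at this
    have hFl : ∀ f ∈ Fl, f ∉ {v : VV | v.1 = φ} := by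
      intro f hf hf2
      exact Finset.ne_of_mem_erase ((h5 f).1 hf).1 hf2
    rw [Om_eq, om_append, ← kap_apply_nil {v : VV | v.1 = φ}, kap_om _ _ hFl, gk y hysp, ← Om_eq,
      map_smul, smul_eq_mul]
    exact mul_ne_zero hc h6

theorem ex_all (h : Act p lev σ) : ∀ (gs : List κ), gs.Pairwise (· < ·) → ∀ S : Finset Φ,
    (∀ φ ∈ S, lev φ ∈ gs) → (∀ l ∈ gs, ∀ φ ∈ S, σ l φ ∈ S) → ExP (p := p) lev σ gs S := by
  intro gs
  induction gs with
  | nil =>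
    intro _ S hS _
    have : S = ∅ := Finset.eq_empty_of_forall_notMem (fun φ hφ => by simpa using hS φ hφ)
    subst this
    refine ⟨fun _ => 0, [], [], ?_, rfl, by simp, List.nodup_nil, by simp, ?_⟩
    · intro I _ hI
      simp at hI
    · simp [bb, uu, Om, omL]
  | cons k gs ih =>
    intro hgs
    rw [List.pairwise_cons] at hgs
    have : ∀ (n : ℕ) (S : Finset Φ), (S.filter (fun φ => lev φ = k)).card = n →
        (∀ φ ∈ S, lev φ ∈ k :: gs) → (∀ l ∈ k :: gs, ∀ φ ∈ S, σ l φ ∈ S) →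
        ExP (p := p) lev σ (k :: gs) S := by
      intro n
      induction n with
      | zero =>
        intro S hS hl hst
        refine ex_skip h k gs S hst (ih hgs.2 S ?_ (fun l hl => hst l (by simp [hl])))
        intro φ hφ
        rw [Finset.card_eq_zero, Finset.filter_eq_empty_iff] at hS
        exact (List.mem_cons.1 (hl φ hφ)).resolve_left (hS hφ)
      | succ n ihn =>
        intro S hS hl hst
        obtain ⟨φ, hφ⟩ := Finset.card_pos.1 (by omega : 0 < (S.filter (fun φ => lev φ = k)).card)
        have hφ2 := Finset.mem_filter.1 hφ
        refine ex_peel h k gs hgs.1 S hst φ hφ2.1 hφ2.2 (ihn _ ?_ ?_ ?_)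
        · have : (S.erase φ).filter (fun φ => lev φ = k) = (S.filter (fun φ => lev φ = k)).erase φ := by
            ext a; simp [and_assoc]
          rw [this, Finset.card_erase_of_mem hφ, hS]; rfl
        · intro ψ hψ; exact hl ψ (Finset.mem_of_mem_erase hψ)
        · intro l hl ψ hψ
          rw [Finset.mem_erase] at hψ ⊢
          refine ⟨fun e => hψ.1 ?_, hst l hl ψ hψ.2⟩
          have hle : lev φ ≤ l := by
            rw [hφ2.2]
            rcases List.mem_cons.1 hl with rfl | hl
            · exact le_rfl
            · exact (hgs.1 l hl).le
          exact sig_inj h l (e.trans (h.fix l φ hle).symm)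
    intro S; exact this _ S rfl

theorem no_system [Fintype Φ] (h : Act p lev σ) (gs : List κ) (hgs : gs.Pairwise (· < ·))
    (hl : ∀ φ, lev φ ∈ gs) (x : List ℕ → CC)
    (hx : IsSys lev σ gs Finset.univ ((p - 1) * Fintype.card Φ + 1) x) : False := by
  obtain ⟨ψ, I, Fl, h1, h2, h3, h4, h5, h6⟩ := ex_all h gs hgs Finset.univ (fun φ _ => hl φ)
    (fun _ _ _ _ => Finset.mem_univ _)
  rw [Finset.card_univ] at h1 h3
  have hF : Fac (fun _ => -1) Fl := ⟨h4, fun v => by simpa using h5 v⟩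
  have hu := Om_uniq h gs hF x ψ (fun I a b => hx I a (by omega)) h1 I h2 h3
  have hxI := hx I h2 (by omega)
  apply h6
  rw [map_add, ← hu, ← map_add, ← hxI.2]
  exact Fac_bd hF hxI.1

end existence
end BCT

namespace BCT
section subdiv
set_option linter.unusedSectionVars false
variable {F : Type*} [Field F] {E : Type*} [NormedAddCommGroup E] [NormedSpace ℝ E]
  {E2 : Type*} [NormedAddCommGroup E2] [NormedSpace ℝ E2]

/-- The barycenter of a list of points. -/
noncomputable def bary (l : List E) : E := ((l.length : ℝ)⁻¹) • l.sum

/-- Barycentric subdivision of lists of length `n`. -/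
noncomputable def sdn (F : Type*) [Field F] {E : Type*} [NormedAddCommGroup E] [NormedSpace ℝ E] :
    ℕ → (Ch F E →ₗ[F] Ch F E)
  | 0 => LinearMap.id
  | n + 1 => Finsupp.linearCombination F (fun l => cone (bary l) (sdn F n (bd (sg l))))

/-- Barycentric subdivision. -/
noncomputable def Sd (F : Type*) [Field F] {E : Type*} [NormedAddCommGroup E] [NormedSpace ℝ E] :
    Ch F E →ₗ[F] Ch F E :=
  Finsupp.linearCombination F (fun l => sdn F l.length (sg l))

lemma sdn_succ_sg (n : ℕ) (l : List E) :
    sdn F (n + 1) (sg l) = cone (bary l) (sdn F n (bd (sg l))) := by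
  simp [sdn]

lemma Sd_sg (l : List E) : Sd F (sg l) = sdn F l.length (sg l) := by
  simp [Sd]

lemma Sd_eq {m : ℕ} {K : Set (Set E)} {x : Ch F E} (hx : x ∈ sup F K m) : Sd F x = sdn F m x := by
  refine spt_eq (P := fun l => l.length = m ∧ {v | v ∈ l} ∈ K) _ _ ?_ hx
  rintro l ⟨rfl, -⟩
  exact Sd_sg l

lemma sg_sup_univ (l : List E) : (sg l : Ch F E) ∈ sup F (Set.univ : Set (Set E)) l.length :=
  sg_mem ⟨rfl, trivial⟩

lemma lower_univ {V : Type*} : IsLowerSet (Set.univ : Set (Set V)) := fun _ _ _ _ => trivial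

lemma bd_sdn_aux (m : ℕ) (h : ∀ l : List E, l.length = m + 1 → bd (sdn F m (bd (sg l : Ch F E))) = 0)
    (x : Ch F E) (hx : x ∈ sup F (Set.univ : Set (Set E)) (m + 1)) :
    bd (sdn F (m + 1) x) = sdn F m (bd x) := by
  have key := spt_eq (P := fun l => l.length = m + 1 ∧ {v | v ∈ l} ∈ Set.univ)
    (bd ∘ₗ sdn F (m + 1)) (sdn F m ∘ₗ bd) (fun l hl => by
      rw [LinearMap.comp_apply, LinearMap.comp_apply, sdn_succ_sg, bd_cone, h l hl.1]; simp) hx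
  rwa [LinearMap.comp_apply, LinearMap.comp_apply] at key

lemma bd_sdn (m : ℕ) : ∀ x ∈ sup F (Set.univ : Set (Set E)) (m + 1),
    bd (sdn F (m + 1) x) = sdn F m (bd x) := by
  induction m with
  | zero =>
    refine bd_sdn_aux 0 ?_
    intro l _
    simp [sdn, bd_bd]
  | succ m ih =>
    refine bd_sdn_aux (m + 1) ?_
    intro l hl
    rw [ih _ (bd_mem lower_univ (sg_mem ⟨hl, trivial⟩)), bd_bd, map_zero]

lemma bd_Sd (x : Ch F E) : bd (Sd F x) = Sd F (bd x) := by
  refine hom_ext' (f := bd ∘ₗ Sd F) (g := Sd F ∘ₗ bd) ?_ x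
  intro l
  simp only [LinearMap.comp_apply, Sd_sg]
  rcases hl : l.length with _ | n
  · rw [List.length_eq_zero_iff] at hl
    subst hl
    simp [sdn]
  · have hs : (sg l : Ch F E) ∈ sup F (Set.univ : Set (Set E)) (n + 1) := hl ▸ sg_sup_univ l
    rw [bd_sdn n _ hs, Sd_eq (bd_mem lower_univ hs)]

lemma bary_map (g : E →ₗ[ℝ] E2) (l : List E) : bary (l.map g) = g (bary l) := by
  simp [bary, map_list_sum]

lemma mp_sdn (g : E →ₗ[ℝ] E2) (m : ℕ) : ∀ x : Ch F E, mp g (sdn F m x) = sdn F m (mp g x) := by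
  induction m with
  | zero => intro x; simp [sdn]
  | succ m ih =>
    intro x
    refine hom_ext' (f := mp g ∘ₗ sdn F (m + 1)) (g := sdn F (m + 1) ∘ₗ mp g) ?_ x
    intro l
    simp only [LinearMap.comp_apply, sdn_succ_sg, mp_cone, mp_sg]
    rw [ih, mp_bd, mp_sg, bary_map]

lemma mp_Sd (g : E →ₗ[ℝ] E2) (x : Ch F E) : mp g (Sd F x) = Sd F (mp g x) := by
  refine hom_ext' (f := mp g ∘ₗ Sd F) (g := Sd F ∘ₗ mp g) ?_ x
  intro l
  simp only [LinearMap.comp_apply, Sd_sg, mp_sg, mp_sdn, List.length_map]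

lemma bary_mem {C : Set E} (hC : Convex ℝ C) {l : List E} (hl : l ≠ []) (h : ∀ v ∈ l, v ∈ C) :
    bary l ∈ C := by
  have hpos : 0 < l.length := List.length_pos_iff.2 hl
  have : bary l = ∑ i : Fin l.length, ((l.length : ℝ)⁻¹) • l.get i := by
    rw [← Finset.smul_sum, bary]
    congr 1
    conv_lhs => rw [← List.ofFn_get l]
    rw [List.sum_ofFn]
  rw [this]
  refine hC.sum_mem (fun _ _ => by positivity) ?_ (fun i _ => h _ (List.get_mem _ _))
  simp only [Finset.sum_const, Finset.card_univ, Fintype.card_fin, nsmul_eq_mul]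
  field_simp

/-- Sets contained in `C`. -/
def Cv {V : Type*} (C : Set V) : Set (Set V) := {s | s ⊆ C}

lemma Cv_lower {V : Type*} (C : Set V) : IsLowerSet (Cv C) := fun _ _ h1 h2 => h1.trans h2

lemma sdn_conv {C : Set E} (hC : Convex ℝ C) (m : ℕ) : ∀ x ∈ sup F (Cv C) m,
    sdn F m x ∈ sup F (Cv C) m := by
  induction m with
  | zero => intro x hx; simpa [sdn] using hx
  | succ m ih =>
    intro x hx
    refine spt_map (P := fun l => l.length = m + 1 ∧ {v | v ∈ l} ∈ Cv C) _ _ ?_ hx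
    intro l hl
    rw [sdn_succ_sg]
    refine cone_mem ?_ (ih _ (bd_mem (Cv_lower C) (sg_mem hl)))
    intro σ hσ
    refine Set.insert_subset (bary_mem hC ?_ hl.2) hσ
    rintro rfl; simp at hl

/-- Sets of diameter at most `δ`. -/
def Dm {V : Type*} [PseudoMetricSpace V] (δ : ℝ) : Set (Set V) := {s | ∀ x ∈ s, ∀ y ∈ s, dist x y ≤ δ}

lemma Dm_lower {V : Type*} [PseudoMetricSpace V] (δ : ℝ) : IsLowerSet (Dm δ : Set (Set V)) :=
  fun _ _ h1 h2 x hx y hy => h2 x (h1 hx) y (h1 hy)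

lemma sup_and {V : Type*} {K K' : Set (Set V)} {m : ℕ} {x : Ch F V} (h : x ∈ sup F K m)
    (h' : x ∈ sup F K' m) : x ∈ sup F (K ∩ K') m := by
  refine spt_mono ?_ (spt_and h h')
  rintro l ⟨⟨a, b⟩, c, d⟩
  exact ⟨a, b, d⟩

lemma bary_dist {l : List E} {δ : ℝ} {v : E} (hv : v ∈ l) (h : ∀ x ∈ l, dist x v ≤ δ) :
    dist v (bary l) ≤ (1 - (l.length : ℝ)⁻¹) * δ := by
  have hn : l.length ≠ 0 := by rintro h0; rw [List.length_eq_zero_iff] at h0; subst h0; simp at hv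
  have hn' : (l.length : ℝ) ≠ 0 := by exact_mod_cast hn
  have hpos : (0 : ℝ) < l.length := by positivity
  obtain ⟨l1, l2, rfl⟩ := List.append_of_mem hv
  have key : ∀ l : List E, (∀ x ∈ l, dist x v ≤ δ) → ‖l.sum - (l.length : ℝ) • v‖ ≤ l.length * δ := by
    intro l hl
    induction l with
    | nil => simp
    | cons a l ih =>
      have h1 := ih (fun x hx => hl x (List.mem_cons_of_mem _ hx))
      have h2 := hl a List.mem_cons_self
      rw [dist_eq_norm] at h2
      have : (a :: l).sum - ((a :: l).length : ℝ) • v = (a - v) + (l.sum - (l.length : ℝ) • v) := by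
        simp only [List.sum_cons, List.length_cons]; push_cast; module
      rw [this]
      refine (norm_add_le _ _).trans ?_
      simp only [List.length_cons]; push_cast
      linarith
  have h3 := key (l1 ++ l2) (fun x hx => h x (by simp at hx ⊢; tauto))
  set l := l1 ++ v :: l2 with hl
  have hlen : (l.length : ℝ) = (l1 ++ l2).length + 1 := by rw [hl]; simp; ring
  have hsum : l.sum = (l1 ++ l2).sum + v := by rw [hl]; simp; abel
  have e : bary l - v = (l.length : ℝ)⁻¹ • ((l1 ++ l2).sum - ((l1 ++ l2).length : ℝ) • v) := by
    rw [bary, hsum]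
    have : v = (l.length : ℝ)⁻¹ • ((l.length : ℝ) • v) := by rw [smul_smul, inv_mul_cancel₀ hn', one_smul]
    nth_rewrite 2 [this]
    rw [← smul_sub, hlen]
    congr 1
    module
  rw [dist_comm, dist_eq_norm, e, norm_smul, norm_inv, Real.norm_of_nonneg hpos.le]
  have : (1 - (l.length : ℝ)⁻¹) * δ = (l.length : ℝ)⁻¹ * (((l1 ++ l2).length : ℝ) * δ) := by
    have : ((l1 ++ l2).length : ℝ) = l.length - 1 := by rw [hlen]; ring
    rw [this]; field_simp
  rw [this]
  gcongr

lemma sdn_diam {M : ℕ} {δ : ℝ} (hδ : 0 ≤ δ) (m : ℕ) (hm : m ≤ M) :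
    ∀ x ∈ sup F (Dm δ : Set (Set E)) m, sdn F m x ∈ sup F (Dm ((1 - (M : ℝ)⁻¹) * δ) : Set (Set E)) m := by
  induction m with
  | zero =>
    intro x hx
    simp only [sdn, LinearMap.id_apply]
    refine spt_mono ?_ hx
    rintro l ⟨h, -⟩
    rw [List.length_eq_zero_iff] at h
    subst h
    exact ⟨rfl, fun x hx => by simp at hx⟩
  | succ m ih =>
    intro x hx
    refine spt_map (P := fun l => l.length = m + 1 ∧ {v | v ∈ l} ∈ Dm δ) _ _ ?_ hx
    rintro l ⟨hl, hd⟩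
    rw [sdn_succ_sg]
    have hM : 1 ≤ M := by omega
    have hM' : (1 : ℝ) ≤ M := by exact_mod_cast hM
    set η := (1 - (M : ℝ)⁻¹) * δ with hη
    have hη0 : 0 ≤ η := mul_nonneg (by rw [sub_nonneg]; exact inv_le_one_of_one_le₀ hM') hδ
    have hb : (bd (sg l) : Ch F E) ∈ sup F (Dm δ) m := bd_mem (Dm_lower δ) (sg_mem ⟨hl, hd⟩)
    have hb2 : (bd (sg l) : Ch F E) ∈ sup F (Cv (Metric.closedBall (bary l) η)) m := by
      refine bd_mem (Cv_lower _) (sg_mem ⟨hl, ?_⟩)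
      intro v hv
      have hv : v ∈ l := hv
      rw [Metric.mem_closedBall]
      refine (bary_dist hv (fun x hx => hd x hx v hv)).trans ?_
      rw [hη, hl]
      have h1 : ((M : ℝ))⁻¹ ≤ ((m + 1 : ℕ) : ℝ)⁻¹ := by
        gcongr
      nlinarith
    have h1 := ih (by omega) _ hb
    have h2 := sdn_conv (convex_closedBall _ _) m _ hb2
    have h3 := sup_and h1 h2
    have h4 : cone (bary l) (sdn F m (bd (sg l))) ∈ sup F (Dm η) (m + 1) := by
      refine spt_map (P := fun l' => l'.length = m ∧ {v | v ∈ l'} ∈ Dm η ∩ Cv (Metric.closedBall (bary l) η))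
        (cone (bary l)) _ ?_ h3
      rintro l' ⟨a, b, c⟩
      rw [cone_sg]
      refine sg_mem ⟨by simp [a], ?_⟩
      intro x hx y hy
      have hx : x ∈ bary l :: l' := hx
      have hy : y ∈ bary l :: l' := hy
      rw [List.mem_cons] at hx hy
      rcases hx with rfl | hx <;> rcases hy with rfl | hy
      · simpa using hη0
      · rw [dist_comm]; exact c hy
      · exact c hx
      · exact b x hx y hy
    exact h4

/-- Iterated subdivision: combined statement. -/
lemma Sd_iter {M : ℕ} (hM : 1 ≤ M) {C : Set E} (hC : Convex ℝ C) {δ : ℝ} (hδ : 0 ≤ δ) (m : ℕ) (hm : m ≤ M)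
    (n : ℕ) (x : Ch F E) (hx : x ∈ sup F (Dm δ ∩ Cv C) m) :
    (Sd F)^[n] x ∈ sup F (Dm ((1 - (M : ℝ)⁻¹) ^ n * δ) ∩ Cv C) m := by
  have hM' : (1 : ℝ) ≤ M := by exact_mod_cast hM
  have h0 : 0 ≤ 1 - (M : ℝ)⁻¹ := by rw [sub_nonneg]; exact inv_le_one_of_one_le₀ hM'
  induction n with
  | zero => simpa using hx
  | succ n ih =>
    rw [Function.iterate_succ_apply', Sd_eq ih]
    refine sup_and ?_ (sdn_conv hC m _ (sup_mono Set.inter_subset_right m ih))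
    rw [pow_succ', mul_assoc]
    exact sdn_diam (by positivity) m hm _ (sup_mono Set.inter_subset_left m ih)

end subdiv
end BCT

namespace BCT
section geo
set_option linter.unusedSectionVars false
variable {W : Type*} [Fintype W]

/-- A closed face. -/
def fc (σ : Set W) : Set (W → ℝ) := {x | x ∈ stdSimplex ℝ W ∧ ∀ w, w ∉ σ → x w = 0}

/-- The geometric realization. -/
def geo (K : Set (Set W)) : Set (W → ℝ) := {x | x ∈ stdSimplex ℝ W ∧ {w | x w ≠ 0} ∈ K}

lemma fc_convex (σ : Set W) : Convex ℝ (fc σ) := by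
  intro x hx y hy a b ha hb hab
  refine ⟨convex_stdSimplex ℝ W hx.1 hy.1 ha hb hab, fun w hw => ?_⟩
  simp [hx.2 w hw, hy.2 w hw]

lemma fc_sub {K : Set (Set W)} (hK : IsLowerSet K) {σ : Set W} (hσ : σ ∈ K) : fc σ ⊆ geo K := by
  intro x hx
  refine ⟨hx.1, hK ?_ hσ⟩
  intro w hw
  by_contra h
  exact hw (hx.2 w h)

lemma fc_compact (σ : Set W) : IsCompact (fc σ) := by
  have : fc σ = stdSimplex ℝ W ∩ ⋂ w ∈ σᶜ, {x | x w = 0} := by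
    ext x; simp [fc]
  rw [this]
  refine (isCompact_stdSimplex ℝ W).inter_right ?_
  refine isClosed_biInter fun w _ => ?_
  exact isClosed_eq (continuous_apply w) continuous_const

lemma geo_compact {K : Set (Set W)} (hK : IsLowerSet K) : IsCompact (geo K) := by
  have : geo K = ⋃ σ ∈ K, fc σ := by
    ext x
    simp only [Set.mem_iUnion]
    constructor
    · intro hx
      exact ⟨_, hx.2, hx.1, fun w hw => by by_contra h; exact hw h⟩
    · rintro ⟨σ, hσ, hx⟩
      exact fc_sub hK hσ hx
  rw [this]
  exact (Set.toFinite K).isCompact_biUnion fun σ _ => fc_compact σ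

/-- The vertex as a point. -/
noncomputable def vert (w : W) : W → ℝ := Pi.single w 1

lemma vert_apply (w v : W) : vert w v = if v = w then 1 else 0 := by
  unfold vert
  by_cases h : v = w
  · subst h; simp
  · simp [h]

lemma vert_fc {σ : Set W} {w : W} (hw : w ∈ σ) : vert w ∈ fc σ := by
  refine ⟨single_mem_stdSimplex ℝ w, fun v hv => ?_⟩
  unfold vert
  rw [Pi.single_apply, if_neg]
  rintro rfl; exact hv hw

end geo

section shift
set_option linter.unusedSectionVars false
variable {A R : Type*} [Fintype A] [Fintype R] [AddCommGroup R]

/-- Shift of vertices. -/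
def sh (g : R) (w : A × R) : A × R := (w.1, w.2 + g)

/-- Shift of points. -/
def Sh (g : R) : (A × R → ℝ) →ₗ[ℝ] (A × R → ℝ) := LinearMap.funLeft ℝ ℝ (fun w => (w.1, w.2 - g))

lemma Sh_apply (g : R) (x : A × R → ℝ) (a : A) (i : R) : Sh g x (a, i) = x (a, i - g) := rfl

lemma Sh_zero (x : A × R → ℝ) : Sh 0 x = x := by
  funext ⟨a, i⟩; simp [Sh_apply]

lemma Sh_add (g h : R) (x : A × R → ℝ) : Sh (g + h) x = Sh g (Sh h x) := by
  funext ⟨a, i⟩; simp [Sh_apply, sub_sub]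

lemma Sh_vert (g : R) (w : A × R) : Sh g (vert w) = vert (sh g w) := by
  funext ⟨a, i⟩
  rw [Sh_apply, vert_apply, vert_apply]
  have : ((a, i - g) = w) = ((a, i) = sh g w) := by
    unfold sh
    rw [Prod.ext_iff, Prod.ext_iff]
    simp [sub_eq_iff_eq_add]
  by_cases h : (a, i - g) = w
  · rw [if_pos h, if_pos (this ▸ h)]
  · rw [if_neg h, if_neg (this ▸ h)]

variable {K : Set (Set (A × R))}

lemma Sh_geo (hinv : ∀ g, ∀ σ ∈ K, sh g '' σ ∈ K) (g : R) {x : A × R → ℝ} (hx : x ∈ geo K) :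
    Sh g x ∈ geo K := by
  refine ⟨⟨?_, ?_⟩, ?_⟩
  · rintro ⟨a, i⟩; exact hx.1.1 _
  · rw [← hx.1.2]
    refine Fintype.sum_equiv ((Equiv.refl A).prodCongr (Equiv.subRight g)) _ _ ?_
    rintro ⟨a, i⟩; rfl
  · convert hinv g _ hx.2
    ext ⟨a, i⟩
    constructor
    · intro h
      exact ⟨(a, i - g), h, by simp [sh]⟩
    · rintro ⟨⟨b, j⟩, h, e⟩
      simp only [sh, Prod.mk.injEq] at e
      obtain ⟨rfl, rfl⟩ := e
      have : x (b, j) ≠ 0 := h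
      change Sh g x (b, j + g) ≠ 0
      rwa [Sh_apply, add_sub_cancel_right]

lemma Sh_free (hfree : ∀ σ ∈ K, ∀ a i j, (a, i) ∈ σ → (a, j) ∈ σ → i = j) {g : R} {x : A × R → ℝ}
    (hx : x ∈ geo K) (h : Sh g x = x) : g = 0 := by
  have : ∃ w, x w ≠ 0 := by
    by_contra hc
    push Not at hc
    have := hx.1.2
    simp [hc] at this
  obtain ⟨⟨a, i⟩, hw⟩ := this
  have h2 : x (a, i - g) ≠ 0 := by rw [← Sh_apply g x a i, h]; exact hw
  have := hfree _ hx.2 a i (i - g) hw h2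
  simpa using this.symm

lemma exists_label {Λ : Type*} (hinv : ∀ g, ∀ σ ∈ K, sh g '' σ ∈ K)
    (hfree : ∀ σ ∈ K, ∀ a i j, (a, i) ∈ σ → (a, j) ∈ σ → i = j) [Nonempty Λ]
    (act : R → Λ → Λ) (hadd : ∀ g h l, act (g + h) l = act g (act h l))
    (P : Λ → (A × R → ℝ) → Prop) (hP : ∀ g l x, P l x → P (act g l) (Sh g x))
    (hex : ∀ x ∈ geo K, ∃ l, P l x) :
    ∃ lam : (A × R → ℝ) → Λ, (∀ x ∈ geo K, P (lam x) x) ∧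
      ∀ g, ∀ x ∈ geo K, lam (Sh g x) = act g (lam x) := by
  let S : Setoid (A × R → ℝ) :=
    { r := fun x y => ∃ g : R, Sh g x = y
      iseqv := ⟨fun x => ⟨0, Sh_zero x⟩, by
        rintro x _ ⟨g, rfl⟩
        exact ⟨-g, by rw [← Sh_add]; simp [Sh_zero]⟩, by
        rintro x _ _ ⟨g, rfl⟩ ⟨h, rfl⟩
        exact ⟨h + g, Sh_add _ _ _⟩⟩ }
  let rp : (A × R → ℝ) → (A × R → ℝ) := fun x => (Quotient.mk S x).out
  have hrp : ∀ x, ∃ g : R, Sh g (rp x) = x := fun x => Quotient.mk_out (s := S) x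
  choose g hg using hrp
  have hrp2 : ∀ h x, rp (Sh h x) = rp x := by
    intro h x
    have : Quotient.mk S (Sh h x) = Quotient.mk S x :=
      Quotient.sound (s := S) (S.symm ⟨h, rfl⟩)
    simp only [rp, this]
  have hgeo : ∀ x ∈ geo K, rp x ∈ geo K := by
    intro x hx
    have : rp x = Sh (-(g x)) x := by
      nth_rewrite 3 [← hg x]
      rw [← Sh_add]; simp [Sh_zero]
    rw [this]; exact Sh_geo hinv _ hx
  let l0 : (A × R → ℝ) → Λ := fun x => if h : ∃ l, P l x then h.choose else Classical.arbitrary Λ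
  have hl0 : ∀ x ∈ geo K, P (l0 x) x := by
    intro x hx
    simp only [l0, dif_pos (hex x hx)]
    exact (hex x hx).choose_spec
  refine ⟨fun x => act (g x) (l0 (rp x)), ?_, ?_⟩
  · intro x hx
    have := hP (g x) _ _ (hl0 _ (hgeo x hx))
    rwa [hg] at this
  · intro h x hx
    have e : g (Sh h x) = h + g x := by
      have h1 : Sh (g (Sh h x)) (rp x) = Sh h x := by
        rw [← hrp2 h x]; exact hg _
      have h2 : Sh (h + g x) (rp x) = Sh h x := by rw [Sh_add, hg]
      have h3 : Sh (-(h + g x) + g (Sh h x)) (rp x) = rp x := by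
        rw [Sh_add, h1, ← h2, ← Sh_add]; simp [Sh_zero]
      have h4 := Sh_free hfree (hgeo x hx) h3
      rw [neg_add_eq_zero] at h4
      exact h4.symm
    simp only [hrp2, e, hadd]

end shift

section mpsup
variable {F : Type*} [Field F] {V V' : Type*}

lemma mp_sup {K : Set (Set V)} {K' : Set (Set V')} {g : V → V'} (h : ∀ σ ∈ K, g '' σ ∈ K') {m : ℕ}
    {x : Ch F V} (hx : x ∈ sup F K m) : mp g x ∈ sup F K' m := by
  refine spt_map (P := fun l => l.length = m ∧ {v | v ∈ l} ∈ K) (mp g) _ ?_ hx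
  rintro l ⟨hl, hl2⟩
  rw [mp_sg]
  refine sg_mem ⟨by simpa using hl, ?_⟩
  convert h _ hl2
  ext v
  simp

lemma mp_congr_sup {K : Set (Set V)} {g g' : V → V'} (h : ∀ σ ∈ K, ∀ v ∈ σ, g v = g' v) {m : ℕ}
    {x : Ch F V} (hx : x ∈ sup F K m) : mp g x = mp g' x := by
  refine spt_eq (P := fun l => l.length = m ∧ {v | v ∈ l} ∈ K) (mp g) (mp g') ?_ hx
  rintro l ⟨hl, hl2⟩
  rw [mp_sg, mp_sg]
  congr 1
  exact List.map_congr_left (fun v hv => h _ hl2 v hv)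

end mpsup

section iter
variable {F : Type*} [Field F] {E : Type*} [NormedAddCommGroup E] [NormedSpace ℝ E]

lemma bd_Sd_iter (n : ℕ) (x : Ch F E) : (Sd F)^[n] (bd x) = bd ((Sd F)^[n] x) := by
  induction n with
  | zero => rfl
  | succ n ih => rw [Function.iterate_succ_apply', Function.iterate_succ_apply', bd_Sd, ih]

lemma mp_Sd_iter (g : E →ₗ[ℝ] E) (n : ℕ) (x : Ch F E) : (Sd F)^[n] (mp g x) = mp g ((Sd F)^[n] x) := by
  induction n with
  | zero => rfl
  | succ n ih => rw [Function.iterate_succ_apply', Function.iterate_succ_apply', mp_Sd, ih]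

lemma Sd_nil_iter (n : ℕ) : (Sd F)^[n] (sg ([] : List E)) = sg [] := by
  induction n with
  | zero => rfl
  | succ n ih => rw [Function.iterate_succ_apply', ih, Sd_sg]; rfl

end iter

section Psi
set_option linter.unusedSectionVars false
variable {A R : Type*} [Fintype A] [Fintype R] [AddCommGroup R] {K : Set (Set (A × R))}
variable {p : ℕ} [Fact p.Prime] {Φ : Type*} [Fintype Φ] [Nonempty Φ]

theorem exists_Psi (hK : IsLowerSet K) (hinv : ∀ g, ∀ σ ∈ K, sh g '' σ ∈ K)
    (hfree : ∀ σ ∈ K, ∀ a i j, (a, i) ∈ σ → (a, j) ∈ σ → i = j)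
    (act : R → Φ × ZMod p → Φ × ZMod p) (hadd : ∀ g h l, act (g + h) l = act g (act h l))
    (D : Φ × ZMod p → (A × R → ℝ) → ℝ) (hD : ∀ l, ContinuousOn (D l) (geo K))
    (hsum : ∀ φ x, ∑ c, D (φ, c) x = 0)
    (heq : ∀ g l x, D (act g l) (Sh g x) = D l x)
    (hno : ∀ x ∈ geo K, ∃ l, D l x ≠ 0) (M : ℕ) (hM : 1 ≤ M) :
    ∃ Ψ : Ch (ZMod p) (A × R) →ₗ[ZMod p] Ch (ZMod p) (Φ × ZMod p),
      Ψ (sg []) = sg [] ∧ (∀ x, Ψ (bd x) = bd (Ψ x)) ∧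
      (∀ m ≤ M, ∀ x ∈ sup (ZMod p) K m, Ψ x ∈ sup (ZMod p) (Lc Finset.univ) m) ∧
      (∀ m ≤ M, ∀ g, ∀ x ∈ sup (ZMod p) K m, Ψ (mp (sh g) x) = mp (act g) (Ψ x)) := by
  have hcomp := geo_compact hK
  -- a uniform positive lower bound
  have hpos : ∀ x ∈ geo K, 0 < Finset.univ.sup' Finset.univ_nonempty (fun l => D l x) := by
    intro x hx
    rw [Finset.lt_sup'_iff]
    by_contra hc
    push Not at hc
    obtain ⟨⟨φ, c⟩, hl⟩ := hno x hx
    have := (Finset.sum_eq_zero_iff_of_nonpos (s := Finset.univ) (f := fun c => D (φ, c) x)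
      (fun c _ => hc _ (Finset.mem_univ _))).1 (hsum φ x) c (Finset.mem_univ _)
    exact hl this
  have hcont : ContinuousOn (fun x => Finset.univ.sup' Finset.univ_nonempty (fun l => D l x)) (geo K) :=
    ContinuousOn.finset_sup'_apply _ (fun l _ => hD l)
  obtain ⟨η, hη, hηle⟩ := hcomp.exists_forall_le' hcont hpos
  obtain ⟨lam, hlam, hlame⟩ := exists_label hinv hfree act hadd (fun l x => η ≤ D l x)
    (fun g l x h => by rw [heq]; exact h) (fun x hx => by
      have := hηle x hx
      rw [Finset.le_sup'_iff] at this
      obtain ⟨l, -, h⟩ := this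
      exact ⟨l, h⟩)
  -- uniform continuity
  have hδ : ∃ δ > 0, ∀ l, ∀ x ∈ geo K, ∀ y ∈ geo K, dist x y < δ → dist (D l x) (D l y) < η := by
    have : ∀ l, ∃ δ > 0, ∀ x ∈ geo K, ∀ y ∈ geo K, dist x y < δ → dist (D l x) (D l y) < η := by
      intro l
      have := Metric.uniformContinuousOn_iff.1 (hcomp.uniformContinuousOn_of_continuous (hD l)) η hη
      exact this
    choose δ h1 h2 using this
    refine ⟨Finset.univ.inf' Finset.univ_nonempty δ, ?_, ?_⟩
    · rw [gt_iff_lt, Finset.lt_inf'_iff]; intro l _; exact h1 l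
    · intro l x hx y hy h
      exact h2 l x hx y hy (lt_of_lt_of_le h (Finset.inf'_le _ (Finset.mem_univ l)))
  obtain ⟨δ, hδ0, hδ⟩ := hδ
  obtain ⟨B, hB⟩ := Metric.isBounded_iff.1 (isCompact_stdSimplex ℝ (A × R)).isBounded
  have hM' : (1 : ℝ) ≤ M := by exact_mod_cast hM
  have hq0 : 0 ≤ 1 - (M : ℝ)⁻¹ := by rw [sub_nonneg]; exact inv_le_one_of_one_le₀ hM'
  have hq1 : 1 - (M : ℝ)⁻¹ < 1 := by
    have : 0 < (M : ℝ)⁻¹ := by positivity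
    linarith
  obtain ⟨n, hn⟩ : ∃ n, (1 - (M : ℝ)⁻¹) ^ n * |B| < δ := by
    have h1 : 0 < δ / (|B| + 1) := by positivity
    obtain ⟨n, hn⟩ := exists_pow_lt_of_lt_one h1 hq1
    refine ⟨n, ?_⟩
    rw [lt_div_iff₀ (by positivity)] at hn
    have : 0 ≤ (1 - (M : ℝ)⁻¹) ^ n := by positivity
    nlinarith
  -- the subdivided chains
  let Θ : Ch (ZMod p) (A × R) →ₗ[ZMod p] Ch (ZMod p) (A × R → ℝ) :=
    ((Sd (ZMod p)) ^ n : Module.End (ZMod p) _) ∘ₗ mp vert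
  have hΘ : ∀ m ≤ M, ∀ x ∈ sup (ZMod p) K m, Θ x ∈ sup (ZMod p) (Dm ((1 - (M : ℝ)⁻¹) ^ n * |B|) ∩ Cv (geo K)) m := by
    intro m hm x hx
    refine spt_map (P := fun l => l.length = m ∧ {v | v ∈ l} ∈ K) Θ _ ?_ hx
    rintro l ⟨hl, hlK⟩
    have h1 : (mp vert (sg l) : Ch (ZMod p) (A × R → ℝ)) ∈ sup (ZMod p) (Dm |B| ∩ Cv (fc {v | v ∈ l})) m := by
      rw [mp_sg]
      have hc : ∀ v ∈ l.map vert, v ∈ fc {v | v ∈ l} := by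
        intro v hv
        obtain ⟨w, hw, rfl⟩ := List.mem_map.1 hv
        exact vert_fc hw
      refine sg_mem ⟨by simpa using hl, ?_, hc⟩
      intro x hx y hy
      exact (hB (hc x hx).1 (hc y hy).1).trans (le_abs_self B)
    have h2 := Sd_iter hM (fc_convex _) (abs_nonneg B) m hm n _ h1
    change ((Sd (ZMod p)) ^ n : Module.End (ZMod p) _) (mp vert (sg l)) ∈ _
    rw [Module.End.pow_apply]
    refine sup_mono ?_ m h2
    exact Set.inter_subset_inter_right _ (fun s hs => hs.trans (fc_sub hK hlK))
  have hΘbd : ∀ x, Θ (bd x) = bd (Θ x) := by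
    intro x
    change ((Sd (ZMod p)) ^ n : Module.End (ZMod p) _) (mp vert (bd x)) =
      bd (((Sd (ZMod p)) ^ n : Module.End (ZMod p) _) (mp vert x))
    rw [mp_bd, Module.End.pow_apply, Module.End.pow_apply]
    exact bd_Sd_iter n _
  have hΘsh : ∀ g x, Θ (mp (sh g) x) = mp (Sh g) (Θ x) := by
    intro g x
    change ((Sd (ZMod p)) ^ n : Module.End (ZMod p) _) (mp vert (mp (sh g) x)) =
      mp (Sh g) (((Sd (ZMod p)) ^ n : Module.End (ZMod p) _) (mp vert x))
    have : (mp vert (mp (sh g) x) : Ch (ZMod p) (A × R → ℝ)) = mp (Sh g) (mp vert x) := by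
      rw [mp_mp, mp_mp]
      congr 1; congr 1; funext w; exact (Sh_vert g w).symm
    rw [this, Module.End.pow_apply, Module.End.pow_apply]
    exact mp_Sd_iter (E := A × R → ℝ) (Sh g) n _
  have hΘnil : Θ (sg []) = sg [] := by
    change ((Sd (ZMod p)) ^ n : Module.End (ZMod p) _) (mp vert (sg [])) = _
    rw [mp_sg, Module.End.pow_apply]
    exact Sd_nil_iter n
  clear_value Θ
  refine ⟨mp lam ∘ₗ Θ, ?_, ?_, ?_, ?_⟩
  · rw [LinearMap.comp_apply, hΘnil, mp_sg]; rfl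
  · intro x
    rw [LinearMap.comp_apply, LinearMap.comp_apply, hΘbd, mp_bd]
  · intro m hm x hx
    rw [LinearMap.comp_apply]
    refine mp_sup ?_ (hΘ m hm x hx)
    rintro l ⟨hl2, hl3⟩
    refine ⟨fun _ _ => Finset.mem_univ _, ?_⟩
    intro φ _ hall
    have hall : ∀ c, ∃ x ∈ l, lam x = (φ, c) := fun c => hall c
    obtain ⟨x0, hx0, -⟩ := hall 0
    have hpos : ∀ c, 0 < D (φ, c) x0 := by
      intro c
      obtain ⟨y, hy, hyc⟩ := hall c
      have h1 := hlam y (hl3 hy)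
      rw [hyc] at h1
      have h2 := hδ (φ, c) y (hl3 hy) x0 (hl3 hx0) (lt_of_le_of_lt (hl2 y hy x0 hx0) hn)
      rw [Real.dist_eq, abs_lt] at h2
      linarith [h2.1, h2.2]
    have := hsum φ x0
    have h3 : 0 < ∑ c, D (φ, c) x0 := Finset.sum_pos (fun c _ => hpos c) Finset.univ_nonempty
    linarith
  · intro m hm g x hx
    rw [LinearMap.comp_apply, LinearMap.comp_apply, hΘsh, mp_mp, mp_mp]
    refine mp_congr_sup ?_ (hΘ m hm x hx)
    rintro l ⟨-, hl3⟩ y hy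
    exact hlame g y (hl3 hy)

end Psi
end BCT

namespace BCT
section labels
set_option linter.unusedSectionVars false
variable {p : ℕ} [Fact p.Prime] {ν : ℕ} {J : Type*} [Fintype J]

/-- Index set of the label families. -/
abbrev Ph (p ν : ℕ) (J : Type*) := J × (Σ ℓ : Fin ν, ({k : Fin ν // k < ℓ} → ZMod p))

/-- The level of a family. -/
def plev (φ : Ph p ν J) : Fin ν := φ.2.1

/-- The group action on families. -/
def pact (g : Fin ν → ZMod p) (φ : Ph p ν J) : Ph p ν J := (φ.1, ⟨φ.2.1, fun k => φ.2.2 k + g k.1⟩)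

/-- The group action on labels. -/
def lact (g : Fin ν → ZMod p) (l : Ph p ν J × ZMod p) : Ph p ν J × ZMod p :=
  (pact g l.1, l.2 + g (plev l.1))

lemma pact_add (g h : Fin ν → ZMod p) (φ : Ph p ν J) : pact (g + h) φ = pact g (pact h φ) := by
  obtain ⟨j, ℓ, t⟩ := φ
  simp only [pact]
  congr 2
  funext k
  simp only [Pi.add_apply]
  ring

lemma pact_zero (φ : Ph p ν J) : pact 0 φ = φ := by
  obtain ⟨j, ℓ, t⟩ := φ
  simp [pact]

lemma pact_iter (g : Fin ν → ZMod p) (n : ℕ) (φ : Ph p ν J) : (pact g)^[n] φ = pact (n • g) φ := by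
  induction n with
  | zero => simp [pact_zero]
  | succ n ih => rw [Function.iterate_succ_apply', ih, ← pact_add, succ_nsmul']

lemma p_nsmul (g : Fin ν → ZMod p) : p • g = 0 := by
  funext i; simp

lemma lact_add (g h : Fin ν → ZMod p) (l : Ph p ν J × ZMod p) : lact (g + h) l = lact g (lact h l) := by
  simp only [lact, pact_add]
  congr 1
  have : plev (pact h l.1) = plev l.1 := rfl
  rw [this, Pi.add_apply]; ring

/-- The generator. -/
def gen (k : Fin ν) : Fin ν → ZMod p := fun j => if j = k then 1 else 0

lemma pact_Act : Act p (plev : Ph p ν J → Fin ν) (fun k => pact (gen k)) where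
  fix := by
    rintro k ⟨j, ℓ, t⟩ h
    have h : ℓ ≤ k := h
    simp only [pact]
    congr 2
    funext k'
    have : k'.1 ≠ k := fun e => absurd k'.2 (by rw [e]; exact not_lt.2 h)
    simp [gen, this]
  lev_eq := fun _ _ => rfl
  comm := fun k l φ => by rw [← pact_add, add_comm, pact_add]
  per := fun k φ => by rw [pact_iter, p_nsmul, pact_zero]

lemma tau_lact (k : Fin ν) : (tau plev (fun k => pact (gen k)) k : Ph p ν J × ZMod p → _) = lact (gen k) := by
  funext l
  rfl

lemma card_Ph : (p - 1) * Fintype.card (Ph p ν J) = (p ^ ν - 1) * Fintype.card J := by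
  have h1 : Fintype.card (Ph p ν J) = Fintype.card J * ∑ ℓ ∈ Finset.range ν, p ^ ℓ := by
    rw [Fintype.card_prod, Fintype.card_sigma, Finset.sum_range]
    congr 1
    refine Finset.sum_congr rfl fun ℓ _ => ?_
    rw [Fintype.card_fun, ZMod.card]
    congr 1
    rw [Fintype.card_subtype]
    have : (Finset.univ.filter fun x : Fin ν => x < ℓ) = Finset.Iio ℓ := by ext; simp
    rw [this]; simp
  have h2 : (p - 1) * ∑ ℓ ∈ Finset.range ν, p ^ ℓ = p ^ ν - 1 := by
    have h3 : 1 ≤ p := (Fact.out : p.Prime).one_le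
    have h4 : 1 ≤ p ^ ν := Nat.one_le_pow _ _ h3
    zify [h3, h4]
    rw [mul_comm]; exact geom_sum_mul _ _
  rw [h1, ← h2]; ring

variable {A : Type*} [Fintype A]

/-- The real-valued tests. -/
noncomputable def Dl (w : (Fin ν → ZMod p) → J → (A × (Fin ν → ZMod p) → ℝ) → ℝ) (l : Ph p ν J × ZMod p)
    (x : A × (Fin ν → ZMod p) → ℝ) : ℝ :=
  ∑ i : Fin ν → ZMod p, if (∀ k, i k.1 = l.1.2.2 k) then
    ((if i l.1.2.1 = l.2 then 1 else 0) - (p : ℝ)⁻¹) * w i l.1.1 x else 0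

lemma Dl_sum (w : (Fin ν → ZMod p) → J → (A × (Fin ν → ZMod p) → ℝ) → ℝ) (φ : Ph p ν J)
    (x : A × (Fin ν → ZMod p) → ℝ) : ∑ c, Dl w (φ, c) x = 0 := by
  unfold Dl
  rw [Finset.sum_comm]
  refine Finset.sum_eq_zero fun i _ => ?_
  simp only
  split_ifs with h
  · rw [← Finset.sum_mul, Finset.sum_sub_distrib]
    have hp : (p : ℝ) ≠ 0 := by exact_mod_cast (Fact.out : p.Prime).ne_zero
    simp [ZMod.card, hp]
  · simp

lemma Dl_eq (w : (Fin ν → ZMod p) → J → (A × (Fin ν → ZMod p) → ℝ) → ℝ)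
    (hw : ∀ g i j x, w (i + g) j (Sh g x) = w i j x) (g : Fin ν → ZMod p) (l : Ph p ν J × ZMod p)
    (x : A × (Fin ν → ZMod p) → ℝ) : Dl w (lact g l) (Sh g x) = Dl w l x := by
  unfold Dl
  symm
  refine Fintype.sum_equiv (Equiv.addRight g) _ _ ?_
  intro i
  simp only [Equiv.coe_addRight, hw, lact, pact, plev, Pi.add_apply, add_left_inj]

lemma cont_ite {T : Type*} [TopologicalSpace T] {X : Set T} {f : T → ℝ} (P : Prop) [Decidable P] (c : ℝ)
    (hf : ContinuousOn f X) : ContinuousOn (fun x => if P then c * f x else 0) X := by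
  by_cases h : P
  · simp only [if_pos h]; fun_prop
  · simp only [if_neg h]; fun_prop

lemma Dl_cont (w : (Fin ν → ZMod p) → J → (A × (Fin ν → ZMod p) → ℝ) → ℝ) (X : Set (A × (Fin ν → ZMod p) → ℝ))
    (hw : ∀ i j, ContinuousOn (w i j) X) (l : Ph p ν J × ZMod p) : ContinuousOn (Dl w l) X := by
  unfold Dl
  refine continuousOn_finsetSum _ fun i _ => ?_
  exact cont_ite _ _ (hw i l.1.1)

lemma Dl_zero (w : (Fin ν → ZMod p) → J → (A × (Fin ν → ZMod p) → ℝ) → ℝ)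
    (x : A × (Fin ν → ZMod p) → ℝ) (h : ∀ l, Dl w l x = 0) (i i' : Fin ν → ZMod p) (j : J) :
    w i j x = w i' j x := by
  have key : ∀ n ≤ ν, ∀ i i' : Fin ν → ZMod p,
      (∑ a : Fin ν → ZMod p, if (∀ k : Fin ν, (k : ℕ) < n → a k = i k) then w a j x else 0) =
      (∑ a : Fin ν → ZMod p, if (∀ k : Fin ν, (k : ℕ) < n → a k = i' k) then w a j x else 0) := by
    intro n
    induction n with
    | zero => intro _ i i'; simp
    | succ n ih =>
      intro hn
      have step : ∀ i : Fin ν → ZMod p,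
          (∑ a : Fin ν → ZMod p, if (∀ k : Fin ν, (k : ℕ) < n + 1 → a k = i k) then w a j x else 0) =
          (p : ℝ)⁻¹ * (∑ a : Fin ν → ZMod p, if (∀ k : Fin ν, (k : ℕ) < n → a k = i k) then w a j x else 0) := by
        intro i
        have h1 := h ((j, ⟨⟨n, hn⟩, fun k => i k.1⟩), i ⟨n, hn⟩)
        rw [Dl] at h1
        rw [← sub_eq_zero]
        refine Eq.trans ?_ h1
        rw [Finset.mul_sum, ← Finset.sum_sub_distrib]
        refine Finset.sum_congr rfl fun a _ => ?_
        have e1 : (∀ k : {k : Fin ν // k < ⟨n, hn⟩}, a k.1 = i k.1) ↔ ∀ k : Fin ν, (k : ℕ) < n → a k = i k :=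
          ⟨fun H k hk => H ⟨k, hk⟩, fun H k => H k.1 k.2⟩
        have e2 : (∀ k : Fin ν, (k : ℕ) < n + 1 → a k = i k) ↔
            (∀ k : Fin ν, (k : ℕ) < n → a k = i k) ∧ a ⟨n, hn⟩ = i ⟨n, hn⟩ := by
          constructor
          · intro H
            exact ⟨fun k hk => H k (by omega), H ⟨n, hn⟩ (Nat.lt_succ_self n)⟩
          · rintro ⟨H1, H2⟩ k hk
            by_cases hkn : (k : ℕ) < n
            · exact H1 k hkn
            · have : k = ⟨n, hn⟩ := Fin.ext (by simp; omega)
              rw [this]; exact H2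
        simp only [e1, e2]
        by_cases H1 : ∀ k : Fin ν, (k : ℕ) < n → a k = i k
        · by_cases H2 : a ⟨n, hn⟩ = i ⟨n, hn⟩
          · rw [if_pos ⟨H1, H2⟩, if_pos H1, if_pos H1, if_pos H2]; ring
          · rw [if_neg (fun H => H2 H.2), if_pos H1, if_pos H1, if_neg H2]; ring
        · rw [if_neg (fun H => H1 H.1), if_neg H1, if_neg H1]; ring
      intro i i'
      rw [step, step, ih (by omega) i i']
  have fin : ∀ i : Fin ν → ZMod p,
      (∑ a : Fin ν → ZMod p, if (∀ k : Fin ν, (k : ℕ) < ν → a k = i k) then w a j x else 0) = w i j x := by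
    intro i
    rw [Finset.sum_eq_single i]
    · simp
    · intro b _ hb
      rw [if_neg]
      intro H
      exact hb (funext fun k => H k k.2)
    · simp
  rw [← fin i, ← fin i', key ν le_rfl i i']

end labels

section main
set_option linter.unusedSectionVars false
variable {p : ℕ} [Fact p.Prime] {ν : ℕ} {J : Type*} [Fintype J] [Nonempty J] {A : Type*} [Fintype A]

lemma mp_pow {F V : Type*} [Field F] (g : V → V) (n : ℕ) (x : Ch F V) :
    ((mp g : Module.End F (Ch F V)) ^ n) x = mp (g^[n]) x := by
  induction n generalizing x with
  | zero => simp [mp_id]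
  | succ n ih => rw [pow_succ, Module.End.mul_apply, ih, mp_mp, Function.iterate_succ]

lemma sh_iter {R : Type*} [AddCommGroup R] (g : R) (n : ℕ) (w : A × R) : (sh g)^[n] w = sh (n • g) w := by
  induction n with
  | zero => simp [sh]
  | succ n ih => rw [Function.iterate_succ_apply', ih, sh, sh, sh, succ_nsmul]; simp [add_assoc]

theorem exists_point (hν : 1 ≤ ν) {K : Set (Set (A × (Fin ν → ZMod p)))} (hK : IsLowerSet K) (h0 : ∅ ∈ K)
    (hinv : ∀ g, ∀ σ ∈ K, sh g '' σ ∈ K)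
    (hfree : ∀ σ ∈ K, ∀ a i j, (a, i) ∈ σ → (a, j) ∈ σ → i = j)
    (hex : Exa (ZMod p) K ((p ^ ν - 1) * Fintype.card J + 1))
    (w : (Fin ν → ZMod p) → J → (A × (Fin ν → ZMod p) → ℝ) → ℝ)
    (hwc : ∀ i j, ContinuousOn (w i j) (geo K))
    (hw : ∀ g i j x, w (i + g) j (Sh g x) = w i j x) :
    ∃ x ∈ geo K, ∀ i i' j, w i j x = w i' j x := by
  by_contra hcon
  have hno : ∀ x ∈ geo K, ∃ l, Dl w l x ≠ 0 := by
    intro x hx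
    by_contra hc
    push Not at hc
    exact hcon ⟨x, hx, fun i i' j => Dl_zero w x hc i i' j⟩
  have hne : Nonempty (Ph p ν J) := ⟨(Classical.arbitrary J, ⟨⟨0, hν⟩, fun _ => 0⟩)⟩
  rw [← card_Ph] at hex
  set N := (p - 1) * Fintype.card (Ph p ν J) with hN
  obtain ⟨Ψ, hΨ0, hΨd, hΨm, hΨe⟩ := exists_Psi (p := p) hK hinv hfree lact lact_add (Dl w)
    (Dl_cont w _ hwc) (Dl_sum w) (Dl_eq w hw) hno (N + 1) (by omega)
  let T : Fin ν → Module.End (ZMod p) (Ch (ZMod p) (A × (Fin ν → ZMod p))) := fun k => mp (sh (gen k))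
  have hT : ∀ g, T g ^ p = 1 := by
    intro g
    refine LinearMap.ext fun x => ?_
    rw [mp_pow]
    have : (sh (gen g) : A × (Fin ν → ZMod p) → _)^[p] = id := by
      funext w
      rw [sh_iter, p_nsmul]; simp [sh]
    rw [this, mp_id]; rfl
  have hc : ∀ g g' x, T g (T g' x) = T g' (T g x) := by
    intro g g' x
    change mp _ (mp _ x) = mp _ (mp _ x)
    rw [mp_mp, mp_mp]
    congr 1; congr 1
    funext w
    simp only [sh, Function.comp, add_assoc, add_comm (gen g)]
  have hd : ∀ g x, bd (T g x) = T g (bd x) := fun g x => (mp_bd _ x).symm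
  have hWT : ∀ g, ∀ m, ∀ x ∈ sup (ZMod p) K m, T g x ∈ sup (ZMod p) K m :=
    fun g m x hx => mp_sup (fun σ hσ => hinv _ σ hσ) hx
  let u : List ℕ → Ch (ZMod p) (A × (Fin ν → ZMod p)) := fun I => if I.sum = 0 then sg [] else 0
  have hTnil : ∀ g, T g (sg []) = sg [] := fun g => mp_sg _ _
  obtain ⟨x, -, hx⟩ := extend p bd T hT hc hd (sup (ZMod p) K) (N + 1) 0 (List.finRange ν)
    (fun g _ => hWT g) hex u (fun _ => False) (fun _ => 0) (fun _ _ _ h => h) (N + 1) (by omega)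
    (fun I _ _ => by
      constructor
      · change (if I.sum = 0 then (sg [] : Ch (ZMod p) (A × (Fin ν → ZMod p))) else 0) ∈ _
        split_ifs with h
        · rw [h]
          refine sg_mem ⟨rfl, ?_⟩
          convert h0
          ext; simp
        · exact Submodule.zero_mem _
      · have h1 : bb p T (List.finRange ν) u I = 0 := bb_fix p T _ _ (fun g _ => hTnil g) I
        rw [h1, add_zero]
        change bd (if I.sum = 0 then (sg [] : Ch (ZMod p) (A × (Fin ν → ZMod p))) else 0) = 0
        split_ifs <;> simp)
    (fun I h => h.elim)
  refine no_system (p := p) (pact_Act (J := J) (p := p)) (List.finRange ν) (List.pairwise_lt_finRange ν)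
    (fun φ => List.mem_finRange _) (fun I => Ψ (x I)) ?_
  intro I hI hIs
  obtain ⟨h1, h2⟩ := hx I hI hIs
  refine ⟨hΨm _ (by omega) _ h1, ?_⟩
  rw [← hΨd, h2, map_add]
  congr 1
  · change Ψ (if I.sum = 0 then (sg [] : Ch (ZMod p) (A × (Fin ν → ZMod p))) else 0) = _
    rw [uu]
    split_ifs
    · exact hΨ0
    · simp
  · refine bb_map p T _ Ψ _ x I ?_
    intro I' hI' g _ i
    have hs := hI'.2
    have h3 := (hx I' (by rw [hI'.length, hI]) (by omega)).1
    refine eps_map_on p (T g) _ Ψ (sup (ZMod p) K (I'.sum + 0 + 1)) (hWT g _) ?_ i _ h3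
    intro y hy
    rw [Tm, tau_lact]
    exact hΨe _ (by omega) (gen g) y hy

end main
end BCT

namespace BCT
section homog
set_option linter.unusedSectionVars false
variable {A : Type*} [Fintype A]

/-- Normalized points. -/
lemma norm_mem {y : A → ℝ} (hy : ∀ a, 0 ≤ y a) (hs : ∑ a, y a ≠ 0) :
    (∑ a, y a)⁻¹ • y ∈ stdSimplex ℝ A := by
  have hpos : 0 ≤ ∑ a, y a := Finset.sum_nonneg fun a _ => hy a
  refine ⟨fun a => ?_, ?_⟩
  · simp only [Pi.smul_apply, smul_eq_mul]
    exact mul_nonneg (inv_nonneg.2 hpos) (hy a)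
  · simp only [Pi.smul_apply, smul_eq_mul]
    rw [← Finset.mul_sum, inv_mul_cancel₀ hs]

lemma hom_cont {f : (A → ℝ) → ℝ} (hf : ContinuousOn f (stdSimplex ℝ A)) :
    ContinuousOn (fun y : A → ℝ => (∑ a, y a) * f ((∑ a, y a)⁻¹ • y)) {y | ∀ a, 0 ≤ y a} := by
  have hS : Continuous (fun y : A → ℝ => ∑ a, y a) := by fun_prop
  obtain ⟨B, hB⟩ := ((isCompact_stdSimplex ℝ A).image_of_continuousOn hf).isBounded.exists_norm_le
  intro y hy
  by_cases h0 : ∑ a, y a = 0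
  · have hb : ∀ z ∈ {y : A → ℝ | ∀ a, 0 ≤ y a}, ‖(∑ a, z a) * f ((∑ a, z a)⁻¹ • z)‖ ≤ |∑ a, z a| * |B| := by
      intro z hz
      rw [norm_mul, Real.norm_eq_abs]
      by_cases hz0 : ∑ a, z a = 0
      · rw [hz0]; simp
      · refine mul_le_mul_of_nonneg_left ?_ (abs_nonneg _)
        exact (hB _ ⟨_, norm_mem hz hz0, rfl⟩).trans (le_abs_self B)
    rw [ContinuousWithinAt, h0, zero_mul]
    refine squeeze_zero_norm' (a := fun z : A → ℝ => |∑ a, z a| * |B|) ?_ ?_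
    · filter_upwards [self_mem_nhdsWithin] with z hz using hb z hz
    · have : Continuous (fun z : A → ℝ => |∑ a, z a| * |B|) := by fun_prop
      have h := (this.tendsto y).mono_left (nhdsWithin_le_nhds (s := {y : A → ℝ | ∀ a, 0 ≤ y a}))
      rw [h0] at h
      simpa using h
  · have ht : {z : A → ℝ | ∑ a, z a ≠ 0} ∈ nhds y := by
      exact (isOpen_ne.preimage hS).mem_nhds h0
    rw [← continuousWithinAt_inter ht]
    refine ContinuousWithinAt.mul hS.continuousWithinAt ?_
    have h1 : ContinuousWithinAt (fun z : A → ℝ => (∑ a, z a)⁻¹ • z)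
        ({y | ∀ a, 0 ≤ y a} ∩ {z : A → ℝ | ∑ a, z a ≠ 0}) y :=
      (hS.continuousAt.inv₀ h0).continuousWithinAt.smul continuousWithinAt_id
    exact ContinuousWithinAt.comp (t := stdSimplex ℝ A) (hf _ (norm_mem hy h0)) h1
      (fun z hz => norm_mem hz.1 hz.2)

end homog

section final
set_option linter.unusedSectionVars false

lemma exists_equiv {R : Type*} [Fintype R] {r s : ℕ} (hr : Fintype.card R = r) (S : Finset R) (hS : S.card ≤ s) :
    ∃ e : R ≃ Fin r, ∀ i ∈ S, (e i : ℕ) < s := by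
  have hSr : S.card ≤ r := by rw [← hr]; exact Finset.card_le_univ S
  by_cases hr0 : r = 0
  · subst hr0
    refine ⟨Fintype.equivFinOfCardEq hr, fun i _ => ?_⟩
    exact absurd (Fintype.equivFinOfCardEq hr i).2 (by omega)
  let z : Fin r := ⟨0, by omega⟩
  let f : R → Fin r := fun i => if h : i ∈ S then Fin.castLE hSr (S.equivFin ⟨i, h⟩) else z
  have hinj : Set.InjOn f S := by
    intro i hi j hj hij
    have hi : i ∈ S := hi
    have hj : j ∈ S := hj
    simp only [f, dif_pos hi, dif_pos hj] at hij
    have h2 := S.equivFin.injective (Fin.castLE_injective hSr hij)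
    exact congrArg Subtype.val h2
  obtain ⟨g, hg⟩ := Finset.exists_equiv_extend_of_card_eq (α := R) (β := Fin r) (t := Finset.univ)
    (by rw [hr]; simp) (s := S) (f := f) (Finset.subset_univ _) hinj
  refine ⟨g.trans (Equiv.subtypeUnivEquiv Finset.mem_univ), fun i hi => ?_⟩
  have h1 : (g.trans (Equiv.subtypeUnivEquiv Finset.mem_univ)) i = f i := hg i hi
  rw [h1]
  simp only [f, dif_pos hi, Fin.val_castLE]
  exact lt_of_lt_of_le (Fin.is_lt _) hS

variable {p : ℕ} [Fact p.Prime] {ν : ℕ} {m k : ℕ}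

/-- The configuration complex. -/
abbrev KK (p ν : ℕ) {m k : ℕ} [NeZero p] (color : Fin m → Fin (k + 1)) (s : ℕ) :
    Set (Set (Fin m × (Fin ν → ZMod p))) :=
  KC (fun w : Fin m × (Fin ν → ZMod p) => (color w.1, w.2)) (fun w => w.1) (fun e => e.1) (fun e => e.2)
    Finset.univ Finset.univ s Finset.univ

lemma KK_empty (color : Fin m → Fin (k + 1)) (s : ℕ) : ∅ ∈ KK p ν color s := by
  refine ⟨by simp, by simp, by simp, ?_⟩
  rw [Finset.card_eq_zero.2]
  · omega
  · refine Finset.eq_empty_of_forall_notMem fun i hi => ?_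
    have h := ((@Finset.mem_filter _ _ (_) _ _).1 hi).2
    obtain ⟨x, hx, -⟩ := h (0, i) (Finset.mem_univ _) rfl
    exact hx

lemma KK_inv (color : Fin m → Fin (k + 1)) (s : ℕ) (g : Fin ν → ZMod p) :
    ∀ σ ∈ KK p ν color s, sh g '' σ ∈ KK p ν color s := by
  rintro σ ⟨h1, h2, h3, h4⟩
  refine ⟨by simp, ?_, ?_, le_trans ?_ h4⟩
  · rintro _ ⟨x, hx, rfl⟩ _ ⟨y, hy, rfl⟩ h
    simp only [sh, Prod.mk.injEq, add_left_inj] at h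
    rw [h2 x hx y hy (Prod.ext h.1 h.2)]
  · rintro _ ⟨x, hx, rfl⟩ _ ⟨y, hy, rfl⟩ h h'
    rw [h3 x hx y hy h h']
  · refine Finset.card_le_card_of_injOn (fun i => i - g) ?_ (fun a _ b _ h => by simpa using h)
    intro i hi
    have hi := (@Finset.mem_filter _ _ (_) _ _).1 hi
    refine (@Finset.mem_filter _ _ (_) _ _).2 ⟨Finset.mem_univ _, ?_⟩
    rintro ⟨c, j⟩ _ hj
    simp only at hj
    subst hj
    obtain ⟨_, ⟨x, hx, rfl⟩, hxe⟩ := hi.2 (c, i) (Finset.mem_univ _) rfl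
    refine ⟨x, hx, ?_⟩
    simp only [sh, Prod.mk.injEq] at hxe
    simp [← hxe.2, hxe.1]

lemma KK_exa (color : Fin m → Fin (k + 1)) (s : ℕ) (hs : s ≤ p ^ ν)
    (hcol : ∀ c, (Finset.univ.filter (fun v => color v = c)).card = 2 * p ^ ν - 1) :
    Exa (ZMod p) (KK p ν color s) ((k + 1) * p ^ ν + s - p ^ ν) := by
  have hcard : Fintype.card (Fin ν → ZMod p) = p ^ ν := by
    rw [Fintype.card_fun, ZMod.card, Fintype.card_fin]
  have hr1 : 1 ≤ p ^ ν := Nat.one_le_pow _ _ (Fact.out : p.Prime).pos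
  have := KC_exa (F := ZMod p) (fun w : Fin m × (Fin ν → ZMod p) => (color w.1, w.2)) (fun w => w.1)
    (fun e => e.1) (fun e => e.2) (fun x y h h' => Prod.ext h' (Prod.ext_iff.1 h).2)
    ((k + 1) * p ^ ν) Finset.univ Finset.univ s Finset.univ
    (by rw [Finset.card_univ, Fintype.card_prod, hcard, Fintype.card_fin])
    (by rw [Finset.card_univ, hcard]; exact hs) ?_
  · rwa [Finset.card_univ, hcard] at this
  · rintro ⟨c, i⟩ _
    unfold HH
    have h1 : (Finset.univ.filter (fun e' : Fin (k + 1) × (Fin ν → ZMod p) => e'.1 = c)).card = p ^ ν := by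
      have : (Finset.univ.filter (fun e' : Fin (k + 1) × (Fin ν → ZMod p) => e'.1 = c)) =
          ({c} : Finset (Fin (k + 1))) ×ˢ Finset.univ := by
        ext ⟨a, b⟩; rw [Finset.mem_product]; simp
      rw [this, Finset.card_product, Finset.card_singleton, Finset.card_univ, hcard, one_mul]
    have h2 : (Finset.univ.filter (fun w : Fin m × (Fin ν → ZMod p) => (color w.1, w.2) = (c, i))).card =
        2 * p ^ ν - 1 := by
      rw [← hcol c]
      have : (Finset.univ.filter (fun w : Fin m × (Fin ν → ZMod p) => (color w.1, w.2) = (c, i))) =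
          (Finset.univ.filter (fun v => color v = c)) ×ˢ ({i} : Finset (Fin ν → ZMod p)) := by
        ext ⟨a, b⟩; rw [Finset.mem_product]; simp
      rw [this, Finset.card_product, Finset.card_singleton, mul_one]
    refine le_trans (le_of_eq ?_) (le_trans (show 2 * p ^ ν ≤ (2 * p ^ ν - 1) + 1 by omega) (le_of_eq ?_))
    · convert congrArg (2 * ·) h1
    · convert congrArg (· + 1) h2.symm

/-- The test functions. -/
noncomputable def wt {d : ℕ} (f : (Fin m → ℝ) → EuclideanSpace ℝ (Fin d)) (i : Fin ν → ZMod p) :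
    Option (Fin d) → (Fin m × (Fin ν → ZMod p) → ℝ) → ℝ
  | none => fun x => ∑ v, x (v, i)
  | some b => fun x => (∑ v, x (v, i)) * f ((∑ v, x (v, i))⁻¹ • fun v => x (v, i)) b

lemma wt_cont {d : ℕ} (f : (Fin m → ℝ) → EuclideanSpace ℝ (Fin d)) (hf : ContinuousOn f (stdSimplex ℝ (Fin m)))
    (X : Set (Fin m × (Fin ν → ZMod p) → ℝ)) (hX : ∀ x ∈ X, ∀ w, 0 ≤ x w) (i : Fin ν → ZMod p)
    (j : Option (Fin d)) : ContinuousOn (wt f i j) X := by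
  cases j with
  | none =>
    unfold wt
    fun_prop
  | some b =>
    have h1 : ContinuousOn (fun y => f y b) (stdSimplex ℝ (Fin m)) := by fun_prop
    have h2 : ContinuousOn (fun x : Fin m × (Fin ν → ZMod p) → ℝ => (fun v => x (v, i))) X := by fun_prop
    exact (hom_cont h1).comp h2 (fun x hx v => hX x hx (v, i))

lemma wt_eq {d : ℕ} (f : (Fin m → ℝ) → EuclideanSpace ℝ (Fin d)) (g i : Fin ν → ZMod p) (j : Option (Fin d))
    (x : Fin m × (Fin ν → ZMod p) → ℝ) : wt f (i + g) j (Sh g x) = wt f i j x := by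
  cases j <;> simp [wt, Sh_apply]

theorem main_aux {d s : ℕ} (hν : 1 ≤ ν) (color : Fin m → Fin (k + 1)) (hs : s ≤ p ^ ν)
    (hks : p ^ ν * k + s = (p ^ ν - 1) * (d + 1) + 1)
    (hcol : ∀ c, (Finset.univ.filter (fun v => color v = c)).card = 2 * p ^ ν - 1)
    (f : (Fin m → ℝ) → EuclideanSpace ℝ (Fin d)) (hf : ContinuousOn f (stdSimplex ℝ (Fin m))) :
    ∃ Δ : Fin (p ^ ν) → Finset (Fin m),
      (∀ i j, i ≠ j → Disjoint (Δ i) (Δ j)) ∧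
      (∀ i, ∀ v ∈ Δ i, ∀ v' ∈ Δ i, color v = color v' → v = v') ∧
      (∀ i : Fin (p ^ ν), (Δ i).card ≤ k + 1) ∧
      (∀ i : Fin (p ^ ν), s ≤ (i : ℕ) → (Δ i).card ≤ k) ∧
      (∃ y : EuclideanSpace ℝ (Fin d), ∀ i, ∃ z ∈ stdSimplex ℝ (Fin m), (∀ v, v ∉ Δ i → z v = 0) ∧ f z = y) := by
  have hcard : Fintype.card (Fin ν → ZMod p) = p ^ ν := by
    rw [Fintype.card_fun, ZMod.card, Fintype.card_fin]
  have hr1 : 1 ≤ p ^ ν := Nat.one_le_pow _ _ (Fact.out : p.Prime).pos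
  have hex := KK_exa (p := p) (ν := ν) color s hs hcol
  have hfree : ∀ σ ∈ KK p ν color s, ∀ a i j, (a, i) ∈ σ → (a, j) ∈ σ → i = j := by
    intro σ hσ a i j hi hj
    exact (Prod.ext_iff.1 (hσ.2.2.1 (a, i) hi (a, j) hj rfl rfl)).2
  obtain ⟨x, hx, hxw⟩ := exists_point (p := p) (J := Option (Fin d)) hν (K := KK p ν color s)
    (KC_lower _ _ _ _ _ _ _ _) (KK_empty color s) (KK_inv color s) hfree
    (by
      rw [Fintype.card_option, Fintype.card_fin, ← hks]
      convert hex using 1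
      have : (k + 1) * p ^ ν = p ^ ν * k + p ^ ν := by ring
      omega)
    (wt f) (wt_cont f hf _ (fun x hx => hx.1.1)) (wt_eq f)
  set σ := {w | x w ≠ 0} with hσ
  obtain ⟨-, c2, c3, c4⟩ := hx.2
  let Δ0 : (Fin ν → ZMod p) → Finset (Fin m) := fun i => Finset.univ.filter (fun v => x (v, i) ≠ 0)
  have hΔ0 : ∀ i v, v ∈ Δ0 i ↔ (v, i) ∈ σ := fun i v => by simp [Δ0, hσ]
  have hrain : ∀ i, ∀ v ∈ Δ0 i, ∀ v' ∈ Δ0 i, color v = color v' → v = v' := by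
    intro i v hv v' hv' h
    rw [hΔ0] at hv hv'
    exact (Prod.ext_iff.1 (c2 (v, i) hv (v', i) hv' (Prod.ext h rfl))).1
  obtain ⟨e, he⟩ := exists_equiv hcard _ c4
  have himg : ∀ i, (Δ0 i).card = ((Δ0 i).image color).card := fun i =>
    (Finset.card_image_of_injOn (fun v hv v' hv' h => hrain i v hv v' hv' h)).symm
  let S : ℝ := ∑ v, x (v, 0)
  have hS : ∀ i, ∑ v, x (v, i) = S := fun i => hxw i 0 none
  have hS0 : S ≠ 0 := by
    intro h0
    have h1 := hx.1.2
    rw [Fintype.sum_prod_type_right] at h1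
    simp [hS, h0] at h1
  refine ⟨fun i => Δ0 (e.symm i), ?_, fun i => hrain _, ?_, ?_, f (S⁻¹ • fun v => x (v, 0)), ?_⟩
  · intro i j hij
    rw [Finset.disjoint_left]
    intro v hv hv'
    rw [hΔ0] at hv hv'
    exact hij (e.symm.injective (hfree σ hx.2 v _ _ hv hv'))
  · intro i
    rw [himg]
    exact (Finset.card_le_univ _).trans (by simp)
  · intro i hi
    rw [himg]
    by_contra hc
    have hfull : (Δ0 (e.symm i)).image color = Finset.univ := by
      rw [← Finset.card_eq_iff_eq_univ, Fintype.card_fin]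
      refine le_antisymm ((Finset.card_le_univ _).trans (by simp)) (by omega)
    have := he (e.symm i) ((@Finset.mem_filter _ _ (_) _ _).2 ⟨Finset.mem_univ _, ?_⟩)
    · simp at this; omega
    · rintro ⟨c, j⟩ _ hj
      simp only at hj
      subst hj
      have hc : c ∈ (Δ0 (e.symm i)).image color := by rw [hfull]; exact Finset.mem_univ _
      obtain ⟨v, hv, rfl⟩ := Finset.mem_image.1 hc
      exact ⟨(v, e.symm i), (hΔ0 _ _).1 hv, rfl⟩
  · intro i
    refine ⟨S⁻¹ • fun v => x (v, e.symm i), ?_, ?_, ?_⟩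
    · have := norm_mem (y := fun v => x (v, e.symm i)) (fun v => hx.1.1 _) (by rw [hS]; exact hS0)
      rwa [hS] at this
    · intro v hv
      rw [hΔ0] at hv
      have : x (v, e.symm i) = 0 := by by_contra h; exact hv h
      simp [this]
    · ext b
      have h := hxw (e.symm i) 0 (some b)
      simp only [wt, hS] at h
      exact mul_left_cancel₀ hS0 h

end final
end BCT

/-- **Balanced colored Tverberg theorem** (Theorem 1.7). Let `r = p^ν` be a prime
power, `d ≥ 1`, `k = ⌈(r-1)d/r⌉`, `s = (r-1)d - r(k-1)`, `m = (2r-1)(k+1)`, and let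
`[m] = C₁ ⊎ … ⊎ C_{k+1}` be a coloring with `|Cᵢ| = 2r-1`. Then for every continuous
map `f` from the `(m-1)`-simplex to `ℝ^d` there are `r` pairwise disjoint rainbow
faces `Δ₁, …, Δ_r` with `f(Δ₁) ∩ … ∩ f(Δ_r) ≠ ∅`, such that `|Δᵢ| ≤ k+1` for `i ≤ s`
and `|Δᵢ| ≤ k` for `i > s`. -/
theorem balanced_colored_tverberg (p ν r d k s m : ℕ)
    (hp : p.Prime) (hν : 1 ≤ ν) (hr : r = p ^ ν) (hd : 1 ≤ d)
    (hk : (k : ℤ) = ⌈((r : ℚ) - 1) * d / r⌉)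
    (hs : (s : ℤ) = ((r : ℤ) - 1) * d - r * ((k : ℤ) - 1))
    (hm : m = (2 * r - 1) * (k + 1))
    (C : Fin (k + 1) → Finset (Fin m))
    (hCpart : ∀ v : Fin m, ∃! i, v ∈ C i)
    (hCcard : ∀ i, (C i).card = 2 * r - 1)
    (f : (Fin m → ℝ) → EuclideanSpace ℝ (Fin d))
    (hf : ContinuousOn f (stdSimplex ℝ (Fin m))) :
    ∃ Δ : Fin r → Finset (Fin m),
      (∀ i j, i ≠ j → Disjoint (Δ i) (Δ j)) ∧
      -- each `Δᵢ` is a rainbow face: at most one vertex of each color class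
      (∀ i, ∀ c, ((Δ i) ∩ C c).card ≤ 1) ∧
      -- the balanced cardinality constraints
      (∀ i : Fin r, (i : ℕ) < s → (Δ i).card ≤ k + 1) ∧
      (∀ i : Fin r, s ≤ (i : ℕ) → (Δ i).card ≤ k) ∧
      -- the images of the corresponding geometric faces have a common point
      (∃ y : EuclideanSpace ℝ (Fin d), ∀ i, y ∈ f '' simplexFace m (Δ i)) := by
  subst hr
  have : Fact p.Prime := ⟨hp⟩
  have hr1 : 1 ≤ p ^ ν := Nat.one_le_pow _ _ hp.pos
  choose color hcolor hcu using hCpart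
  have hC : ∀ v c, v ∈ C c ↔ color v = c := by
    intro v c
    constructor
    · intro h
      exact (hcu v c h).symm
    · rintro rfl
      exact hcolor v
  have hcol : ∀ c, (Finset.univ.filter (fun v => color v = c)).card = 2 * p ^ ν - 1 := by
    intro c
    rw [← hCcard c]
    congr 1
    ext v
    simp [hC]
  have hsr : s ≤ p ^ ν := by
    have h1 : (((p ^ ν : ℕ) : ℚ) - 1) * d / ((p ^ ν : ℕ) : ℚ) ≤ ((k : ℤ) : ℚ) := by
      rw [hk]
      exact Int.le_ceil _
    have h0 : (0 : ℚ) < ((p ^ ν : ℕ) : ℚ) := by exact_mod_cast hr1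
    rw [div_le_iff₀ h0] at h1
    have h2 : (((p ^ ν : ℕ) : ℤ) - 1) * d ≤ (k : ℤ) * ((p ^ ν : ℕ) : ℤ) := by exact_mod_cast h1
    have h3 : (s : ℤ) ≤ ((p ^ ν : ℕ) : ℤ) := by
      rw [hs]
      linarith
    exact_mod_cast h3
  have hks : p ^ ν * k + s = (p ^ ν - 1) * (d + 1) + 1 := by
    obtain ⟨q, hq⟩ : ∃ q, p ^ ν = q + 1 := ⟨p ^ ν - 1, by omega⟩
    rw [hq] at hs ⊢
    rw [Nat.add_sub_cancel]
    zify
    rw [hs]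
    push_cast
    ring
  obtain ⟨Δ, h1, h2, h3, h4, y, h5⟩ := BCT.main_aux hν color hsr hks hcol f hf
  refine ⟨Δ, h1, ?_, fun i _ => h3 i, h4, y, ?_⟩
  · intro i c
    rw [Finset.card_le_one]
    intro a ha b hb
    rw [Finset.mem_inter, hC] at ha hb
    exact h2 i a ha.1 b hb.1 (ha.2.trans hb.2.symm)
  · intro i
    obtain ⟨z, hz, h0, hfz⟩ := h5 i
    exact ⟨z, ⟨hz, h0⟩, hfz⟩
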